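/- Let d ≥ 2, 1 ≤ k ≤ d, 2 ≤ r̃ ≤ r < ∞, 2 < q ≤ ∞ with 2/q ≥ (d−k)(1/2 − 1/r) + k(1/2 − 1/r̃). Then for every f ∈ H^{1/q}(𝕋^d), ‖e^{−itΔ} f‖_{L^q_t(𝕋; L^r_x(𝕋^{d−k}; L^{r̃}_y(𝕋^k)))} ≤ C ‖f‖_{H^{1/q}(𝕋^d)}. -/

import Mathlib

open MeasureTheory Complex Finset
open scoped ENNReal Real ComplexConjugate

noncomputable section

/-- Mixed-norm building block: the `L^p` "norm" (`p ∈ [1,∞]`) of an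
`ℝ≥0∞`-valued function, with the convention `essSup` for `p = ∞`. -/
def eNorm {α : Type*} [MeasurableSpace α] (p : ℝ≥0∞) (μ : Measure α) (g : α → ℝ≥0∞) : ℝ≥0∞ :=
  if p = ∞ then essSup g μ else (∫⁻ a, g a ^ p.toReal ∂μ) ^ (1 / p.toReal)

/-- The `m`-dimensional torus `𝕋^m = (ℝ/ℤ)^m`. -/
abbrev Torus (m : ℕ) := Fin m → AddCircle (1 : ℝ)

/-- The character `z ↦ e^{2πi z·ξ}` on `𝕋^m`. -/
def eChar {m : ℕ} (ξ : Fin m → ℤ) (z : Torus m) : ℂ := ∏ i, fourier (ξ i) (z i)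

/-- Fourier coefficient of a function on the product torus `𝕋^m × 𝕋^k`. -/
def fcoef {m k : ℕ} (f : Torus m × Torus k → ℂ) (ξ : (Fin m → ℤ) × (Fin k → ℤ)) : ℂ :=
  ∫ z : Torus m × Torus k, f z * conj (eChar ξ.1 z.1 * eChar ξ.2 z.2)

/-- The frequency box `ℤ^m ∩ [-N,N]^m`. -/
def box (m N : ℕ) : Finset (Fin m → ℤ) :=
  Finset.Icc (fun _ => -(N : ℤ)) (fun _ => (N : ℤ))

/-- The mixed norm `‖f‖_{L^r_x L^s_y}` on `𝕋^m × 𝕋^k`, valued in `ℝ≥0∞`. -/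
def mixedNorm {m k : ℕ} (r s : ℝ≥0∞) (f : Torus m × Torus k → ℂ) : ℝ≥0∞ :=
  eNorm r volume (fun x => eNorm s volume (fun y => (‖f (x, y)‖₊ : ℝ≥0∞)))

/-- The frequency-truncated Schrödinger propagator `e^{-itΔ}P_{≤N} f` on `𝕋^m × 𝕋^k`,
given on the Fourier side by multiplication with `e^{2πit|ξ|²} 𝟙_{[-N,N]^d}(ξ)`. -/
def prp {m k : ℕ} (N : ℕ) (t : ℝ) (f : Torus m × Torus k → ℂ)
    (z : Torus m × Torus k) : ℂ :=
  ∑ ξ₁ ∈ box m N, ∑ ξ₂ ∈ box k N,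
    fcoef f (ξ₁, ξ₂) *
      Complex.exp (2 * Real.pi * I * t * ((∑ i, (ξ₁ i : ℝ) ^ 2) + ∑ i, (ξ₂ i : ℝ) ^ 2)) *
      (eChar ξ₁ z.1 * eChar ξ₂ z.2)

/-- The full (untruncated) Schrödinger evolution `e^{-itΔ}f` on `𝕋^m × 𝕋^k`,
with time variable on the torus `𝕋` (the phase `e^{2πit|ξ|²}` is well defined on
`𝕋` since `|ξ|² ∈ ℤ`). -/
def evol {m k : ℕ} (t : AddCircle (1 : ℝ)) (f : Torus m × Torus k → ℂ)
    (z : Torus m × Torus k) : ℂ :=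
  ∑' ξ : (Fin m → ℤ) × (Fin k → ℤ),
    fcoef f ξ * fourier ((∑ i, (ξ.1 i) ^ 2) + ∑ i, (ξ.2 i) ^ 2) t *
      (eChar ξ.1 z.1 * eChar ξ.2 z.2)

/-- The Sobolev norm `‖f‖_{H^s(𝕋^d)} = (∑_ξ (1+|ξ|²)^s |f̂(ξ)|²)^{1/2}`. -/
def sobolevNorm {m k : ℕ} (s : ℝ) (f : Torus m × Torus k → ℂ) : ℝ≥0∞ :=
  (∑' ξ : (Fin m → ℤ) × (Fin k → ℤ),
      ENNReal.ofReal
        ((1 + ((∑ i, (ξ.1 i : ℝ) ^ 2) + ∑ i, (ξ.2 i : ℝ) ^ 2)) ^ s *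
          ‖fcoef f ξ‖ ^ 2)) ^ (1 / 2 : ℝ)

/-!
Let `σ = m (1/2 - 1/r) + k (1/2 - 1/r̃)`. The case `σ = 0` is Plancherel's theorem. If `σ > 0`, then
`q ≤ 2 / σ`, and since the time period has measure one it suffices to treat `q = 2 / σ`, with
`σ / 2` derivatives. The functional equation of the theta function gives the Schrödinger kernel with
a Gaussian cutoff at frequency `2 ^ n` the dispersive bound `|τ| ^ (-m / 2)` on `𝕋 ^ m`, for times
`|τ| ≤ 2 ^ (-n)`. Interpolation with `L²` on the mixed spaces of `𝕋 ^ m × 𝕋 ^ k` turns this into the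
decay rate `|τ| ^ (-σ)`, and the Hardy–Littlewood–Sobolev inequality on intervals of length
`2 ^ (-n)` bounds the energy of the space-time Fourier coefficients of `F` at frequencies `≲ 2 ^ n`
by `2 ^ (n σ) ‖F‖²`, in the norm dual to `L^q_t L^r_x L^r̃_y`; the loss comes from the number of
intervals.

To sum over the dyadic scales without a logarithm, and without a Littlewood–Paley inequality in the
mixed norm, the bound is used at the exponents of the rates `(1 ± θ) σ`: after weighting by
`2 ^ (-n σ)` they give geometrically growing, respectively decaying, factors `2 ^ (± n θ σ)`.
Splitting `F` at a level depending on `n`, as in real interpolation, makes both sums converge; all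
the exponents involved are at most `2`, which is what lets sums of squares pass inside the norm.
Duality then gives the estimate.
-/

section Theta

lemma summable_gaussian {b : ℝ} (hb : 0 < b) :
    Summable fun k : ℤ ↦ Real.exp (-π * (b * k ^ 2)) := by
  simpa using summable_pow_mul_jacobiTheta₂_term_bound 0 hb 0

lemma exists_tsum_gaussian_shift_le {b : ℝ} (hb : 0 < b) : ∃ C : ℝ, 0 < C ∧ ∀ c y : ℝ, b ≤ c →
    Summable (fun k : ℤ ↦ Real.exp (-π * (c * (k - y) ^ 2))) ∧
      ∑' k : ℤ, Real.exp (-π * (c * (k - y) ^ 2)) ≤ C := by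
  have summable_majorant := (summable_gaussian (half_pos hb)).mul_left (Real.exp (π * b))
  refine ⟨_, summable_majorant.tsum_pos (fun k ↦ by positivity) 0 (by positivity),
    fun c y hc ↦ ?_⟩
  have le_majorant (k : ℤ) : Real.exp (-π * (c * (k - Int.fract y) ^ 2)) ≤
      Real.exp (π * b) * Real.exp (-π * (b / 2 * k ^ 2)) := by
    have hfract : (k : ℝ) ^ 2 / 2 - 1 ≤ (k - Int.fract y) ^ 2 := by
      nlinarith [sq_nonneg ((k : ℝ) - 2 * Int.fract y), Int.fract_nonneg y, Int.fract_lt_one y]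
    rw [← Real.exp_add, Real.exp_le_exp]
    nlinarith [Real.pi_pos, mul_le_mul_of_nonneg_left hfract hb.le,
      mul_le_mul_of_nonneg_right hc (sq_nonneg ((k : ℝ) - Int.fract y))]
  have shift : (fun k : ℤ ↦ Real.exp (-π * (c * (k - Int.fract y) ^ 2))) =
      (fun k : ℤ ↦ Real.exp (-π * (c * (k - y) ^ 2))) ∘ Equiv.addRight ⌊y⌋ := by
    ext k
    simp only [Function.comp_apply, Equiv.coe_addRight, Int.cast_add, Int.fract]
    ring_nf
  have summable_fract := Summable.of_nonneg_of_le (fun k ↦ (Real.exp_pos _).le) le_majorant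
    summable_majorant
  refine ⟨(Equiv.addRight ⌊y⌋).summable_iff.mp (shift ▸ summable_fract), ?_⟩
  rw [← (Equiv.addRight ⌊y⌋).tsum_eq]
  calc _ = ∑' k : ℤ, Real.exp (-π * (c * (k - Int.fract y) ^ 2)) := by rw [shift]; rfl
    _ ≤ _ := summable_fract.tsum_le_tsum le_majorant summable_majorant

/- The functional equation replaces `w` by `-1 / w`, whose imaginary part is `w.im / |w| ^ 2 ≥ b`,
so that the transformed series is a shifted Gaussian sum. -/
lemma exists_norm_jacobiTheta₂_le {b : ℝ} (hb : 0 < b) : ∃ C : ℝ, 0 < C ∧ ∀ (y : ℝ) (w : ℂ),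
    0 < w.im → b * normSq w ≤ w.im → ‖jacobiTheta₂ y w‖ ≤ C * ‖w‖ ^ (-(1 / 2) : ℝ) := by
  obtain ⟨C, hC, gaussian_le⟩ := exists_tsum_gaussian_shift_le hb
  refine ⟨C, hC, fun y w him hw ↦ ?_⟩
  have hw0 : w ≠ 0 := by rintro rfl; simp at him
  set c : ℝ := w.im / normSq w with hc
  have hbc : b ≤ c := (le_div_iff₀ (normSq_pos.mpr hw0)).mpr hw
  have norm_term (k : ℤ) :
      ‖cexp (-π * I * (y : ℂ) ^ 2 / w) * jacobiTheta₂_term k (y / w) (-1 / w)‖ =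
        Real.exp (-π * (c * (k - y) ^ 2)) := by
    have exponent : -π * I * (y : ℂ) ^ 2 / w +
        (2 * π * I * k * (y / w) + π * I * k ^ 2 * (-1 / w)) =
          ((-π * (k - y) ^ 2 : ℝ) : ℂ) * (I * w⁻¹) := by
      push_cast
      field_simp
      ring
    rw [jacobiTheta₂_term, ← Complex.exp_add, Complex.norm_exp, exponent, re_ofReal_mul, I_mul_re,
      inv_im, hc]
    congr 1
    ring
  have norm_series : ‖cexp (-π * I * (y : ℂ) ^ 2 / w) * jacobiTheta₂ (y / w) (-1 / w)‖ ≤ C := by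
    obtain ⟨hsum, hle⟩ := gaussian_le c y hbc
    rw [jacobiTheta₂, ← tsum_mul_left]
    refine (norm_tsum_le_tsum_norm ?_).trans ?_
    · simpa only [norm_term] using hsum
    · simpa only [norm_term] using hle
  have norm_factor : ‖1 / (-I * w) ^ (1 / 2 : ℂ)‖ = ‖w‖ ^ (-(1 / 2) : ℝ) := by
    rw [show (1 / 2 : ℂ) = ((1 / 2 : ℝ) : ℂ) by push_cast; rfl, norm_div, norm_one,
      Complex.norm_cpow_real, norm_mul, norm_neg, norm_I, one_mul, Real.rpow_neg (norm_nonneg _),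
      one_div]
  rw [jacobiTheta₂_functional_equation, mul_assoc, norm_mul, norm_factor, mul_comm]
  gcongr

end Theta

section Gaussian

/-- The Gaussian regularization, at frequency scale `2 ^ n`, of the Schrödinger multiplier
`e ^ (2πiτl)` of an eigenvalue `l`. -/
def gaussianPhase (n : ℕ) (τ l : ℝ) : ℂ :=
  (Real.exp (-π * l / 4 ^ n) : ℂ) * cexp (2 * π * I * l * τ)

lemma norm_gaussianPhase (n : ℕ) (τ l : ℝ) : ‖gaussianPhase n τ l‖ = Real.exp (-π * l / 4 ^ n) := by
  rw [gaussianPhase, norm_mul, Complex.norm_exp (2 * π * I * l * τ), norm_real, Real.norm_eq_abs,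
    Real.abs_exp]
  simp

lemma gaussianPhase_sum {ι : Type*} (s : Finset ι) (n : ℕ) (τ : ℝ) (l : ι → ℝ) :
    gaussianPhase n τ (∑ i ∈ s, l i) = ∏ i ∈ s, gaussianPhase n τ (l i) := by
  simp only [gaussianPhase, Finset.prod_mul_distrib, ← ofReal_prod, ← Real.exp_sum,
    ← Complex.exp_sum, ofReal_sum, Finset.mul_sum, Finset.sum_mul, Finset.sum_div]

lemma gaussianPhase_add (n : ℕ) (τ l l' : ℝ) :
    gaussianPhase n τ (l + l') = gaussianPhase n τ l * gaussianPhase n τ l' := by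
  simpa [Fin.prod_univ_two, Fin.sum_univ_two] using gaussianPhase_sum univ n τ ![l, l']

lemma summable_gaussianPhase_sq (n : ℕ) (τ : ℝ) :
    Summable fun k : ℤ ↦ ‖gaussianPhase n τ (k ^ 2)‖ := by
  have := summable_gaussian (b := (4 ^ n)⁻¹) (by positivity)
  simp only [norm_gaussianPhase]
  convert this using 3
  ring

lemma exists_norm_tsum_gaussianPhase_mul_fourier_le : ∃ C : ℝ, 0 < C ∧ ∀ (n : ℕ) (τ : ℝ),
    0 < |τ| → |τ| ≤ (2 ^ n)⁻¹ → ∀ z : AddCircle (1 : ℝ),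
      ‖∑' k : ℤ, gaussianPhase n τ (k ^ 2) * fourier k z‖ ≤ C * |τ| ^ (-(1 / 2) : ℝ) := by
  obtain ⟨C, hC, theta_le⟩ := exists_norm_jacobiTheta₂_le (b := 1 / 5) (by norm_num)
  refine ⟨C, hC, fun n τ hτ hτn z ↦ ?_⟩
  induction z using QuotientAddGroup.induction_on with | H y => ?_
  set w : ℂ := ⟨2 * τ, (4 ^ n)⁻¹⟩
  have term_eq (k : ℤ) : gaussianPhase n τ (k ^ 2) * fourier k (y : AddCircle (1 : ℝ)) =
      jacobiTheta₂_term k y w := by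
    have hw : w = (2 * τ : ℝ) + (((4 ^ n)⁻¹ : ℝ) : ℂ) * I := (Complex.re_add_im w).symm
    rw [gaussianPhase, fourier_coe_apply, jacobiTheta₂_term, hw, Complex.ofReal_exp,
      ← Complex.exp_add, ← Complex.exp_add]
    congr 1
    push_cast
    linear_combination (-(π : ℂ) * k ^ 2 * (4 ^ n)⁻¹) * I_sq
  have normSq_le : 1 / 5 * normSq w ≤ w.im := by
    have h4 : ((4 : ℝ) ^ n)⁻¹ = (2 ^ n)⁻¹ * (2 ^ n)⁻¹ := by rw [← mul_inv, ← mul_pow]; norm_num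
    have hτ4 : τ * τ ≤ (4 ^ n)⁻¹ := by
      rw [h4, ← abs_mul_abs_self]
      gcongr
    have h41 : ((4 : ℝ) ^ n)⁻¹ ≤ 1 := inv_le_one_of_one_le₀ (one_le_pow₀ (by norm_num))
    rw [normSq_apply]
    change 1 / 5 * (2 * τ * (2 * τ) + (4 ^ n)⁻¹ * (4 ^ n)⁻¹) ≤ (4 ^ n : ℝ)⁻¹
    nlinarith [show 0 < ((4 : ℝ) ^ n)⁻¹ by positivity]
  have le_norm : |τ| ≤ ‖w‖ := by
    have : |2 * τ| ≤ ‖w‖ := Complex.abs_re_le_norm w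
    rw [abs_mul, abs_two] at this
    linarith
  calc ‖∑' k : ℤ, gaussianPhase n τ (k ^ 2) * fourier k (y : AddCircle (1 : ℝ))‖
      = ‖jacobiTheta₂ y w‖ := by simp only [term_eq]; rfl
    _ ≤ C * ‖w‖ ^ (-(1 / 2) : ℝ) := theta_le y w (by simp only [w]; positivity) normSq_le
    _ ≤ C * |τ| ^ (-(1 / 2) : ℝ) := by
      gcongr ?_ * ?_
      exact Real.rpow_le_rpow_of_nonpos hτ le_norm (by norm_num)

end Gaussian

section BoundedPos

variable {α β : Type*} [MeasurableSpace α] [MeasurableSpace β]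

/-- A measurable `ℝ≥0∞`-valued function bounded above and bounded away from zero. Such majorants
are stable under products, real powers and partial norms, and may be divided by freely. -/
structure BoundedPos (f : α → ℝ≥0∞) : Prop where
  measurable : Measurable f
  exists_bounds : ∃ a b : ℝ≥0∞, a ≠ 0 ∧ b ≠ ∞ ∧ ∀ x, f x ∈ Set.Icc a b

namespace BoundedPos

variable {f g : α → ℝ≥0∞}

lemma ne_zero (hf : BoundedPos f) (x : α) : f x ≠ 0 := by
  obtain ⟨a, b, ha, -, h⟩ := hf.exists_bounds
  exact (ha.bot_lt.trans_le (h x).1).ne'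

lemma ne_top (hf : BoundedPos f) (x : α) : f x ≠ ∞ := by
  obtain ⟨a, b, -, hb, h⟩ := hf.exists_bounds
  exact ne_top_of_le_ne_top hb (h x).2

lemma const {a : ℝ≥0∞} (h0 : a ≠ 0) (ht : a ≠ ∞) : BoundedPos fun _ : α ↦ a :=
  ⟨measurable_const, a, a, h0, ht, fun _ ↦ ⟨le_rfl, le_rfl⟩⟩

lemma mul (hf : BoundedPos f) (hg : BoundedPos g) : BoundedPos fun x ↦ f x * g x := by
  obtain ⟨a, b, ha, hb, h⟩ := hf.exists_bounds
  obtain ⟨c, d, hc, hd, h'⟩ := hg.exists_bounds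
  exact ⟨hf.measurable.mul hg.measurable, a * c, b * d, mul_ne_zero ha hc, ENNReal.mul_ne_top hb hd,
    fun x ↦ ⟨mul_le_mul' (h x).1 (h' x).1, mul_le_mul' (h x).2 (h' x).2⟩⟩

lemma inv (hf : BoundedPos f) : BoundedPos fun x ↦ (f x)⁻¹ := by
  obtain ⟨a, b, ha, hb, h⟩ := hf.exists_bounds
  exact ⟨hf.measurable.inv, b⁻¹, a⁻¹, ENNReal.inv_ne_zero.mpr hb, ENNReal.inv_ne_top.mpr ha,
    fun x ↦ ⟨ENNReal.inv_le_inv.mpr (h x).2, ENNReal.inv_le_inv.mpr (h x).1⟩⟩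

lemma div (hf : BoundedPos f) (hg : BoundedPos g) : BoundedPos fun x ↦ f x / g x :=
  hf.mul hg.inv

lemma rpow (hf : BoundedPos f) {γ : ℝ} (hγ : 0 ≤ γ) : BoundedPos fun x ↦ f x ^ γ := by
  obtain ⟨a, b, ha, hb, h⟩ := hf.exists_bounds
  exact ⟨hf.measurable.pow_const γ, a ^ γ, b ^ γ, by simp [ha, hγ.not_gt],
    ENNReal.rpow_ne_top_of_nonneg hγ hb,
    fun x ↦ ⟨ENNReal.rpow_le_rpow (h x).1 hγ, ENNReal.rpow_le_rpow (h x).2 hγ⟩⟩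

lemma comp (hf : BoundedPos f) {φ : β → α} (hφ : Measurable φ) : BoundedPos fun y ↦ f (φ y) := by
  obtain ⟨a, b, ha, hb, h⟩ := hf.exists_bounds
  exact ⟨hf.measurable.comp hφ, a, b, ha, hb, fun y ↦ h (φ y)⟩

end BoundedPos

end BoundedPos

section MixedNorm

variable {T X Y ε : Type*} [MeasurableSpace T] [MeasurableSpace X] [MeasurableSpace Y] [ENorm ε]

/-- The mixed norm `L^s_x L^p_y`, for finite exponents. -/
def mixedLp (s p : ℝ) (μ : Measure X) (ν : Measure Y) (f : X × Y → ε) : ℝ≥0∞ :=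
  eLpNorm' (fun x ↦ eLpNorm' (fun y ↦ f (x, y)) p ν) s μ

/-- The mixed norm `L^q_t L^s_x L^p_y`, for finite exponents. -/
def mixedLp₃ (q s p : ℝ) (κ : Measure T) (μ : Measure X) (ν : Measure Y) (f : T × X × Y → ε) :
    ℝ≥0∞ :=
  eLpNorm' (fun t ↦ mixedLp s p μ ν fun z ↦ f (t, z)) q κ

variable {κ : Measure T} {μ : Measure X} {ν : Measure Y} {q s p : ℝ}

lemma eLpNorm'_mono_enorm {ε' : Type*} [ENorm ε'] {f : X → ε} {g : X → ε'} (hs : 0 ≤ s)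
    (h : ∀ x, ‖f x‖ₑ ≤ ‖g x‖ₑ) : eLpNorm' f s μ ≤ eLpNorm' g s μ :=
  eLpNorm'_mono_enorm_ae hs (.of_forall h)

lemma mixedLp_mono {ε' : Type*} [ENorm ε'] {f : X × Y → ε} {g : X × Y → ε'} (hs : 0 ≤ s)
    (hp : 0 ≤ p) (h : ∀ z, ‖f z‖ₑ ≤ ‖g z‖ₑ) : mixedLp s p μ ν f ≤ mixedLp s p μ ν g :=
  eLpNorm'_mono_enorm hs fun _ ↦ eLpNorm'_mono_enorm hp fun _ ↦ h _

lemma mixedLp₃_mono {ε' : Type*} [ENorm ε'] {f : T × X × Y → ε} {g : T × X × Y → ε'}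
    (hq : 0 ≤ q) (hs : 0 ≤ s) (hp : 0 ≤ p) (h : ∀ z, ‖f z‖ₑ ≤ ‖g z‖ₑ) :
    mixedLp₃ q s p κ μ ν f ≤ mixedLp₃ q s p κ μ ν g :=
  eLpNorm'_mono_enorm hq fun _ ↦ mixedLp_mono hs hp fun _ ↦ h _

lemma measurable_eLpNorm'_slice [SFinite ν] {f : X × Y → ℝ≥0∞} (hf : Measurable f) :
    Measurable fun x ↦ eLpNorm' (fun y ↦ f (x, y)) p ν :=
  (Measurable.lintegral_prod_right' (hf.pow_const p)).pow_const _

lemma measurable_mixedLp_slice [SFinite μ] [SFinite ν] {f : T × X × Y → ℝ≥0∞}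
    (hf : Measurable f) : Measurable fun t ↦ mixedLp s p μ ν fun z ↦ f (t, z) :=
  measurable_eLpNorm'_slice (measurable_eLpNorm'_slice
    (f := fun a : (T × X) × Y ↦ f (a.1.1, a.1.2, a.2)) (by fun_prop))

lemma eLpNorm'_add_const_le [IsProbabilityMeasure μ] {f : X → ℝ≥0∞} (hf : Measurable f)
    (hs : 1 ≤ s) (a : ℝ≥0∞) : eLpNorm' (fun x ↦ f x + a) s μ ≤ eLpNorm' f s μ + a := by
  refine (eLpNorm'_add_le hf.aestronglyMeasurable aestronglyMeasurable_const hs).trans_eq ?_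
  rw [eLpNorm'_const_of_isProbabilityMeasure _ (by positivity), enorm_eq_self]

lemma mixedLp_add_const_le [IsProbabilityMeasure μ] [IsProbabilityMeasure ν]
    {f : X × Y → ℝ≥0∞} (hf : Measurable f) (hs : 1 ≤ s) (hp : 1 ≤ p) (a : ℝ≥0∞) :
    mixedLp s p μ ν (fun z ↦ f z + a) ≤ mixedLp s p μ ν f + a :=
  (eLpNorm'_mono_enorm (by positivity) fun x ↦
    eLpNorm'_add_const_le (by fun_prop) hp a).trans
      (eLpNorm'_add_const_le (measurable_eLpNorm'_slice hf) hs a)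

lemma mixedLp₃_add_const_le [IsProbabilityMeasure κ] [IsProbabilityMeasure μ]
    [IsProbabilityMeasure ν] {f : T × X × Y → ℝ≥0∞} (hf : Measurable f) (hq : 1 ≤ q) (hs : 1 ≤ s)
    (hp : 1 ≤ p) (a : ℝ≥0∞) :
    mixedLp₃ q s p κ μ ν (fun z ↦ f z + a) ≤ mixedLp₃ q s p κ μ ν f + a :=
  (eLpNorm'_mono_enorm (by positivity) fun t ↦
    mixedLp_add_const_le (by fun_prop) hs hp a).trans
      (eLpNorm'_add_const_le (measurable_mixedLp_slice hf) hq a)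

lemma eLpNorm'_mem_Icc [IsProbabilityMeasure μ] {f : X → ℝ≥0∞} {a b : ℝ≥0∞} (hs : 0 < s)
    (h : ∀ x, f x ∈ Set.Icc a b) : eLpNorm' f s μ ∈ Set.Icc a b := by
  have norm_const (c : ℝ≥0∞) : eLpNorm' (fun _ : X ↦ c) s μ = c :=
    eLpNorm'_const_of_isProbabilityMeasure c hs
  constructor
  · calc a = eLpNorm' (fun _ : X ↦ a) s μ := (norm_const a).symm
      _ ≤ eLpNorm' f s μ := eLpNorm'_mono_enorm hs.le fun x ↦ (h x).1
  · calc eLpNorm' f s μ ≤ eLpNorm' (fun _ : X ↦ b) s μ :=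
          eLpNorm'_mono_enorm hs.le fun x ↦ (h x).2
      _ = b := norm_const b

namespace BoundedPos

lemma eLpNorm'_ne_zero [IsProbabilityMeasure μ] {f : X → ℝ≥0∞} (hf : BoundedPos f) (hs : 0 < s) :
    eLpNorm' f s μ ≠ 0 := by
  obtain ⟨a, b, ha, -, h⟩ := hf.exists_bounds
  exact (ha.bot_lt.trans_le (eLpNorm'_mem_Icc hs h).1).ne'

lemma eLpNorm'_ne_top [IsProbabilityMeasure μ] {f : X → ℝ≥0∞} (hf : BoundedPos f) (hs : 0 < s) :
    eLpNorm' f s μ ≠ ∞ := by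
  obtain ⟨a, b, -, hb, h⟩ := hf.exists_bounds
  exact ne_top_of_le_ne_top hb (eLpNorm'_mem_Icc hs h).2

lemma eLpNorm'_slice [IsProbabilityMeasure ν] {f : X × Y → ℝ≥0∞} (hf : BoundedPos f)
    (hp : 0 < p) : BoundedPos fun x ↦ eLpNorm' (fun y ↦ f (x, y)) p ν := by
  obtain ⟨a, b, ha, hb, h⟩ := hf.exists_bounds
  exact ⟨measurable_eLpNorm'_slice hf.measurable, a, b, ha, hb,
    fun x ↦ eLpNorm'_mem_Icc hp fun y ↦ h (x, y)⟩

lemma mixedLp_ne_zero [IsProbabilityMeasure μ] [IsProbabilityMeasure ν] {f : X × Y → ℝ≥0∞}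
    (hf : BoundedPos f) (hs : 0 < s) (hp : 0 < p) : mixedLp s p μ ν f ≠ 0 :=
  (hf.eLpNorm'_slice hp).eLpNorm'_ne_zero hs

lemma mixedLp_ne_top [IsProbabilityMeasure μ] [IsProbabilityMeasure ν] {f : X × Y → ℝ≥0∞}
    (hf : BoundedPos f) (hs : 0 < s) (hp : 0 < p) : mixedLp s p μ ν f ≠ ∞ :=
  (hf.eLpNorm'_slice hp).eLpNorm'_ne_top hs

lemma mixedLp_slice [IsProbabilityMeasure μ] [IsProbabilityMeasure ν] {f : T × X × Y → ℝ≥0∞}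
    (hf : BoundedPos f) (hs : 0 < s) (hp : 0 < p) :
    BoundedPos fun t ↦ mixedLp s p μ ν fun z ↦ f (t, z) := by
  obtain ⟨a, b, ha, hb, h⟩ := hf.exists_bounds
  exact ⟨measurable_mixedLp_slice hf.measurable, a, b, ha, hb,
    fun t ↦ eLpNorm'_mem_Icc hs fun x ↦ eLpNorm'_mem_Icc hp fun y ↦ h (t, x, y)⟩

end BoundedPos

end MixedNorm

section Rescale

variable {T X Y : Type*} [MeasurableSpace T] [MeasurableSpace X] [MeasurableSpace Y]
  {κ : Measure T} {μ : Measure X} {ν : Measure Y} {q s p : ℝ} {a : ℝ≥0∞}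

/-- The function `a (f / ‖f‖_s)^γ`, whose `L^{s/γ}` norm is `a`. Varying `γ` moves `f` through the
scale of `L^p` spaces. -/
def lpRescale (s : ℝ) (μ : Measure X) (a : ℝ≥0∞) (γ : ℝ) (f : X → ℝ≥0∞) (x : X) : ℝ≥0∞ :=
  a * (f x / eLpNorm' f s μ) ^ γ

/-- The mixed-norm analogue `a (g / ‖g‖_s)^β (f / g)^γ` of `lpRescale`, where
`g x = ‖f (x, ·)‖_p`. -/
def mixedRescale (s p : ℝ) (μ : Measure X) (ν : Measure Y) (a : ℝ≥0∞) (β γ : ℝ)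
    (f : X × Y → ℝ≥0∞) (z : X × Y) : ℝ≥0∞ :=
  lpRescale p ν (lpRescale s μ a β (fun x ↦ eLpNorm' (fun y ↦ f (x, y)) p ν) z.1) γ
    (fun y ↦ f (z.1, y)) z.2

/-- The analogue of `lpRescale` for the three-fold norm `mixedLp₃`. -/
def mixedRescale₃ (q s p : ℝ) (κ : Measure T) (μ : Measure X) (ν : Measure Y) (a : ℝ≥0∞)
    (α β γ : ℝ) (f : T × X × Y → ℝ≥0∞) (ω : T × X × Y) : ℝ≥0∞ :=
  mixedRescale s p μ ν (lpRescale q κ a α (fun t ↦ mixedLp s p μ ν fun z ↦ f (t, z)) ω.1) β γ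
    (fun z ↦ f (ω.1, z)) ω.2

lemma eLpNorm'_lpRescale [IsProbabilityMeasure μ] {f : X → ℝ≥0∞} (hf : BoundedPos f) (hs : 0 < s)
    {γ : ℝ} (hγ : 0 < γ) : eLpNorm' (lpRescale s μ a γ f) (s / γ) μ = a := by
  set N := eLpNorm' f s μ with hN
  have hN0 : N ≠ 0 := hf.eLpNorm'_ne_zero hs
  have hNt : N ≠ ∞ := hf.eLpNorm'_ne_top hs
  have hsγ : 0 < s / γ := div_pos hs hγ
  have integral_f : ∫⁻ x, f x ^ s ∂μ = N ^ s := by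
    rw [hN, ← lintegral_rpow_enorm_eq_rpow_eLpNorm' hs]
    rfl
  have integrand (x : X) : ‖lpRescale s μ a γ f x‖ₑ ^ (s / γ) =
      a ^ (s / γ) * (N ^ s)⁻¹ * f x ^ s := by
    rw [enorm_eq_self, lpRescale, ← hN, ENNReal.mul_rpow_of_nonneg _ _ hsγ.le, ← ENNReal.rpow_mul,
      mul_div_cancel₀ _ hγ.ne', ENNReal.div_rpow_of_nonneg _ _ hs.le, ENNReal.div_eq_inv_mul,
      mul_assoc]
  rw [eLpNorm']
  simp only [integrand]
  rw [lintegral_const_mul _ (hf.measurable.pow_const s), integral_f, mul_assoc,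
    ENNReal.inv_mul_cancel (by simp [hN0, hNt]) (ENNReal.rpow_ne_top_of_nonneg hs.le hNt),
    mul_one, one_div, ENNReal.rpow_rpow_inv hsγ.ne']

lemma mixedLp_mixedRescale [IsProbabilityMeasure μ] [IsProbabilityMeasure ν] {f : X × Y → ℝ≥0∞}
    (hf : BoundedPos f) (hs : 0 < s) (hp : 0 < p) {β γ : ℝ} (hβ : 0 < β) (hγ : 0 < γ) :
    mixedLp (s / β) (p / γ) μ ν (mixedRescale s p μ ν a β γ f) = a := by
  have inner (x : X) : eLpNorm' (fun y ↦ mixedRescale s p μ ν a β γ f (x, y)) (p / γ) ν =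
      lpRescale s μ a β (fun x ↦ eLpNorm' (fun y ↦ f (x, y)) p ν) x :=
    eLpNorm'_lpRescale (μ := ν) (f := fun y ↦ f (x, y)) (a := lpRescale s μ a β _ x)
      (hf.comp measurable_prodMk_left) hp hγ
  simp only [mixedLp, inner]
  exact eLpNorm'_lpRescale (hf.eLpNorm'_slice hp) hs hβ

lemma mixedLp₃_mixedRescale₃ [IsProbabilityMeasure κ] [IsProbabilityMeasure μ]
    [IsProbabilityMeasure ν] {f : T × X × Y → ℝ≥0∞} (hf : BoundedPos f) (hq : 0 < q) (hs : 0 < s)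
    (hp : 0 < p) {α β γ : ℝ} (hα : 0 < α) (hβ : 0 < β) (hγ : 0 < γ) :
    mixedLp₃ (q / α) (s / β) (p / γ) κ μ ν (mixedRescale₃ q s p κ μ ν a α β γ f) = a := by
  have inner (t : T) : mixedLp (s / β) (p / γ) μ ν
      (fun z ↦ mixedRescale₃ q s p κ μ ν a α β γ f (t, z)) =
        lpRescale q κ a α (fun t ↦ mixedLp s p μ ν fun z ↦ f (t, z)) t :=
    mixedLp_mixedRescale (μ := μ) (ν := ν) (f := fun z ↦ f (t, z)) (a := lpRescale q κ a α _ t)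
      (hf.comp measurable_prodMk_left) hs hp hβ hγ
  simp only [mixedLp₃, inner]
  exact eLpNorm'_lpRescale (hf.mixedLp_slice hs hp) hq hα

lemma lpRescale_eq_self [IsProbabilityMeasure μ] {f : X → ℝ≥0∞} (hf : BoundedPos f) (hs : 0 < s) :
    lpRescale s μ (eLpNorm' f s μ) 1 f = f := by
  ext x
  rw [lpRescale, ENNReal.rpow_one,
    ENNReal.mul_div_cancel (hf.eLpNorm'_ne_zero hs) (hf.eLpNorm'_ne_top hs)]

lemma mixedRescale_eq_self [IsProbabilityMeasure μ] [IsProbabilityMeasure ν] {f : X × Y → ℝ≥0∞}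
    (hf : BoundedPos f) (hs : 0 < s) (hp : 0 < p) :
    mixedRescale s p μ ν (mixedLp s p μ ν f) 1 1 f = f := by
  ext z
  rw [mixedRescale, mixedLp, lpRescale_eq_self (hf.eLpNorm'_slice hp) hs,
    lpRescale_eq_self (hf.comp measurable_prodMk_left) hp]

lemma mixedRescale₃_eq_self [IsProbabilityMeasure κ] [IsProbabilityMeasure μ]
    [IsProbabilityMeasure ν] {f : T × X × Y → ℝ≥0∞} (hf : BoundedPos f) (hq : 0 < q) (hs : 0 < s)
    (hp : 0 < p) : mixedRescale₃ q s p κ μ ν (mixedLp₃ q s p κ μ ν f) 1 1 1 f = f := by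
  ext ω
  rw [mixedRescale₃, mixedLp₃, lpRescale_eq_self (hf.mixedLp_slice hs hp) hq,
    mixedRescale_eq_self (hf.comp measurable_prodMk_left) hs hp]

lemma lpRescale_rpow {f : X → ℝ≥0∞} {θ : ℝ} (hθ : 0 ≤ θ) (γ : ℝ) (x : X) :
    lpRescale s μ a γ f x ^ θ = lpRescale s μ (a ^ θ) (γ * θ) f x := by
  rw [lpRescale, lpRescale, ENNReal.mul_rpow_of_nonneg _ _ hθ, ← ENNReal.rpow_mul]

lemma mixedRescale_rpow {f : X × Y → ℝ≥0∞} {θ : ℝ} (hθ : 0 ≤ θ) (β γ : ℝ) (z : X × Y) :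
    mixedRescale s p μ ν a β γ f z ^ θ = mixedRescale s p μ ν (a ^ θ) (β * θ) (γ * θ) f z := by
  rw [mixedRescale, lpRescale_rpow hθ, lpRescale_rpow hθ, mixedRescale]

lemma mixedRescale₃_rpow {f : T × X × Y → ℝ≥0∞} {θ : ℝ} (hθ : 0 ≤ θ) (α β γ : ℝ)
    (ω : T × X × Y) : mixedRescale₃ q s p κ μ ν a α β γ f ω ^ θ =
      mixedRescale₃ q s p κ μ ν (a ^ θ) (α * θ) (β * θ) (γ * θ) f ω := by
  rw [mixedRescale₃, mixedRescale_rpow hθ, lpRescale_rpow hθ, mixedRescale₃]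

lemma lpRescale_mul {f : X → ℝ≥0∞} {γ δ : ℝ} (hγ : 0 ≤ γ) (hδ : 0 ≤ δ) (a b : ℝ≥0∞) (x : X) :
    lpRescale s μ a γ f x * lpRescale s μ b δ f x = lpRescale s μ (a * b) (γ + δ) f x := by
  rw [lpRescale, lpRescale, lpRescale, ENNReal.rpow_add_of_nonneg _ _ hγ hδ, mul_mul_mul_comm]

lemma mixedRescale_mul {f : X × Y → ℝ≥0∞} {β β' γ γ' : ℝ} (hβ : 0 ≤ β) (hβ' : 0 ≤ β')
    (hγ : 0 ≤ γ) (hγ' : 0 ≤ γ') (a b : ℝ≥0∞) (z : X × Y) :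
    mixedRescale s p μ ν a β γ f z * mixedRescale s p μ ν b β' γ' f z =
      mixedRescale s p μ ν (a * b) (β + β') (γ + γ') f z := by
  rw [mixedRescale, mixedRescale, lpRescale_mul hγ hγ', lpRescale_mul hβ hβ', mixedRescale]

lemma mixedRescale₃_mul {f : T × X × Y → ℝ≥0∞} {α α' β β' γ γ' : ℝ} (hα : 0 ≤ α) (hα' : 0 ≤ α')
    (hβ : 0 ≤ β) (hβ' : 0 ≤ β') (hγ : 0 ≤ γ) (hγ' : 0 ≤ γ') (a b : ℝ≥0∞) (ω : T × X × Y) :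
    mixedRescale₃ q s p κ μ ν a α β γ f ω * mixedRescale₃ q s p κ μ ν b α' β' γ' f ω =
      mixedRescale₃ q s p κ μ ν (a * b) (α + α') (β + β') (γ + γ') f ω := by
  rw [mixedRescale₃, mixedRescale₃, mixedRescale_mul hβ hβ' hγ hγ', lpRescale_mul hα hα',
    mixedRescale₃]

lemma BoundedPos.lpRescale [IsProbabilityMeasure μ] {f : X → ℝ≥0∞} (hf : BoundedPos f)
    (hs : 0 < s) (h0 : a ≠ 0) (ht : a ≠ ∞) {γ : ℝ} (hγ : 0 ≤ γ) :
    BoundedPos (lpRescale s μ a γ f) :=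
  (const h0 ht).mul ((hf.mul
    (const (hf.eLpNorm'_ne_zero hs) (hf.eLpNorm'_ne_top hs)).inv).rpow hγ)

lemma BoundedPos.lpRescale_slice [IsProbabilityMeasure ν] {f : X × Y → ℝ≥0∞} {b : X → ℝ≥0∞}
    (hb : BoundedPos b) (hf : BoundedPos f) (hp : 0 < p) {γ : ℝ} (hγ : 0 ≤ γ) :
    BoundedPos fun z : X × Y ↦ _root_.lpRescale p ν (b z.1) γ (fun y ↦ f (z.1, y)) z.2 :=
  (hb.comp measurable_fst).mul ((hf.mul
    ((hf.eLpNorm'_slice hp).comp measurable_fst).inv).rpow hγ)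

lemma BoundedPos.mixedRescale_slice [IsProbabilityMeasure μ] [IsProbabilityMeasure ν]
    {f : T × X × Y → ℝ≥0∞} {b : T → ℝ≥0∞} (hb : BoundedPos b) (hf : BoundedPos f) (hs : 0 < s)
    (hp : 0 < p) {β γ : ℝ} (hβ : 0 ≤ β) (hγ : 0 ≤ γ) :
    BoundedPos fun ω : T × X × Y ↦
      _root_.mixedRescale s p μ ν (b ω.1) β γ (fun z ↦ f (ω.1, z)) ω.2 := by
  have hf' : BoundedPos fun a : (T × X) × Y ↦ f (a.1.1, a.1.2, a.2) := hf.comp (by fun_prop)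
  exact ((hb.lpRescale_slice (hf'.eLpNorm'_slice hp) hs hβ).lpRescale_slice hf' hp hγ).comp
    (φ := fun ω : T × X × Y ↦ ((ω.1, ω.2.1), ω.2.2)) (by fun_prop)

lemma BoundedPos.mixedRescale [IsProbabilityMeasure μ] [IsProbabilityMeasure ν]
    {f : X × Y → ℝ≥0∞} (hf : BoundedPos f) (hs : 0 < s) (hp : 0 < p) (h0 : a ≠ 0) (ht : a ≠ ∞)
    {β γ : ℝ} (hβ : 0 ≤ β) (hγ : 0 ≤ γ) : BoundedPos (mixedRescale s p μ ν a β γ f) :=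
  ((const (α := Unit) h0 ht).mixedRescale_slice (hf.comp measurable_snd) hs hp hβ hγ).comp
    (φ := fun z ↦ ((), z)) (by fun_prop)

lemma BoundedPos.mixedRescale₃ [IsProbabilityMeasure κ] [IsProbabilityMeasure μ]
    [IsProbabilityMeasure ν] {f : T × X × Y → ℝ≥0∞} (hf : BoundedPos f) (hq : 0 < q) (hs : 0 < s)
    (hp : 0 < p) (h0 : a ≠ 0) (ht : a ≠ ∞) {α β γ : ℝ} (hα : 0 ≤ α) (hβ : 0 ≤ β) (hγ : 0 ≤ γ) :
    BoundedPos (mixedRescale₃ q s p κ μ ν a α β γ f) :=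
  ((hf.mixedLp_slice hs hp).lpRescale hq h0 ht hα).mixedRescale_slice hf hs hp hβ hγ

end Rescale

section BoundedMeasurable

variable {α β : Type*} [MeasurableSpace α] [MeasurableSpace β]

/-- A measurable, everywhere bounded complex function: the class of test functions. -/
structure BoundedMeasurable (F : α → ℂ) : Prop where
  measurable : Measurable F
  exists_bound : ∃ M : ℝ, ∀ x, ‖F x‖ ≤ M

namespace BoundedMeasurable

variable {F G : α → ℂ}

lemma mul (hF : BoundedMeasurable F) (hG : BoundedMeasurable G) :
    BoundedMeasurable fun x ↦ F x * G x := by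
  obtain ⟨M, hM⟩ := hF.exists_bound
  obtain ⟨N, hN⟩ := hG.exists_bound
  refine ⟨hF.measurable.mul hG.measurable, M * N, fun x ↦ ?_⟩
  rw [norm_mul]
  exact mul_le_mul (hM x) (hN x) (norm_nonneg _) ((norm_nonneg _).trans (hM x))

lemma conjugate (hF : BoundedMeasurable F) : BoundedMeasurable fun x ↦ conj (F x) := by
  obtain ⟨M, hM⟩ := hF.exists_bound
  exact ⟨continuous_conj.measurable.comp hF.measurable, M, by simpa using hM⟩

lemma comp (hF : BoundedMeasurable F) {φ : β → α} (hφ : Measurable φ) :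
    BoundedMeasurable fun y ↦ F (φ y) := by
  obtain ⟨M, hM⟩ := hF.exists_bound
  exact ⟨hF.measurable.comp hφ, M, fun y ↦ hM (φ y)⟩

lemma integrable (hF : BoundedMeasurable F) (μ : Measure α) [IsFiniteMeasure μ] :
    Integrable F μ := by
  obtain ⟨M, hM⟩ := hF.exists_bound
  exact .of_bound hF.measurable.aestronglyMeasurable M (.of_forall hM)

lemma boundedPos_enorm_add (hF : BoundedMeasurable F) {η : ℝ≥0∞} (h0 : η ≠ 0) (ht : η ≠ ∞) :
    BoundedPos fun x ↦ ‖F x‖ₑ + η := by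
  obtain ⟨M, hM⟩ := hF.exists_bound
  refine ⟨hF.measurable.enorm.add_const η, η, ENNReal.ofReal M + η, h0, by finiteness,
    fun x ↦ ⟨le_add_self, ?_⟩⟩
  gcongr
  rw [← ofReal_norm]
  exact ENNReal.ofReal_le_ofReal (hM x)

lemma of_enorm_le (hF : Measurable F) {f : α → ℝ≥0∞} (hf : BoundedPos f)
    (h : ∀ x, ‖F x‖ₑ ≤ f x) : BoundedMeasurable F := by
  obtain ⟨_, b, -, hb, hfb⟩ := hf.exists_bounds
  refine ⟨hF, b.toReal, fun x ↦ ?_⟩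
  rw [← toReal_enorm]
  exact ENNReal.toReal_mono hb ((h x).trans (hfb x).2)

end BoundedMeasurable

end BoundedMeasurable

section Interpolation

lemma differentiable_integral_mul_cexp {Ω : Type*} [MeasurableSpace Ω] {μ : Measure Ω} {k : Ω → ℂ}
    (hk : Integrable k μ) {B : Ω → ℝ} (hB : Measurable B) {M : ℝ} (hM : ∀ ω, |B ω| ≤ M) :
    Differentiable ℂ fun ζ : ℂ ↦ ∫ ω, k ω * cexp (ζ * B ω) ∂μ := by
  intro ζ₀
  have norm_exp_le {ζ : ℂ} {R : ℝ} (hζ : ‖ζ‖ ≤ R) (ω : Ω) : ‖cexp (ζ * B ω)‖ ≤ Real.exp (R * M) :=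
    (Complex.norm_exp_le_exp_norm _).trans <| Real.exp_le_exp.mpr <| by
      rw [norm_mul, norm_real]
      exact mul_le_mul hζ (hM ω) (abs_nonneg _) ((norm_nonneg ζ).trans hζ)
  have measurable_exp (ζ : ℂ) : Measurable fun ω ↦ cexp (ζ * B ω) := by fun_prop
  refine (hasDerivAt_integral_of_dominated_loc_of_deriv_le (Metric.ball_mem_nhds ζ₀ one_pos)
    (F' := fun ζ ω ↦ k ω * (cexp (ζ * B ω) * B ω))
    (bound := fun ω ↦ ‖k ω‖ * (Real.exp ((‖ζ₀‖ + 1) * M) * M))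
    (.of_forall fun ζ ↦ hk.aestronglyMeasurable.mul (measurable_exp ζ).aestronglyMeasurable)
    (hk.mul_bdd (measurable_exp ζ₀).aestronglyMeasurable (.of_forall (norm_exp_le le_rfl)))
    (hk.aestronglyMeasurable.mul (by fun_prop))
    (.of_forall fun ω ζ hζ ↦ ?_) (hk.norm.mul_const _)
    (.of_forall fun ω ζ _ ↦ ?_)).2.differentiableAt
  · have hζ' : ‖ζ‖ ≤ ‖ζ₀‖ + 1 := by
      have := norm_le_norm_add_norm_sub' ζ ζ₀
      rw [Metric.mem_ball, dist_eq_norm] at hζ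
      linarith
    rw [norm_mul, norm_mul, norm_real]
    gcongr
    exacts [norm_exp_le hζ' ω, hM ω]
  · simpa using (((hasDerivAt_id ζ).mul_const (B ω : ℂ)).cexp.const_mul (k ω))

lemma norm_integral_mul_cexp_le_interp {Ω : Type*} [MeasurableSpace Ω] {μ : Measure Ω} {k : Ω → ℂ}
    (hk : Integrable k μ) {B : Ω → ℝ} (hB : Measurable B) {M : ℝ} (hM : ∀ ω, |B ω| ≤ M)
    {θ a b : ℝ} (hθ₀ : 0 ≤ θ) (hθ₁ : θ ≤ 1)
    (ha : ∀ ζ : ℂ, ζ.re = -θ → ‖∫ ω, k ω * cexp (ζ * B ω) ∂μ‖ ≤ a)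
    (hb : ∀ ζ : ℂ, ζ.re = 1 - θ → ‖∫ ω, k ω * cexp (ζ * B ω) ∂μ‖ ≤ b) :
    ‖∫ ω, k ω ∂μ‖ ≤ a ^ (1 - θ) * b ^ θ := by
  set Φ : ℂ → ℂ := fun ζ ↦ ∫ ω, k ω * cexp ((ζ - θ) * B ω) ∂μ
  have hΦ : Differentiable ℂ Φ := (differentiable_integral_mul_cexp hk hB hM).comp
    (differentiable_id.sub_const (θ : ℂ))
  have bddAbove : BddAbove ((norm ∘ Φ) '' HadamardThreeLines.verticalClosedStrip 0 1) := by
    refine ⟨∫ ω, ‖k ω‖ * Real.exp M ∂μ, ?_⟩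
    rintro _ ⟨ζ, ⟨hζ₀, hζ₁⟩, rfl⟩
    refine norm_integral_le_of_norm_le (hk.norm.mul_const _) (.of_forall fun ω ↦ ?_)
    rw [norm_mul, Complex.norm_exp, re_mul_ofReal, sub_re, ofReal_re]
    gcongr
    have : |(ζ.re - θ) * B ω| ≤ 1 * M := by
      rw [abs_mul]
      exact mul_le_mul (abs_le.mpr ⟨by linarith, by linarith⟩) (hM ω) (abs_nonneg _) zero_le_one
    linarith [le_abs_self ((ζ.re - θ) * B ω)]
  have := HadamardThreeLines.norm_le_interp_of_mem_verticalClosedStrip₀₁' Φ (z := θ)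
    ⟨hθ₀, hθ₁⟩ hΦ.diffContOnCl bddAbove
    (fun ζ hζ ↦ ha (ζ - θ) (by rw [sub_re, hζ, ofReal_re, zero_sub]))
    (fun ζ hζ ↦ hb (ζ - θ) (by rw [sub_re, hζ, ofReal_re]))
  simpa [Φ] using this

variable {Z : Type*} [MeasurableSpace Z]

/-- The sesquilinear form `∬ K(z, z') F(z') conj (G z)` of a kernel `K`. -/
def kernelForm (μ : Measure Z) (K : Z → Z → ℂ) (F G : Z → ℂ) : ℂ :=
  ∫ ω : Z × Z, K ω.1 ω.2 * (F ω.2 * conj (G ω.1)) ∂μ.prod μ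

lemma enorm_cexp_mul_log_toReal {w : ℝ≥0∞} (h0 : w ≠ 0) (ht : w ≠ ∞) (ζ : ℂ) :
    ‖cexp (ζ * Real.log w.toReal)‖ₑ = w ^ ζ.re := by
  have hw : 0 < w.toReal := ENNReal.toReal_pos h0 ht
  rw [← ofReal_norm, Complex.norm_exp, re_mul_ofReal, mul_comm, ← Real.rpow_def_of_pos hw,
    ← ENNReal.ofReal_rpow_of_pos hw, ENNReal.ofReal_toReal ht]

lemma BoundedPos.exists_abs_log_le {w : Z → ℝ≥0∞} (hw : BoundedPos w) :
    ∃ M : ℝ, ∀ z, |Real.log (w z).toReal| ≤ M := by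
  obtain ⟨a, b, ha, hb, h⟩ := hw.exists_bounds
  refine ⟨max |Real.log a.toReal| |Real.log b.toReal|, fun z ↦ abs_le_max_abs_abs ?_ ?_⟩
  · have hat : a ≠ ∞ := ne_top_of_le_ne_top (hw.ne_top z) (h z).1
    exact Real.log_le_log (ENNReal.toReal_pos ha hat) (ENNReal.toReal_mono (hw.ne_top z) (h z).1)
  · exact Real.log_le_log (ENNReal.toReal_pos (hw.ne_zero z) (hw.ne_top z))
      (ENNReal.toReal_mono hb (h z).2)

/-- The multiplication of `F` by the complex power `(W₁ / W₀) ^ ζ`, which moves a function bounded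
by the geometric mean `W₀ ^ (1 - θ) * W₁ ^ θ` to one bounded by `W₀` or `W₁`. -/
def powerTwist (W₀ W₁ : Z → ℝ≥0∞) (ζ : ℂ) (F : Z → ℂ) (z : Z) : ℂ :=
  F z * cexp (ζ * Real.log (W₁ z / W₀ z).toReal)

lemma enorm_powerTwist_le {W₀ W₁ : Z → ℝ≥0∞} (hW₀ : BoundedPos W₀) (hW₁ : BoundedPos W₁)
    {F : Z → ℂ} {θ : ℝ} (hF : ∀ z, ‖F z‖ₑ ≤ W₀ z ^ (1 - θ) * W₁ z ^ θ) (ζ : ℂ) (z : Z) :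
    ‖powerTwist W₀ W₁ ζ F z‖ₑ ≤ W₀ z ^ (1 - θ - ζ.re) * W₁ z ^ (θ + ζ.re) := by
  have hw := hW₁.div hW₀
  rw [powerTwist, enorm_mul, enorm_cexp_mul_log_toReal (hw.ne_zero z) (hw.ne_top z),
    div_eq_mul_inv, ENNReal.mul_rpow_of_ne_zero (hW₁.ne_zero z) (hW₀.inv.ne_zero z),
    ENNReal.inv_rpow, ← ENNReal.rpow_neg, sub_eq_add_neg (1 - θ),
    ENNReal.rpow_add _ _ (hW₀.ne_zero z) (hW₀.ne_top z),
    ENNReal.rpow_add _ _ (hW₁.ne_zero z) (hW₁.ne_top z)]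
  refine (mul_le_mul_left (hF z) _).trans_eq ?_
  ring

lemma BoundedMeasurable.powerTwist {W₀ W₁ : Z → ℝ≥0∞} (hW₀ : BoundedPos W₀)
    (hW₁ : BoundedPos W₁) {F : Z → ℂ} (hF : BoundedMeasurable F) (ζ : ℂ) :
    BoundedMeasurable (powerTwist W₀ W₁ ζ F) := by
  have hw := hW₁.div hW₀
  have := hw.measurable
  obtain ⟨M, hM⟩ := hw.exists_abs_log_le
  refine hF.mul ⟨by fun_prop, Real.exp (‖ζ‖ * M), fun z ↦ ?_⟩
  refine (Complex.norm_exp_le_exp_norm _).trans (Real.exp_le_exp.mpr ?_)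
  rw [norm_mul, norm_real]
  exact mul_le_mul_of_nonneg_left (hM z) (norm_nonneg _)

/- Stein's argument: `ζ ↦ ⟨K F (W₁ / W₀) ^ (ζ - θ), G (V₁ / V₀) ^ (conj ζ - θ)⟩` is holomorphic,
satisfies the two endpoint bounds on the lines `re ζ = 0, 1` and is the given form at `ζ = θ`. -/
theorem enorm_kernelForm_le_interp {μ : Measure Z} [IsFiniteMeasure μ] {K : Z → Z → ℂ}
    (hK : BoundedMeasurable fun ω : Z × Z ↦ K ω.1 ω.2) {W₀ W₁ V₀ V₁ : Z → ℝ≥0∞}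
    (hW₀ : BoundedPos W₀) (hW₁ : BoundedPos W₁) (hV₀ : BoundedPos V₀) (hV₁ : BoundedPos V₁)
    {A₀ A₁ : ℝ≥0∞} (hA₀ : A₀ ≠ ∞) (hA₁ : A₁ ≠ ∞)
    (h₀ : ∀ F G, BoundedMeasurable F → BoundedMeasurable G → (∀ z, ‖F z‖ₑ ≤ W₀ z) →
      (∀ z, ‖G z‖ₑ ≤ V₀ z) → ‖kernelForm μ K F G‖ₑ ≤ A₀)
    (h₁ : ∀ F G, BoundedMeasurable F → BoundedMeasurable G → (∀ z, ‖F z‖ₑ ≤ W₁ z) →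
      (∀ z, ‖G z‖ₑ ≤ V₁ z) → ‖kernelForm μ K F G‖ₑ ≤ A₁)
    {θ : ℝ} (hθ₀ : 0 ≤ θ) (hθ₁ : θ ≤ 1) {F G : Z → ℂ} (hF : BoundedMeasurable F)
    (hG : BoundedMeasurable G) (hFW : ∀ z, ‖F z‖ₑ ≤ W₀ z ^ (1 - θ) * W₁ z ^ θ)
    (hGV : ∀ z, ‖G z‖ₑ ≤ V₀ z ^ (1 - θ) * V₁ z ^ θ) :
    ‖kernelForm μ K F G‖ₑ ≤ A₀ ^ (1 - θ) * A₁ ^ θ := by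
  have hw := hW₁.div hW₀
  have hv := hV₁.div hV₀
  obtain ⟨M, hM⟩ := hw.exists_abs_log_le
  obtain ⟨N, hN⟩ := hv.exists_abs_log_le
  set B : Z × Z → ℝ := fun ω ↦
    Real.log (W₁ ω.2 / W₀ ω.2).toReal + Real.log (V₁ ω.1 / V₀ ω.1).toReal
  have measurable_B : Measurable B :=
    (hw.measurable.comp measurable_snd).ennreal_toReal.log.add
      (hv.measurable.comp measurable_fst).ennreal_toReal.log
  have form_eq (ζ : ℂ) :
      ∫ ω : Z × Z, K ω.1 ω.2 * (F ω.2 * conj (G ω.1)) * cexp (ζ * B ω) ∂μ.prod μ =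
        kernelForm μ K (powerTwist W₀ W₁ ζ F) (powerTwist V₀ V₁ (conj ζ) G) := by
    refine integral_congr_ae (.of_forall fun ω ↦ ?_)
    simp only [powerTwist, B, map_mul, ← Complex.exp_conj, conj_conj, conj_ofReal, ofReal_add,
      mul_add, Complex.exp_add]
    ring
  have interp := norm_integral_mul_cexp_le_interp (μ := μ.prod μ) (θ := θ) (a := A₀.toReal)
    (b := A₁.toReal) (B := B) (M := M + N) ((hK.mul ((hF.comp measurable_snd).mul
      (hG.comp measurable_fst).conjugate)).integrable _) (by fun_prop)
    (fun ω ↦ (abs_add_le _ _).trans (add_le_add (hM ω.2) (hN ω.1))) hθ₀ hθ₁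
  rw [← ENNReal.toReal_le_toReal enorm_ne_top (by finiteness), ENNReal.toReal_mul,
    ← ENNReal.toReal_rpow, ← ENNReal.toReal_rpow, toReal_enorm]
  refine interp (fun ζ hζ ↦ ?_) fun ζ hζ ↦ ?_
  all_goals
    rw [form_eq, ← toReal_enorm]
    have twist_le := enorm_powerTwist_le hW₀ hW₁ hFW ζ
    have twist_le' := enorm_powerTwist_le hV₀ hV₁ hGV (conj ζ)
    simp only [conj_re, hζ, sub_neg_eq_add, sub_add_cancel, add_neg_cancel, sub_self,
      add_sub_cancel, ENNReal.rpow_one, ENNReal.rpow_zero, mul_one, one_mul] at twist_le twist_le'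
  · exact ENNReal.toReal_mono hA₀ (h₀ _ _ (hF.powerTwist hW₀ hW₁ ζ) (hG.powerTwist hV₀ hV₁ _)
      twist_le twist_le')
  · exact ENNReal.toReal_mono hA₁ (h₁ _ _ (hF.powerTwist hW₀ hW₁ ζ) (hG.powerTwist hV₀ hV₁ _)
      twist_le twist_le')

variable {X Y : Type*} [MeasurableSpace X] [MeasurableSpace Y]

/-- The form of the kernel `K` is bounded by `A` on the mixed space `L^s_x L^p_y`. -/
def MixedFormBound (μ : Measure X) (ν : Measure Y) (K : X × Y → X × Y → ℂ) (s p : ℝ) (A : ℝ≥0∞) :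
    Prop :=
  ∀ F G, BoundedMeasurable F → BoundedMeasurable G →
    ‖kernelForm (μ.prod ν) K F G‖ₑ ≤ A * (mixedLp s p μ ν F * mixedLp s p μ ν G)

variable {μ : Measure X} {ν : Measure Y} [IsProbabilityMeasure μ] [IsProbabilityMeasure ν]

lemma BoundedMeasurable.mixedLp_ne_top {F : X × Y → ℂ} (hF : BoundedMeasurable F) {s p : ℝ}
    (hs : 0 < s) (hp : 0 < p) : mixedLp s p μ ν F ≠ ∞ :=
  ne_top_of_le_ne_top
    ((hF.boundedPos_enorm_add one_ne_zero ENNReal.one_ne_top).mixedLp_ne_top hs hp)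
    (mixedLp_mono hs.le hp.le fun _ ↦ le_self_add)

lemma mixedRescale_geom_mean {f : X × Y → ℝ≥0∞} (hf : BoundedPos f) {s p s₀ p₀ s₁ p₁ θ : ℝ}
    (hs : 0 < s) (hp : 0 < p) (hs₀ : 0 < s₀) (hp₀ : 0 < p₀) (hs₁ : 0 < s₁) (hp₁ : 0 < p₁)
    (hθ₀ : 0 ≤ θ) (hθ₁ : θ ≤ 1) (hsθ : s⁻¹ = (1 - θ) / s₀ + θ / s₁)
    (hpθ : p⁻¹ = (1 - θ) / p₀ + θ / p₁) (z : X × Y) :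
    mixedRescale s p μ ν (mixedLp s p μ ν f) (s / s₀) (p / p₀) f z ^ (1 - θ) *
      mixedRescale s p μ ν (mixedLp s p μ ν f) (s / s₁) (p / p₁) f z ^ θ = f z := by
  have hθ : 0 ≤ 1 - θ := sub_nonneg.mpr hθ₁
  have exponent {r r₀ r₁ : ℝ} (hr : 0 < r) (h : r⁻¹ = (1 - θ) / r₀ + θ / r₁) :
      r / r₀ * (1 - θ) + r / r₁ * θ = 1 := by
    have := mul_inv_cancel₀ hr.ne'
    rw [h] at this
    linear_combination this
  rw [mixedRescale_rpow hθ, mixedRescale_rpow hθ₀, mixedRescale_mul (by positivity)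
    (by positivity) (by positivity) (by positivity), exponent hs hsθ, exponent hp hpθ,
    ← ENNReal.rpow_add_of_nonneg _ _ hθ hθ₀, sub_add_cancel, ENNReal.rpow_one,
    mixedRescale_eq_self hf hs hp]

lemma mixedLp_mixedRescale_div {f : X × Y → ℝ≥0∞} (hf : BoundedPos f) {s p s' p' : ℝ} (hs : 0 < s)
    (hp : 0 < p) (hs' : 0 < s') (hp' : 0 < p') (a : ℝ≥0∞) :
    mixedLp s' p' μ ν (mixedRescale s p μ ν a (s / s') (p / p') f) = a := by
  have := mixedLp_mixedRescale (a := a) (μ := μ) (ν := ν) hf hs hp (div_pos hs hs')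
    (div_pos hp hp')
  rwa [div_div_cancel₀ hs.ne', div_div_cancel₀ hp.ne'] at this

lemma MixedFormBound.interp_of_enorm_le {K : X × Y → X × Y → ℂ}
    (hK : BoundedMeasurable fun ω : (X × Y) × X × Y ↦ K ω.1 ω.2) {s p s₀ p₀ s₁ p₁ θ : ℝ}
    {A₀ A₁ : ℝ≥0∞} (h₀ : MixedFormBound μ ν K s₀ p₀ A₀) (h₁ : MixedFormBound μ ν K s₁ p₁ A₁)
    (hs : 0 < s) (hp : 0 < p) (hs₀ : 0 < s₀) (hp₀ : 0 < p₀) (hs₁ : 0 < s₁) (hp₁ : 0 < p₁)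
    (hA₀ : A₀ ≠ ∞) (hA₁ : A₁ ≠ ∞) (hθ₀ : 0 ≤ θ) (hθ₁ : θ ≤ 1)
    (hsθ : s⁻¹ = (1 - θ) / s₀ + θ / s₁) (hpθ : p⁻¹ = (1 - θ) / p₀ + θ / p₁) {F G : X × Y → ℂ}
    (hF : BoundedMeasurable F) (hG : BoundedMeasurable G) {f g : X × Y → ℝ≥0∞} (hf : BoundedPos f)
    (hg : BoundedPos g) (hFf : ∀ z, ‖F z‖ₑ ≤ f z) (hGg : ∀ z, ‖G z‖ₑ ≤ g z) :
    ‖kernelForm (μ.prod ν) K F G‖ₑ ≤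
      A₀ ^ (1 - θ) * A₁ ^ θ * (mixedLp s p μ ν f * mixedLp s p μ ν g) := by
  set N := mixedLp s p μ ν f
  set N' := mixedLp s p μ ν g
  have hN : N ≠ 0 ∧ N ≠ ∞ := ⟨hf.mixedLp_ne_zero hs hp, hf.mixedLp_ne_top hs hp⟩
  have hN' : N' ≠ 0 ∧ N' ≠ ∞ := ⟨hg.mixedLp_ne_zero hs hp, hg.mixedLp_ne_top hs hp⟩
  have rescale {h : X × Y → ℝ≥0∞} (hh : BoundedPos h) {a : ℝ≥0∞} (ha : a ≠ 0 ∧ a ≠ ∞)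
      {s' p' : ℝ} (hs' : 0 < s') (hp' : 0 < p') :
      BoundedPos (mixedRescale s p μ ν a (s / s') (p / p') h) :=
    hh.mixedRescale hs hp ha.1 ha.2 (by positivity) (by positivity)
  have endpoint {s' p' : ℝ} {B : ℝ≥0∞} (h : MixedFormBound μ ν K s' p' B) (hs' : 0 < s')
      (hp' : 0 < p') (F G : X × Y → ℂ) (hF : BoundedMeasurable F) (hG : BoundedMeasurable G)
      (hFW : ∀ z, ‖F z‖ₑ ≤ mixedRescale s p μ ν N (s / s') (p / p') f z)
      (hGV : ∀ z, ‖G z‖ₑ ≤ mixedRescale s p μ ν N' (s / s') (p / p') g z) :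
      ‖kernelForm (μ.prod ν) K F G‖ₑ ≤ B * (N * N') := by
    refine (h F G hF hG).trans ?_
    gcongr
    · exact (mixedLp_mono hs'.le hp'.le hFW).trans_eq (mixedLp_mixedRescale_div hf hs hp hs' hp' N)
    · exact (mixedLp_mono hs'.le hp'.le hGV).trans_eq (mixedLp_mixedRescale_div hg hs hp hs' hp' N')
  have hNN : N * N' ≠ ∞ := ENNReal.mul_ne_top hN.2 hN'.2
  have hθ : 0 ≤ 1 - θ := sub_nonneg.mpr hθ₁
  refine (enorm_kernelForm_le_interp hK (rescale hf hN hs₀ hp₀) (rescale hf hN hs₁ hp₁)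
    (rescale hg hN' hs₀ hp₀) (rescale hg hN' hs₁ hp₁) (ENNReal.mul_ne_top hA₀ hNN)
    (ENNReal.mul_ne_top hA₁ hNN) (endpoint h₀ hs₀ hp₀) (endpoint h₁ hs₁ hp₁) hθ₀ hθ₁ hF hG
    (fun z ↦ ?_) fun z ↦ ?_).trans_eq ?_
  · rw [mixedRescale_geom_mean hf hs hp hs₀ hp₀ hs₁ hp₁ hθ₀ hθ₁ hsθ hpθ]
    exact hFf z
  · rw [mixedRescale_geom_mean hg hs hp hs₀ hp₀ hs₁ hp₁ hθ₀ hθ₁ hsθ hpθ]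
    exact hGg z
  · rw [ENNReal.mul_rpow_of_nonneg _ _ hθ, ENNReal.mul_rpow_of_nonneg _ _ hθ₀, mul_mul_mul_comm,
      ← ENNReal.rpow_add_of_nonneg _ _ hθ hθ₀, sub_add_cancel, ENNReal.rpow_one]

theorem MixedFormBound.interp {K : X × Y → X × Y → ℂ}
    (hK : BoundedMeasurable fun ω : (X × Y) × X × Y ↦ K ω.1 ω.2) {s p s₀ p₀ s₁ p₁ θ : ℝ}
    {A₀ A₁ : ℝ≥0∞} (h₀ : MixedFormBound μ ν K s₀ p₀ A₀) (h₁ : MixedFormBound μ ν K s₁ p₁ A₁)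
    (hs : 1 ≤ s) (hp : 1 ≤ p) (hs₀ : 0 < s₀) (hp₀ : 0 < p₀) (hs₁ : 0 < s₁) (hp₁ : 0 < p₁)
    (hA₀ : A₀ ≠ ∞) (hA₁ : A₁ ≠ ∞) (hθ₀ : 0 ≤ θ) (hθ₁ : θ ≤ 1)
    (hsθ : s⁻¹ = (1 - θ) / s₀ + θ / s₁) (hpθ : p⁻¹ = (1 - θ) / p₀ + θ / p₁) :
    MixedFormBound μ ν K s p (A₀ ^ (1 - θ) * A₁ ^ θ) := by
  intro F G hF hG
  have hs' : 0 < s := by linarith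
  have hp' : 0 < p := by linarith
  have perturbed (n : ℕ) : ‖kernelForm (μ.prod ν) K F G‖ₑ ≤ A₀ ^ (1 - θ) * A₁ ^ θ *
      ((mixedLp s p μ ν F + (n + 1 : ℝ≥0∞)⁻¹) * (mixedLp s p μ ν G + (n + 1 : ℝ≥0∞)⁻¹)) := by
    have h0 : (n + 1 : ℝ≥0∞)⁻¹ ≠ 0 := by simp
    have ht : (n + 1 : ℝ≥0∞)⁻¹ ≠ ∞ := by simp
    refine (h₀.interp_of_enorm_le hK h₁ hs' hp' hs₀ hp₀ hs₁ hp₁ hA₀ hA₁ hθ₀ hθ₁ hsθ hpθ hF hG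
      (hF.boundedPos_enorm_add h0 ht) (hG.boundedPos_enorm_add h0 ht) (fun _ ↦ le_self_add)
      fun _ ↦ le_self_add).trans ?_
    gcongr
    · exact mixedLp_add_const_le hF.measurable.enorm hs hp _
    · exact mixedLp_add_const_le hG.measurable.enorm hs hp _
  have tendsto_add (a : ℝ≥0∞) :
      Filter.Tendsto (fun n : ℕ ↦ a + (n + 1 : ℝ≥0∞)⁻¹) Filter.atTop (nhds a) := by
    simpa using (tendsto_const_nhds (x := a)).add
      ((Filter.tendsto_add_atTop_iff_nat 1).mpr ENNReal.tendsto_inv_nat_nhds_zero)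
  have hFt := hF.mixedLp_ne_top (μ := μ) (ν := ν) hs' hp'
  have hGt := hG.mixedLp_ne_top (μ := μ) (ν := ν) hs' hp'
  have hθ : 0 ≤ 1 - θ := sub_nonneg.mpr hθ₁
  exact ge_of_tendsto' (ENNReal.Tendsto.const_mul (ENNReal.Tendsto.mul (tendsto_add _) (.inr hGt)
    (tendsto_add _) (.inr hFt)) (.inr (by finiteness))) perturbed

end Interpolation

section FormBound

variable {X Y : Type*} [MeasurableSpace X] [MeasurableSpace Y] {μ : Measure X} {ν : Measure Y}

/-- The form of the kernel `K` is bounded by `A` on `L^p`. -/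
def FormBound (ν : Measure Y) (K : Y → Y → ℂ) (p : ℝ) (A : ℝ≥0∞) : Prop :=
  ∀ F G, BoundedMeasurable F → BoundedMeasurable G →
    ‖kernelForm ν K F G‖ₑ ≤ A * (eLpNorm' F p ν * eLpNorm' G p ν)

lemma enorm_kernelForm_le_lintegral (K : Y → Y → ℂ) (F G : Y → ℂ) :
    ‖kernelForm ν K F G‖ₑ ≤ ∫⁻ ω, ‖K ω.1 ω.2‖ₑ * (‖F ω.2‖ₑ * ‖G ω.1‖ₑ) ∂ν.prod ν :=
  (enorm_integral_le_lintegral_enorm _).trans_eq <| by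
    simp only [enorm_mul, RCLike.enorm_conj]

lemma lintegral_const_mul_mul_swap [SFinite ν] {u v : Y → ℝ≥0∞} (hu : Measurable u)
    (hv : Measurable v) (A : ℝ≥0∞) :
    ∫⁻ ω, A * (u ω.2 * v ω.1) ∂ν.prod ν = A * ((∫⁻ y, u y ∂ν) * ∫⁻ y, v y ∂ν) := by
  simp only [mul_comm (u _)]
  rw [lintegral_const_mul _ (by fun_prop), lintegral_prod_mul hv.aemeasurable hu.aemeasurable,
    mul_comm (lintegral _ v)]

lemma FormBound.of_enorm_le [SFinite ν] {K : Y → Y → ℂ} {A : ℝ≥0∞} (h : ∀ y y', ‖K y y'‖ₑ ≤ A) :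
    FormBound ν K 1 A := by
  intro F G hF hG
  calc ‖kernelForm ν K F G‖ₑ ≤ ∫⁻ ω, ‖K ω.1 ω.2‖ₑ * (‖F ω.2‖ₑ * ‖G ω.1‖ₑ) ∂ν.prod ν :=
        enorm_kernelForm_le_lintegral K F G
    _ ≤ ∫⁻ ω, A * (‖F ω.2‖ₑ * ‖G ω.1‖ₑ) ∂ν.prod ν := by
        gcongr
        exact h _ _
    _ = A * (eLpNorm' F 1 ν * eLpNorm' G 1 ν) := by
        rw [lintegral_const_mul_mul_swap hF.measurable.enorm hG.measurable.enorm]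
        simp [eLpNorm']

lemma kernelForm_const_mul (c : ℂ) (K : Y → Y → ℂ) (F G : Y → ℂ) :
    kernelForm ν (fun y y' ↦ c * K y y') F G = c * kernelForm ν K F G := by
  simp only [kernelForm, mul_assoc, integral_const_mul]

lemma FormBound.const_mul {K : Y → Y → ℂ} {p : ℝ} {A₀ A : ℝ≥0∞} (h : FormBound ν K p A₀) {c : ℂ}
    (hc : ‖c‖ₑ ≤ A) : FormBound ν (fun y y' ↦ c * K y y') p (A * A₀) := by
  intro F G hF hG
  rw [kernelForm_const_mul, enorm_mul, mul_assoc]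
  exact mul_le_mul' hc (h F G hF hG)

lemma measurePreserving_prodProdProdComm (μ : Measure X) (ν : Measure Y) [SFinite μ] [SFinite ν] :
    MeasurePreserving (fun ω : (X × X) × Y × Y ↦ ((ω.1.1, ω.2.1), ω.1.2, ω.2.2))
      ((μ.prod μ).prod (ν.prod ν)) ((μ.prod ν).prod (μ.prod ν)) :=
  have assoc := measurePreserving_prodAssoc μ μ (ν.prod ν)
  have assoc' := (MeasurePreserving.id μ).prod
    (measurePreserving_prodAssoc μ ν ν).symm
  have swap := (MeasurePreserving.id μ).prod
    ((Measure.measurePreserving_swap (μ := μ) (ν := ν)).prod (.id ν))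
  have assoc'' := (MeasurePreserving.id μ).prod (measurePreserving_prodAssoc ν μ ν)
  have assoc''' := (measurePreserving_prodAssoc μ ν (μ.prod ν)).symm
  assoc'''.comp (assoc''.comp (swap.comp (assoc'.comp assoc)))

lemma kernelForm_prod [IsFiniteMeasure μ] [IsFiniteMeasure ν] {K : X × Y → X × Y → ℂ}
    (hK : BoundedMeasurable fun ω : (X × Y) × X × Y ↦ K ω.1 ω.2) {F G : X × Y → ℂ}
    (hF : BoundedMeasurable F) (hG : BoundedMeasurable G) :
    kernelForm (μ.prod ν) K F G = ∫ ω : X × X, kernelForm ν (fun y y' ↦ K (ω.1, y) (ω.2, y'))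
      (fun y ↦ F (ω.2, y)) (fun y ↦ G (ω.1, y)) ∂μ.prod μ := by
  have hΦ := hK.mul ((hF.comp measurable_snd).mul (hG.comp measurable_fst).conjugate)
  have e := measurePreserving_prodProdProdComm μ ν
  rw [kernelForm, ← e.map_eq,
    integral_map e.aemeasurable hΦ.measurable.aestronglyMeasurable,
    integral_prod _ ((hΦ.comp e.measurable).integrable _)]
  rfl

lemma MixedFormBound.of_slice [IsFiniteMeasure μ] [IsFiniteMeasure ν] {K : X × Y → X × Y → ℂ}
    (hK : BoundedMeasurable fun ω : (X × Y) × X × Y ↦ K ω.1 ω.2) {p : ℝ} {A : ℝ≥0∞}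
    (h : ∀ x x', FormBound ν (fun y y' ↦ K (x, y) (x', y')) p A) : MixedFormBound μ ν K 1 p A := by
  intro F G hF hG
  have hFm : Measurable fun x ↦ eLpNorm' (fun y ↦ F (x, y)) p ν :=
    measurable_eLpNorm'_slice hF.measurable.enorm
  have hGm : Measurable fun x ↦ eLpNorm' (fun y ↦ G (x, y)) p ν :=
    measurable_eLpNorm'_slice hG.measurable.enorm
  calc ‖kernelForm (μ.prod ν) K F G‖ₑ
      ≤ ∫⁻ ω, A * (eLpNorm' (fun y ↦ F (ω.2, y)) p ν * eLpNorm' (fun y ↦ G (ω.1, y)) p ν)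
          ∂μ.prod μ := by
        rw [kernelForm_prod hK hF hG]
        refine (enorm_integral_le_lintegral_enorm _).trans (lintegral_mono fun ω ↦ ?_)
        exact h ω.1 ω.2 _ _ (hF.comp measurable_prodMk_left) (hG.comp measurable_prodMk_left)
    _ = A * (mixedLp 1 p μ ν F * mixedLp 1 p μ ν G) := by
        rw [lintegral_const_mul_mul_swap hFm hGm]
        simp only [mixedLp, eLpNorm'_eq_lintegral_enorm (q := (1 : ℝ)), ENNReal.rpow_one, div_one,
          enorm_eq_self]

lemma mixedLp_self [SFinite ν] {F : X × Y → ℂ} (hF : Measurable F) {p : ℝ} (hp : 0 < p) :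
    mixedLp p p μ ν F = eLpNorm' F p (μ.prod ν) := by
  simp only [mixedLp, eLpNorm', enorm_eq_self, one_div, ENNReal.rpow_inv_rpow hp.ne']
  rw [lintegral_prod _ (by fun_prop)]

end FormBound

section Modes

variable {X Y A B : Type*} [MeasurableSpace X] [MeasurableSpace Y]

/-- A family of measurable functions of modulus one, such as the characters of a group. -/
structure UnimodularFamily (e : A → X → ℂ) : Prop where
  measurable (a : A) : Measurable (e a)
  norm_eq_one (a : A) (x : X) : ‖e a x‖ = 1

/-- The coefficient `∫ F conj(e a)` of `F` along the mode `e a`. -/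
def modeCoeff (μ : Measure X) (e : A → X → ℂ) (F : X → ℂ) (a : A) : ℂ :=
  ∫ x, F x * conj (e a x) ∂μ

/-- The integral kernel of the multiplier acting on the mode `e a` by `w a`. -/
def modeKernel (e : A → X → ℂ) (w : A → ℂ) (x x' : X) : ℂ :=
  ∑' a, w a * (e a x * conj (e a x'))

/-- The products `e a ⊗ e' b` of the modes of two families. -/
abbrev prodModes (e : A → X → ℂ) (e' : B → Y → ℂ) (a : A × B) (z : X × Y) : ℂ :=
  e a.1 z.1 * e' a.2 z.2

variable {e : A → X → ℂ} {w : A → ℂ} {e' : B → Y → ℂ} {w' : B → ℂ}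

namespace UnimodularFamily

lemma boundedMeasurable (he : UnimodularFamily e) (a : A) : BoundedMeasurable (e a) :=
  ⟨he.measurable a, 1, fun x ↦ (he.norm_eq_one a x).le⟩

lemma prod (he : UnimodularFamily e) (he' : UnimodularFamily e') :
    UnimodularFamily (prodModes e e') where
  measurable a := ((he.measurable a.1).comp measurable_fst).mul
    ((he'.measurable a.2).comp measurable_snd)
  norm_eq_one a z := by rw [norm_mul, he.norm_eq_one, he'.norm_eq_one, one_mul]

lemma norm_kernel_term (he : UnimodularFamily e) (w : A → ℂ) (a : A) (x x' : X) :
    ‖w a * (e a x * conj (e a x'))‖ = ‖w a‖ := by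
  simp [he.norm_eq_one]

lemma boundedMeasurable_modeKernel [Countable A] (he : UnimodularFamily e)
    (hw : Summable fun a ↦ ‖w a‖) :
    BoundedMeasurable fun ω : X × X ↦ modeKernel e w ω.1 ω.2 := by
  refine ⟨Measurable.tsum fun a ↦ ?_, ∑' a, ‖w a‖, fun ω ↦ ?_⟩
  · have := he.measurable a
    have := (he.boundedMeasurable a).conjugate.measurable
    fun_prop
  · have summable_terms : Summable fun a ↦ ‖w a * (e a ω.1 * conj (e a ω.2))‖ := by
      simpa only [he.norm_kernel_term] using hw
    exact (norm_tsum_le_tsum_norm summable_terms).trans_eq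
      (tsum_congr fun a ↦ he.norm_kernel_term w a _ _)

lemma modeKernel_prod (he : UnimodularFamily e) (he' : UnimodularFamily e')
    (hw : Summable fun a ↦ ‖w a‖) (hw' : Summable fun b ↦ ‖w' b‖) (z z' : X × Y) :
    modeKernel (prodModes e e') (fun a ↦ w a.1 * w' a.2) z z' =
      modeKernel e w z.1 z'.1 * modeKernel e' w' z.2 z'.2 := by
  rw [modeKernel, modeKernel, modeKernel, tsum_mul_tsum_of_summable_norm
    (by simpa only [he.norm_kernel_term] using hw) (by simpa only [he'.norm_kernel_term] using hw')]
  refine tsum_congr fun a ↦ ?_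
  rw [map_mul]
  ring

lemma kernelForm_modeKernel [Countable A] {μ : Measure X} [IsFiniteMeasure μ]
    (he : UnimodularFamily e) (hw : Summable fun a ↦ ‖w a‖) {F G : X → ℂ}
    (hF : BoundedMeasurable F) (hG : BoundedMeasurable G) :
    kernelForm μ (modeKernel e w) F G =
      ∑' a, w a * (modeCoeff μ e F a * conj (modeCoeff μ e G a)) := by
  set H : X × X → ℂ := fun ω ↦ F ω.2 * conj (G ω.1)
  have hH : BoundedMeasurable H := (hF.comp measurable_snd).mul (hG.comp measurable_fst).conjugate
  set term : A → X × X → ℂ := fun a ω ↦ w a * (e a ω.1 * conj (e a ω.2)) * H ω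
  have integrable_term (a : A) : Integrable (term a) (μ.prod μ) :=
    (BoundedMeasurable.mul ⟨measurable_const.mul (((he.boundedMeasurable a).comp
      measurable_fst).mul ((he.boundedMeasurable a).comp measurable_snd).conjugate).measurable,
      ‖w a‖, fun ω ↦ (he.norm_kernel_term w a _ _).le⟩ hH).integrable _
  have integral_norm_term (a : A) :
      ∫ ω, ‖term a ω‖ ∂μ.prod μ = ‖w a‖ * ∫ ω, ‖H ω‖ ∂μ.prod μ := by
    simp only [term, norm_mul (_ * _) (H _), he.norm_kernel_term, integral_const_mul]
  have integral_term (a : A) : ∫ ω, term a ω ∂μ.prod μ =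
      w a * (modeCoeff μ e F a * conj (modeCoeff μ e G a)) := by
    rw [modeCoeff, modeCoeff, ← integral_conj, mul_comm (∫ _, _ ∂μ), ← integral_prod_mul,
      ← integral_const_mul]
    refine integral_congr_ae (.of_forall fun ω ↦ ?_)
    simp only [term, H, map_mul, conj_conj]
    ring
  calc kernelForm μ (modeKernel e w) F G = ∫ ω, ∑' a, term a ω ∂μ.prod μ := by
        simp only [term, tsum_mul_right, kernelForm, modeKernel, H]
    _ = ∑' a, ∫ ω, term a ω ∂μ.prod μ :=
        (integral_tsum_of_summable_integral_norm integrable_term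
          (by simpa only [integral_norm_term] using hw.mul_right _)).symm
    _ = _ := tsum_congr integral_term

lemma modeCoeff_add {μ : Measure X} [IsFiniteMeasure μ] (he : UnimodularFamily e) {F G : X → ℂ}
    (hF : BoundedMeasurable F) (hG : BoundedMeasurable G) (a : A) :
    modeCoeff μ e (fun x ↦ F x + G x) a = modeCoeff μ e F a + modeCoeff μ e G a := by
  have ha := (he.boundedMeasurable a).conjugate
  simp only [modeCoeff, add_mul]
  exact integral_add ((hF.mul ha).integrable μ) ((hG.mul ha).integrable μ)

end UnimodularFamily

/-- The modes `e a` are pairwise orthogonal in `L²(μ)`. -/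
def ModeOrthogonal (μ : Measure X) (e : A → X → ℂ) : Prop :=
  Pairwise fun a b ↦ ∫ x, e a x * conj (e b x) ∂μ = 0

lemma ModeOrthogonal.prod {μ : Measure X} {ν : Measure Y} [SFinite μ] [SFinite ν]
    (h : ModeOrthogonal μ e) (h' : ModeOrthogonal ν e') :
    ModeOrthogonal (μ.prod ν) (prodModes e e') := by
  intro a b hab
  have factor (z : X × Y) : e a.1 z.1 * e' a.2 z.2 * conj (e b.1 z.1 * e' b.2 z.2) =
      e a.1 z.1 * conj (e b.1 z.1) * (e' a.2 z.2 * conj (e' b.2 z.2)) := by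
    rw [map_mul]
    ring
  simp only [factor]
  rw [integral_prod_mul (fun x ↦ e a.1 x * conj (e b.1 x)) fun y ↦ e' a.2 y * conj (e' b.2 y)]
  by_cases h₁ : a.1 = b.1
  · rw [h' fun h₂ ↦ hab (Prod.ext h₁ h₂), mul_zero]
  · rw [h h₁, zero_mul]

lemma BoundedMeasurable.memLp {μ : Measure X} [IsFiniteMeasure μ] {F : X → ℂ}
    (hF : BoundedMeasurable F) (p : ℝ≥0∞) : MemLp F p μ := by
  obtain ⟨M, hM⟩ := hF.exists_bound
  exact .of_bound hF.measurable.aestronglyMeasurable M (.of_forall hM)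

lemma BoundedMeasurable.enorm_integral_mul_conj_self {μ : Measure X} [IsFiniteMeasure μ]
    {F : X → ℂ} (hF : BoundedMeasurable F) :
    ‖∫ x, F x * conj (F x) ∂μ‖ₑ = eLpNorm' F 2 μ ^ 2 := by
  have mul_conj_eq (x : X) : F x * conj (F x) = ((‖F x‖ ^ 2 : ℝ) : ℂ) := by
    rw [mul_conj, normSq_eq_norm_sq]
  have integrable_sq : Integrable (fun x ↦ ‖F x‖ ^ 2) μ :=
    (memLp_two_iff_integrable_sq_norm hF.measurable.aestronglyMeasurable).mp (hF.memLp 2)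
  simp only [mul_conj_eq]
  rw [integral_complex_ofReal, ← ofReal_norm, norm_real, Real.norm_of_nonneg (by positivity),
    ofReal_integral_eq_lintegral_ofReal integrable_sq (.of_forall fun x ↦ by positivity), eLpNorm',
    ← ENNReal.rpow_two, ← ENNReal.rpow_mul]
  norm_num [ENNReal.ofReal_pow]

lemma UnimodularFamily.orthonormal {μ : Measure X} [IsProbabilityMeasure μ]
    (he : UnimodularFamily e) (ho : ModeOrthogonal μ e) :
    Orthonormal ℂ fun a ↦ ((he.boundedMeasurable a).memLp (μ := μ) 2).toLp := by
  classical
  rw [orthonormal_iff_ite]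
  intro a b
  rw [L2.inner_def]
  have : (fun x ↦ inner ℂ (((he.boundedMeasurable a).memLp (μ := μ) 2).toLp _ x)
      (((he.boundedMeasurable b).memLp (μ := μ) 2).toLp _ x)) =ᵐ[μ]
        fun x ↦ e b x * conj (e a x) := by
    filter_upwards [((he.boundedMeasurable a).memLp (μ := μ) 2).coeFn_toLp,
      ((he.boundedMeasurable b).memLp (μ := μ) 2).coeFn_toLp] with x ha hb
    rw [ha, hb]
    rfl
  rw [integral_congr_ae this]
  split_ifs with h
  · simp [h, mul_conj, normSq_eq_norm_sq, he.norm_eq_one]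
  · exact ho (Ne.symm h)

lemma UnimodularFamily.tsum_enorm_modeCoeff_sq_le {μ : Measure X} [IsProbabilityMeasure μ]
    (he : UnimodularFamily e) (ho : ModeOrthogonal μ e) {F : X → ℂ} (hF : BoundedMeasurable F) :
    ∑' a, ‖modeCoeff μ e F a‖ₑ ^ 2 ≤ eLpNorm' F 2 μ ^ 2 := by
  set E := fun a ↦ ((he.boundedMeasurable a).memLp (μ := μ) 2).toLp
  set f := (hF.memLp (μ := μ) 2).toLp
  have inner_eq (a : A) : inner ℂ (E a) f = modeCoeff μ e F a := by
    rw [L2.inner_def]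
    refine integral_congr_ae ?_
    filter_upwards [((he.boundedMeasurable a).memLp (μ := μ) 2).coeFn_toLp,
      (hF.memLp (μ := μ) 2).coeFn_toLp] with x ha hf
    rw [ha, hf]
    rfl
  have norm_f : ‖f‖ₑ = eLpNorm' F 2 μ := by
    rw [Lp.enorm_toLp, eLpNorm_eq_eLpNorm' two_ne_zero ENNReal.ofNat_ne_top,
      ENNReal.toReal_ofNat]
  have ho' : Orthonormal ℂ E := he.orthonormal ho
  calc ∑' a, ‖modeCoeff μ e F a‖ₑ ^ 2 = ENNReal.ofReal (∑' a, ‖inner ℂ (E a) f‖ ^ 2) := by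
        rw [ENNReal.ofReal_tsum_of_nonneg (fun _ ↦ by positivity) (ho'.inner_products_summable f)]
        simp only [inner_eq, ENNReal.ofReal_pow (norm_nonneg _), ofReal_norm]
    _ ≤ ENNReal.ofReal (‖f‖ ^ 2) := ENNReal.ofReal_le_ofReal (ho'.tsum_inner_products_le f)
    _ = eLpNorm' F 2 μ ^ 2 := by rw [ENNReal.ofReal_pow (norm_nonneg _), ofReal_norm, norm_f]

lemma tsum_mul_le_sqrt_mul_sqrt (f g : A → ℝ≥0∞) :
    ∑' a, f a * g a ≤ (∑' a, f a ^ 2) ^ (1 / 2 : ℝ) * (∑' a, g a ^ 2) ^ (1 / 2 : ℝ) := by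
  simp only [← ENNReal.rpow_two]
  refine ENNReal.summable.tsum_le_of_sum_le fun s ↦ ?_
  refine (ENNReal.inner_le_Lp_mul_Lq s f g .two_two).trans ?_
  gcongr <;> exact ENNReal.sum_le_tsum s

lemma UnimodularFamily.formBound_two [Countable A] {μ : Measure X} [IsProbabilityMeasure μ]
    (he : UnimodularFamily e) (ho : ModeOrthogonal μ e) (hw : Summable fun a ↦ ‖w a‖)
    (hw₁ : ∀ a, ‖w a‖ ≤ 1) : FormBound μ (modeKernel e w) 2 1 := by
  intro F G hF hG
  have sqrt_sq (a : ℝ≥0∞) : (a ^ 2) ^ (1 / 2 : ℝ) = a := by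
    rw [← ENNReal.rpow_two, ← ENNReal.rpow_mul]
    norm_num
  rw [he.kernelForm_modeKernel hw hF hG, one_mul]
  calc ‖∑' a, w a * (modeCoeff μ e F a * conj (modeCoeff μ e G a))‖ₑ
      ≤ ∑' a, ‖modeCoeff μ e F a‖ₑ * ‖modeCoeff μ e G a‖ₑ := by
        refine enorm_tsum_le_tsum_enorm.trans (ENNReal.tsum_le_tsum fun a ↦ ?_)
        rw [enorm_mul, enorm_mul, RCLike.enorm_conj]
        refine mul_le_of_le_one_left' ?_
        rw [← ofReal_norm]
        exact ENNReal.ofReal_le_one.mpr (hw₁ a)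
    _ ≤ (∑' a, ‖modeCoeff μ e F a‖ₑ ^ 2) ^ (1 / 2 : ℝ) *
          (∑' a, ‖modeCoeff μ e G a‖ₑ ^ 2) ^ (1 / 2 : ℝ) := tsum_mul_le_sqrt_mul_sqrt _ _
    _ ≤ (eLpNorm' F 2 μ ^ 2) ^ (1 / 2 : ℝ) * (eLpNorm' G 2 μ ^ 2) ^ (1 / 2 : ℝ) := by
        gcongr <;> exact he.tsum_enorm_modeCoeff_sq_le ho ‹_›
    _ = eLpNorm' F 2 μ * eLpNorm' G 2 μ := by rw [sqrt_sq, sqrt_sq]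

end Modes

section ProductKernel

variable {X Y A B : Type*} [MeasurableSpace X] [MeasurableSpace Y] [Countable A] [Countable B]
  {μ : Measure X} {ν : Measure Y} [IsProbabilityMeasure μ] [IsProbabilityMeasure ν]
  {e : A → X → ℂ} {w : A → ℂ} {e' : B → Y → ℂ} {w' : B → ℂ}

lemma inv_eq_interp_one_two {s : ℝ} : s⁻¹ = (1 - (2 - 2 / s)) / 1 + (2 - 2 / s) / 2 := by ring

lemma two_sub_two_div_mem_Icc {s : ℝ} (h₁ : 1 ≤ s) (h₂ : s ≤ 2) :
    2 - 2 / s ∈ Set.Icc (0 : ℝ) 1 := by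
  have : 2 / s ≤ 2 := (div_le_iff₀ (by positivity)).mpr (by linarith)
  have : 1 ≤ 2 / s := (le_div_iff₀ (by positivity)).mpr (by linarith)
  exact ⟨by linarith, by linarith⟩

lemma MixedFormBound.interp_one_left {K : X × Y → X × Y → ℂ}
    (hK : BoundedMeasurable fun ω : (X × Y) × X × Y ↦ K ω.1 ω.2) {Cx Cy : ℝ≥0∞} (hCx : Cx ≠ ∞)
    (hCy : Cy ≠ ∞) (h₁₁ : MixedFormBound μ ν K 1 1 (Cx * Cy)) (h₁₂ : MixedFormBound μ ν K 1 2 Cx)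
    {a : ℝ} (ha₁ : 1 ≤ a) (ha₂ : a ≤ 2) :
    MixedFormBound μ ν K 1 a (Cx * Cy ^ (2 / a - 1)) := by
  obtain ⟨hθ₀, hθ₁⟩ := two_sub_two_div_mem_Icc ha₁ ha₂
  have h := h₁₁.interp hK h₁₂ le_rfl ha₁ one_pos one_pos one_pos two_pos
    (ENNReal.mul_ne_top hCx hCy) hCx hθ₀ hθ₁ (by ring) inv_eq_interp_one_two
  rwa [ENNReal.mul_rpow_of_nonneg _ _ (by linarith), mul_right_comm,
    ← ENNReal.rpow_add_of_nonneg _ _ (by linarith) hθ₀, sub_add_cancel, ENNReal.rpow_one,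
    show 1 - (2 - 2 / a) = 2 / a - 1 by ring] at h

/- The point `(1 / s, 1 / p)` of the triangle with vertices `(1, 1)`, `(1, 1 / 2)`,
`(1 / 2, 1 / 2)` is reached along the segment from `(1 / 2, 1 / 2)` to a point `(1, 1 / a)`. -/
lemma MixedFormBound.interp_triangle {K : X × Y → X × Y → ℂ}
    (hK : BoundedMeasurable fun ω : (X × Y) × X × Y ↦ K ω.1 ω.2) {Cx Cy : ℝ≥0∞} (hCx : Cx ≠ ∞)
    (hCy : Cy ≠ ∞) (h₁₁ : MixedFormBound μ ν K 1 1 (Cx * Cy)) (h₁₂ : MixedFormBound μ ν K 1 2 Cx)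
    (h₂₂ : MixedFormBound μ ν K 2 2 1) {s p : ℝ} (hs : 1 ≤ s) (hsp : s ≤ p) (hp : p ≤ 2) :
    MixedFormBound μ ν K s p (Cx ^ (2 / s - 1) * Cy ^ (2 / p - 1)) := by
  rcases (hsp.trans hp).eq_or_lt with rfl | hs₂
  · obtain rfl : p = 2 := le_antisymm hp hsp
    simpa using h₂₂
  have hp_inv : 2⁻¹ ≤ p⁻¹ := inv_anti₀ (by linarith) hp
  have hps_inv : p⁻¹ ≤ s⁻¹ := inv_anti₀ (by linarith) hsp
  have hs_inv : 2⁻¹ < s⁻¹ := inv_strictAnti₀ (by linarith) hs₂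
  set a : ℝ := (2 / s - 1) / (p⁻¹ + s⁻¹ - 1)
  have denom_pos : 0 < p⁻¹ + s⁻¹ - 1 := by linarith
  have slope_pos : 0 < 2 / s - 1 := by rw [div_eq_mul_inv]; linarith
  have ha₁ : 1 ≤ a := (one_le_div denom_pos).mpr (by rw [div_eq_mul_inv]; linarith)
  have ha₂ : a ≤ 2 := (div_le_iff₀ denom_pos).mpr (by rw [div_eq_mul_inv]; linarith)
  have slope_div_a : (2 / s - 1) / a = p⁻¹ + s⁻¹ - 1 := div_div_cancel₀ slope_pos.ne'
  obtain ⟨hθ₀, hθ₁⟩ := two_sub_two_div_mem_Icc hs hs₂.le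
  have one_sub_θ : 1 - (2 - 2 / s) = 2 / s - 1 := by ring
  have h := (h₁₁.interp_one_left hK hCx hCy h₁₂ ha₁ ha₂).interp hK h₂₂ hs (hs.trans hsp) one_pos
    (by linarith) two_pos two_pos (ENNReal.mul_ne_top hCx
      (ENNReal.rpow_ne_top_of_nonneg (by linarith [(two_sub_two_div_mem_Icc ha₁ ha₂).2]) hCy))
    ENNReal.one_ne_top hθ₀ hθ₁ inv_eq_interp_one_two (by rw [one_sub_θ, slope_div_a]; ring)
  rwa [ENNReal.one_rpow, mul_one, one_sub_θ, ENNReal.mul_rpow_of_nonneg _ _ slope_pos.le,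
    ← ENNReal.rpow_mul, show (2 / a - 1) * (2 / s - 1) = 2 / p - 1 by
      linear_combination 2 * slope_div_a] at h

theorem UnimodularFamily.mixedFormBound_prod (he : UnimodularFamily e)
    (ho : ModeOrthogonal μ e) (hw : Summable fun a ↦ ‖w a‖) (hw₁ : ∀ a, ‖w a‖ ≤ 1)
    (he' : UnimodularFamily e') (ho' : ModeOrthogonal ν e') (hw' : Summable fun b ↦ ‖w' b‖)
    (hw'₁ : ∀ b, ‖w' b‖ ≤ 1) {Cx Cy : ℝ≥0∞} (hCx : Cx ≠ ∞) (hCy : Cy ≠ ∞)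
    (hx : ∀ x x', ‖modeKernel e w x x'‖ₑ ≤ Cx) (hy : ∀ y y', ‖modeKernel e' w' y y'‖ₑ ≤ Cy)
    {s p : ℝ} (hs : 1 ≤ s) (hsp : s ≤ p) (hp : p ≤ 2) :
    MixedFormBound μ ν (modeKernel (prodModes e e') fun a ↦ w a.1 * w' a.2) s p
      (Cx ^ (2 / s - 1) * Cy ^ (2 / p - 1)) := by
  have summable_prod : Summable fun a : A × B ↦ ‖w a.1 * w' a.2‖ := by
    simpa only [norm_mul] using hw.mul_of_nonneg hw' (fun _ ↦ norm_nonneg _) fun _ ↦ norm_nonneg _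
  have hK := (he.prod he').boundedMeasurable_modeKernel summable_prod
  have slice (x x' : X) :
      (fun y y' ↦ modeKernel (prodModes e e') (fun a ↦ w a.1 * w' a.2) (x, y) (x', y')) =
        fun y y' ↦ modeKernel e w x x' * modeKernel e' w' y y' :=
    funext₂ fun y y' ↦ he.modeKernel_prod he' hw hw' _ _
  refine MixedFormBound.interp_triangle hK hCx hCy (.of_slice hK fun x x' ↦ ?_)
    (.of_slice hK fun x x' ↦ ?_) (fun F G hF hG ↦ ?_) hs hsp hp
  · rw [slice]
    exact (FormBound.of_enorm_le hy).const_mul (hx x x')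
  · rw [slice, ← mul_one Cx]
    exact (he'.formBound_two ho' hw' hw'₁).const_mul (hx x x')
  · rw [mixedLp_self hF.measurable two_pos, mixedLp_self hG.measurable two_pos]
    refine (he.prod he').formBound_two (ho.prod ho') summable_prod (fun a ↦ ?_) F G hF hG
    rw [norm_mul]
    exact mul_le_one₀ (hw₁ _) (norm_nonneg _) (hw'₁ _)

end ProductKernel

section Dispersive

variable {X Y A B : Type*} [MeasurableSpace X] [MeasurableSpace Y]

/-- An orthogonal family of unimodular modes `e a`, evolving with frequencies `l a ≥ 0`, whose
propagator, cut off at frequency `2 ^ n`, disperses like `|τ| ^ (-m / 2)` for times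
`|τ| ≤ 2 ^ (-n)`. -/
structure DispersiveSystem (μ : Measure X) (e : A → X → ℂ) (l : A → ℝ) (m : ℕ) : Prop
    extends UnimodularFamily e where
  orthogonal : ModeOrthogonal μ e
  nonneg (a : A) : 0 ≤ l a
  summable (n : ℕ) (τ : ℝ) : Summable fun a ↦ ‖gaussianPhase n τ (l a)‖
  exists_dispersive_bound : ∃ C : ℝ, 0 < C ∧ ∀ (n : ℕ) (τ : ℝ), 0 < |τ| → |τ| ≤ (2 ^ n)⁻¹ →
    ∀ x x', ‖modeKernel e (fun a ↦ gaussianPhase n τ (l a)) x x'‖ ≤ C * |τ| ^ (-(m / 2) : ℝ)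

lemma norm_gaussianPhase_le_one (n : ℕ) (τ : ℝ) {l : ℝ} (hl : 0 ≤ l) :
    ‖gaussianPhase n τ l‖ ≤ 1 := by
  rw [norm_gaussianPhase, Real.exp_le_one_iff]
  exact div_nonpos_of_nonpos_of_nonneg (by nlinarith [Real.pi_pos]) (by positivity)

lemma DispersiveSystem.exists_mixedFormBound [Countable A] [Countable B] {μ : Measure X}
    {ν : Measure Y} [IsProbabilityMeasure μ] [IsProbabilityMeasure ν] {e : A → X → ℂ} {l : A → ℝ}
    {m : ℕ} {e' : B → Y → ℂ} {l' : B → ℝ} {k : ℕ} (h : DispersiveSystem μ e l m)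
    (h' : DispersiveSystem ν e' l' k) {s p : ℝ} (hs : 1 ≤ s) (hsp : s ≤ p) (hp : p ≤ 2) :
    ∃ C : ℝ≥0∞, C ≠ ∞ ∧ ∀ (n : ℕ) (τ : ℝ), 0 < |τ| → |τ| ≤ (2 ^ n)⁻¹ →
      MixedFormBound μ ν
        (modeKernel (prodModes e e') fun a ↦ gaussianPhase n τ (l a.1 + l' a.2)) s p
        (C * ENNReal.ofReal |τ| ^ (-(m * (s⁻¹ - 1 / 2) + k * (p⁻¹ - 1 / 2)))) := by
  obtain ⟨C, hC, hbound⟩ := h.exists_dispersive_bound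
  obtain ⟨C', hC', hbound'⟩ := h'.exists_dispersive_bound
  have hs' : 0 ≤ 2 / s - 1 := by linarith [(two_sub_two_div_mem_Icc hs (hsp.trans hp)).2]
  have hp' : 0 ≤ 2 / p - 1 := by linarith [(two_sub_two_div_mem_Icc (hs.trans hsp) hp).2]
  refine ⟨ENNReal.ofReal C ^ (2 / s - 1) * ENNReal.ofReal C' ^ (2 / p - 1), by finiteness,
    fun n τ hτ hτn ↦ ?_⟩
  have hx (x x' : X) : ‖modeKernel e (fun a ↦ gaussianPhase n τ (l a)) x x'‖ₑ ≤
      ENNReal.ofReal C * ENNReal.ofReal |τ| ^ (-(m / 2) : ℝ) := by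
    rw [ENNReal.ofReal_rpow_of_pos hτ, ← ENNReal.ofReal_mul hC.le, ← ofReal_norm]
    exact ENNReal.ofReal_le_ofReal (hbound n τ hτ hτn x x')
  have hy (y y' : Y) : ‖modeKernel e' (fun b ↦ gaussianPhase n τ (l' b)) y y'‖ₑ ≤
      ENNReal.ofReal C' * ENNReal.ofReal |τ| ^ (-(k / 2) : ℝ) := by
    rw [ENNReal.ofReal_rpow_of_pos hτ, ← ENNReal.ofReal_mul hC'.le, ← ofReal_norm]
    exact ENNReal.ofReal_le_ofReal (hbound' n τ hτ hτn y y')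
  have hτ0 : ENNReal.ofReal |τ| ≠ 0 := by simpa using abs_pos.mp hτ
  have power_ne_top (x : ℝ) : ENNReal.ofReal |τ| ^ x ≠ ∞ := by simp [hτ0]
  have hform := h.mixedFormBound_prod h.orthogonal (h.summable n τ)
    (fun a ↦ norm_gaussianPhase_le_one n τ (h.nonneg a)) h'.toUnimodularFamily h'.orthogonal
    (h'.summable n τ) (fun b ↦ norm_gaussianPhase_le_one n τ (h'.nonneg b))
    (ENNReal.mul_ne_top ENNReal.ofReal_ne_top (power_ne_top _))
    (ENNReal.mul_ne_top ENNReal.ofReal_ne_top (power_ne_top _)) hx hy hs hsp hp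
  rw [ENNReal.mul_rpow_of_nonneg _ _ hs', ENNReal.mul_rpow_of_nonneg _ _ hp', mul_mul_mul_comm,
    ← ENNReal.rpow_mul, ← ENNReal.rpow_mul, ← ENNReal.rpow_add _ _ hτ0 ENNReal.ofReal_ne_top]
    at hform
  convert hform using 2
  · simp only [gaussianPhase_add]
  · congr 2
    ring

end Dispersive

section HardyLittlewoodSobolev

lemma lintegral_comp_abs (f : ℝ → ℝ≥0∞) : ∫⁻ u, f |u| = 2 * ∫⁻ u in Set.Ioi 0, f u := by
  have positive : ∫⁻ u in Set.Ioi 0, f |u| = ∫⁻ u in Set.Ioi 0, f u :=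
    setLIntegral_congr_fun measurableSet_Ioi fun u hu ↦ by rw [abs_of_pos hu]
  have negative : ∫⁻ u in Set.Iio 0, f |u| = ∫⁻ u in Set.Ioi 0, f |u| := by
    rw [← lintegral_indicator measurableSet_Iio, ← lintegral_indicator measurableSet_Ioi,
      ← lintegral_neg_eq_self]
    congr with u
    simp [Set.indicator, abs_neg]
  rw [← lintegral_add_compl _ measurableSet_Ioi, Set.compl_Ioi,
    setLIntegral_congr Iio_ae_eq_Iic.symm, negative, positive, two_mul]

lemma setLIntegral_comp_abs (f : ℝ → ℝ≥0∞) {s : Set ℝ} (hs : MeasurableSet s) :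
    ∫⁻ u in {u | |u| ∈ s}, f |u| = 2 * ∫⁻ u in Set.Ioi 0 ∩ s, f u := by
  have hs' : MeasurableSet {u : ℝ | |u| ∈ s} := hs.preimage measurable_abs
  rw [← lintegral_indicator hs', Set.inter_comm, ← Measure.restrict_restrict hs,
    ← lintegral_indicator hs, ← lintegral_comp_abs]
  rfl

lemma setLIntegral_abs_rpow_neg {σ ρ : ℝ} (hσ : σ < 1) (hρ : 0 < ρ) :
    ∫⁻ u in {u : ℝ | |u| ∈ Set.Iic ρ}, ENNReal.ofReal |u| ^ (-σ) =
      2 * ENNReal.ofReal (ρ ^ (1 - σ) / (1 - σ)) := by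
  have integrable : IntegrableOn (fun u : ℝ ↦ u ^ (-σ)) (Set.Ioc 0 ρ) :=
    (intervalIntegrable_iff_integrableOn_Ioc_of_le hρ.le).mp
      (intervalIntegral.intervalIntegrable_rpow' (by linarith))
  rw [setLIntegral_comp_abs (fun u ↦ ENNReal.ofReal u ^ (-σ)) measurableSet_Iic,
    Set.Ioi_inter_Iic, setLIntegral_congr_fun measurableSet_Ioc
      fun u hu ↦ ENNReal.ofReal_rpow_of_pos hu.1,
    ← ofReal_integral_eq_lintegral_ofReal integrable
      ((ae_restrict_mem measurableSet_Ioc).mono fun u hu ↦ Real.rpow_nonneg hu.1.le _),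
    ← intervalIntegral.integral_of_le hρ.le, integral_rpow (.inl (by linarith)),
    Real.zero_rpow (by linarith), sub_zero, neg_add_eq_sub]

lemma setLIntegral_abs_rpow_neg_two {ρ : ℝ} (hρ : 0 < ρ) :
    ∫⁻ u in {u : ℝ | |u| ∈ Set.Ioi ρ}, ENNReal.ofReal |u| ^ (-2 : ℝ) =
      2 * (ENNReal.ofReal ρ)⁻¹ := by
  rw [setLIntegral_comp_abs (fun u ↦ ENNReal.ofReal u ^ (-2 : ℝ)) measurableSet_Ioi,
    Set.Ioi_inter_Ioi, sup_of_le_right hρ.le, setLIntegral_congr_fun measurableSet_Ioi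
      fun u hu ↦ ENNReal.ofReal_rpow_of_pos (hρ.trans hu),
    ← ofReal_integral_eq_lintegral_ofReal (integrableOn_Ioi_rpow_of_lt (by norm_num) hρ)
      ((ae_restrict_mem measurableSet_Ioi).mono fun u hu ↦ Real.rpow_nonneg (hρ.trans hu).le _),
    integral_Ioi_rpow_of_lt (by norm_num) hρ, ← ENNReal.ofReal_inv_of_pos hρ]
  norm_num [Real.rpow_neg_one]

variable {σ : ℝ}

lemma holderConjugate_hls (h₀ : 0 < σ) (h₁ : σ < 1) : (2 / (2 - σ)).HolderConjugate (2 / σ) := by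
  rw [Real.holderConjugate_iff, lt_div_iff₀ (by linarith), inv_div, inv_div]
  exact ⟨by linarith, by ring⟩

lemma lintegral_mul_abs_rpow_le (h₀ : 0 < σ) (h₁ : σ < 1) {ψ : ℝ → ℝ≥0∞} (hψ : Measurable ψ)
    {b : ℝ≥0∞} (hb : ∀ u, ψ u ≤ b) {ρ : ℝ} (hρ : 0 < ρ) :
    ∫⁻ u, ψ u * ENNReal.ofReal |u| ^ (-σ) ≤ b * (2 * ENNReal.ofReal (ρ ^ (1 - σ) / (1 - σ))) +
      eLpNorm' ψ (2 / (2 - σ)) volume * (2 * (ENNReal.ofReal ρ)⁻¹) ^ (σ / 2) := by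
  have near_measurable : MeasurableSet {u : ℝ | |u| ∈ Set.Iic ρ} :=
    measurableSet_Iic.preimage measurable_abs
  rw [← lintegral_add_compl _ near_measurable,
    show {u : ℝ | |u| ∈ Set.Iic ρ}ᶜ = {u | |u| ∈ Set.Ioi ρ} by ext; simp]
  gcongr ?_ + ?_
  · rw [← setLIntegral_abs_rpow_neg h₁ hρ, ← lintegral_const_mul _ (by fun_prop)]
    gcongr
    exact hb _
  · refine (ENNReal.lintegral_mul_le_Lp_mul_Lq _ (holderConjugate_hls h₀ h₁) hψ.aemeasurable
      (by fun_prop)).trans (mul_le_mul' ?_ ?_)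
    · have : 0 < 2 - σ := by linarith
      exact ENNReal.rpow_le_rpow (setLIntegral_le_lintegral _ _) (by positivity)
    · simp only [← ENNReal.rpow_mul, one_div_div]
      rw [neg_mul, mul_div_cancel₀ _ h₀.ne', setLIntegral_abs_rpow_neg_two hρ]

/- The radius `ρ` with `b ρ ^ (1 - σ) = S ρ ^ (-σ / 2)` balances the near and far contributions. -/
lemma exists_lintegral_mul_abs_rpow_le (h₀ : 0 < σ) (h₁ : σ < 1) :
    ∃ C : ℝ≥0∞, C ≠ ∞ ∧ ∀ {ψ : ℝ → ℝ≥0∞} {b S : ℝ≥0∞}, Measurable ψ → (∀ u, ψ u ≤ b) →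
      b ≠ 0 → b ≠ ∞ → eLpNorm' ψ (2 / (2 - σ)) volume ≤ S → S ≠ 0 → S ≠ ∞ →
      ∫⁻ u, ψ u * ENNReal.ofReal |u| ^ (-σ) ≤ C * (b * (S / b) ^ (2 - 2 / (2 - σ))) := by
  have hσ : 0 < 2 - σ := by linarith
  set P := 2 / (2 - σ) with hP
  refine ⟨2 * ENNReal.ofReal (1 - σ)⁻¹ + 2 ^ (σ / 2), by finiteness,
    fun {ψ b S} hψ hb hb0 hbt hS hS0 hSt ↦ ?_⟩
  set R := S / b
  have hR0 : R ≠ 0 := ENNReal.div_ne_zero.mpr ⟨hS0, hbt⟩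
  have hRt : R ≠ ∞ := ENNReal.div_ne_top hSt hb0
  have hRP : R ^ P ≠ 0 ∧ R ^ P ≠ ∞ := by simp [hR0, hRt]
  have hρ : ENNReal.ofReal (R ^ P).toReal = R ^ P := ENNReal.ofReal_toReal hRP.2
  have hρ0 : 0 < (R ^ P).toReal := ENNReal.toReal_pos hRP.1 hRP.2
  have near_exponent : P * (1 - σ) = 2 - P := by rw [hP]; field_simp; ring
  have far_exponent : P * (σ / 2) = P - 1 := by rw [hP]; field_simp; ring
  calc ∫⁻ u, ψ u * ENNReal.ofReal |u| ^ (-σ)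
      ≤ b * (2 * ENNReal.ofReal ((R ^ P).toReal ^ (1 - σ) / (1 - σ))) +
          eLpNorm' ψ P volume * (2 * (ENNReal.ofReal (R ^ P).toReal)⁻¹) ^ (σ / 2) :=
        lintegral_mul_abs_rpow_le h₀ h₁ hψ hb hρ0
    _ = b * (2 * (R ^ (2 - P) * ENNReal.ofReal (1 - σ)⁻¹)) +
          eLpNorm' ψ P volume * (2 ^ (σ / 2) * R ^ (1 - P)) := by
        rw [hρ, div_eq_mul_inv, ENNReal.ofReal_mul (by positivity),
          ← ENNReal.ofReal_rpow_of_pos hρ0, hρ, ← ENNReal.rpow_mul, near_exponent,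
          ENNReal.mul_rpow_of_nonneg _ _ (by positivity), ENNReal.inv_rpow, ← ENNReal.rpow_mul,
          ← ENNReal.rpow_neg, far_exponent, neg_sub]
    _ ≤ b * (2 * (R ^ (2 - P) * ENNReal.ofReal (1 - σ)⁻¹)) +
          b * R * (2 ^ (σ / 2) * R ^ (1 - P)) := by
        gcongr
        rwa [ENNReal.mul_div_cancel hb0 hbt]
    _ = _ := by
        rw [show 2 - P = 1 - P + 1 by ring, ENNReal.rpow_add _ _ hR0 hRt, ENNReal.rpow_one]
        ring

lemma lintegral_prod_le_two_mul_of_symm {μ : Measure ℝ} [SFinite μ] {f : ℝ × ℝ → ℝ≥0∞}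
    (hf : ∀ ω, f ω.swap = f ω) {φ : ℝ → ℝ≥0∞} (hφ : Measurable φ) :
    ∫⁻ ω, f ω ∂μ.prod μ ≤ 2 * ∫⁻ ω in {ω | φ ω.2 ≤ φ ω.1}, f ω ∂μ.prod μ := by
  have hD : MeasurableSet {ω : ℝ × ℝ | φ ω.2 ≤ φ ω.1} :=
    measurableSet_le (by fun_prop) (by fun_prop)
  have swap : ∫⁻ ω in {ω | φ ω.1 ≤ φ ω.2}, f ω ∂μ.prod μ =
      ∫⁻ ω in {ω | φ ω.2 ≤ φ ω.1}, f ω ∂μ.prod μ := by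
    have := (Measure.measurePreserving_swap (μ := μ) (ν := μ)).setLIntegral_comp_preimage_emb
      MeasurableEquiv.prodComm.measurableEmbedding f {ω | φ ω.1 ≤ φ ω.2}
    simpa only [hf, Set.preimage_ofPred_eq, Prod.fst_swap, Prod.snd_swap] using this.symm
  rw [← lintegral_add_compl _ hD, two_mul]
  refine add_le_add_right (le_of_le_of_eq ?_ swap) _
  exact lintegral_mono_set fun ω (hω : ¬ φ ω.2 ≤ φ ω.1) ↦ (not_le.mp hω).le

lemma rpow_interp_eq {b S : ℝ≥0∞} (hb0 : b ≠ 0) (hbt : b ≠ ∞) (P : ℝ) (hP : P ≤ 2) :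
    b * (b * (S / b) ^ (2 - P)) = b ^ P * S ^ (2 - P) := by
  rw [ENNReal.div_rpow_of_nonneg _ _ (by linarith), div_eq_mul_inv, ← ENNReal.rpow_neg, neg_sub,
    ← mul_assoc, ← sq, mul_left_comm, ← ENNReal.rpow_two, ← ENNReal.rpow_add _ _ hb0 hbt,
    add_sub_cancel, mul_comm]

lemma exists_mul_lintegral_sublevel_le (h₀ : 0 < σ) (h₁ : σ < 1) :
    ∃ C : ℝ≥0∞, C ≠ ∞ ∧ ∀ {φ : ℝ → ℝ≥0∞} {S : ℝ≥0∞}, Measurable φ →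
      eLpNorm' φ (2 / (2 - σ)) volume ≤ S → S ≠ ∞ → ∀ s, φ s ≠ ∞ → (S = 0 → φ s = 0) →
      φ s * ∫⁻ t, {t | φ t ≤ φ s}.indicator φ t * ENNReal.ofReal |s - t| ^ (-σ) ≤
        C * (φ s ^ (2 / (2 - σ)) * S ^ (2 - 2 / (2 - σ))) := by
  obtain ⟨C, hC, fractional_le⟩ := exists_lintegral_mul_abs_rpow_le h₀ h₁
  have hσ : 0 < 2 - σ := by linarith
  have hP2 : 2 / (2 - σ) ≤ 2 := by rw [div_le_iff₀ hσ]; linarith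
  refine ⟨C, hC, fun {φ S} hφ hS hSt s hst hs0 ↦ ?_⟩
  rcases eq_or_ne (φ s) 0 with hs | hs
  · simp [hs]
  set ψ : ℝ → ℝ≥0∞ := {t | φ t ≤ φ s}.indicator φ
  have hψ : Measurable ψ := hφ.indicator (measurableSet_le hφ measurable_const)
  have norm_ψ : eLpNorm' (fun u ↦ ψ (s - u)) (2 / (2 - σ)) volume ≤ S := by
    rw [eLpNorm', lintegral_sub_left_eq_self (fun t ↦ ‖ψ t‖ₑ ^ (2 / (2 - σ)))]
    exact (eLpNorm'_mono_enorm (by positivity) (Set.indicator_le_self _ _)).trans hS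
  rw [← lintegral_sub_left_eq_self _ s, ← rpow_interp_eq hs hst _ hP2, mul_left_comm C]
  simp only [sub_sub_cancel]
  gcongr
  exact fractional_le (by fun_prop)
    (fun u ↦ Set.indicator_apply_le' (fun h ↦ h) fun _ ↦ zero_le) hs hst norm_ψ (mt hs0 hs) hSt

theorem exists_hardyLittlewoodSobolev (h₀ : 0 < σ) (h₁ : σ < 1) :
    ∃ C : ℝ≥0∞, C ≠ ∞ ∧ ∀ φ : ℝ → ℝ≥0∞, Measurable φ →
      ∫⁻ ω, ENNReal.ofReal |ω.1 - ω.2| ^ (-σ) * (φ ω.2 * φ ω.1) ∂volume.prod volume ≤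
        C * eLpNorm' φ (2 / (2 - σ)) volume ^ (2 : ℝ) := by
  obtain ⟨C, hC, sublevel_le⟩ := exists_mul_lintegral_sublevel_le h₀ h₁
  have hσ : 0 < 2 - σ := by linarith
  set P := 2 / (2 - σ) with hP_def
  have hP : 0 < P := by positivity
  have hP2 : P ≤ 2 := by rw [hP_def, div_le_iff₀ hσ]; linarith
  refine ⟨2 * (C + 1), by finiteness, fun φ hφ ↦ ?_⟩
  set S := eLpNorm' φ P volume with hS
  rcases eq_or_ne S ∞ with hSt | hSt
  · simp [hSt, ENNReal.mul_top]
  have integral_φ : ∫⁻ t, φ t ^ P = S ^ P := by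
    rw [hS, ← lintegral_rpow_enorm_eq_rpow_eLpNorm' hP]
    rfl
  have finite_ae : ∀ᵐ s, φ s ≠ ∞ := by
    filter_upwards [ae_lt_top (hφ.pow_const P) (by rw [integral_φ]; finiteness)] with s hs
    exact fun h ↦ by simp [h, hP] at hs
  have zero_ae (hS0 : S = 0) : ∀ᵐ s, φ s = 0 :=
    (eLpNorm'_eq_zero_iff hP hφ.aestronglyMeasurable).mp hS0
  have sublevel_measurable : MeasurableSet {ω : ℝ × ℝ | φ ω.2 ≤ φ ω.1} :=
    measurableSet_le (by fun_prop) (by fun_prop)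
  calc ∫⁻ ω, ENNReal.ofReal |ω.1 - ω.2| ^ (-σ) * (φ ω.2 * φ ω.1) ∂volume.prod volume
      ≤ 2 * ∫⁻ ω in {ω | φ ω.2 ≤ φ ω.1},
          ENNReal.ofReal |ω.1 - ω.2| ^ (-σ) * (φ ω.2 * φ ω.1) ∂volume.prod volume :=
        lintegral_prod_le_two_mul_of_symm
          (fun ω ↦ by simp [abs_sub_comm, mul_comm (φ ω.2)]) hφ
    _ = 2 * ∫⁻ s, ∫⁻ t,
          φ s * ({t | φ t ≤ φ s}.indicator φ t * ENNReal.ofReal |s - t| ^ (-σ)) := by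
        rw [← lintegral_indicator sublevel_measurable, lintegral_prod _
          (Measurable.indicator (by fun_prop) sublevel_measurable).aemeasurable]
        congr! 5 with _ t
        simp only [Set.indicator, Set.mem_ofPred_eq]
        split_ifs <;> ring
    _ ≤ 2 * ∫⁻ s, C * (φ s ^ P * S ^ (2 - P)) := by
        refine mul_le_mul_right (lintegral_mono_ae ?_) _
        filter_upwards [finite_ae, ae_all_iff.mpr zero_ae] with s hst hs0
        rw [lintegral_const_mul' _ _ hst]
        exact sublevel_le hφ le_rfl hSt s hst hs0
    _ = 2 * (C * S ^ (2 : ℝ)) := by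
        rw [lintegral_const_mul _ (by fun_prop), lintegral_mul_const _ (by fun_prop), integral_φ,
          ← ENNReal.rpow_add_of_nonneg _ _ hP.le (by linarith), add_sub_cancel]
    _ ≤ 2 * (C + 1) * S ^ (2 : ℝ) := by
        rw [← mul_assoc]
        gcongr
        exact le_self_add

end HardyLittlewoodSobolev

section SpacetimeModes

variable {Z C : Type*} {E : C → Z → ℂ} {L : C → ℝ}

/-- The free waves `e^{2πi t L(c)} E_c(z)` on `ℝ × Z`. -/
def spacetimeMode (E : C → Z → ℂ) (L : C → ℝ) (c : C) (ω : ℝ × Z) : ℂ :=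
  cexp (2 * π * I * L c * ω.1) * E c ω.2

lemma modeKernel_spacetimeMode (n : ℕ) (t t' : ℝ) (z z' : Z) :
    modeKernel (spacetimeMode E L) (fun c ↦ (Real.exp (-π * L c / 4 ^ n) : ℂ)) (t, z) (t', z') =
      modeKernel E (fun c ↦ gaussianPhase n (t - t') (L c)) z z' := by
  refine tsum_congr fun c ↦ ?_
  simp only [spacetimeMode, gaussianPhase, map_mul, ← exp_conj, conj_I, conj_ofReal]
  rw [ofReal_sub, mul_sub, sub_eq_add_neg, exp_add]
  simp only [map_ofNat]
  ring_nf

variable [MeasurableSpace Z]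

lemma UnimodularFamily.norm_modeCoeff_le {μ : Measure Z} [IsFiniteMeasure μ]
    (hE : UnimodularFamily E) {F : Z → ℂ} {M : ℝ} (hF : ∀ z, ‖F z‖ ≤ M) (c : C) :
    ‖modeCoeff μ E F c‖ ≤ M * μ.real Set.univ :=
  norm_integral_le_of_norm_le_const (.of_forall fun z ↦ by simp [hE.norm_eq_one, hF z])

lemma UnimodularFamily.tsum_mul_enorm_modeCoeff_sq [Countable C] {μ : Measure Z}
    [IsFiniteMeasure μ] (hE : UnimodularFamily E) {w : C → ℝ} (hw₀ : ∀ c, 0 ≤ w c)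
    (hw : Summable w) {F : Z → ℂ} (hF : BoundedMeasurable F) :
    ∑' c, ENNReal.ofReal (w c) * ‖modeCoeff μ E F c‖ₑ ^ 2 =
      ‖kernelForm μ (modeKernel E fun c ↦ (w c : ℂ)) F F‖ₑ := by
  obtain ⟨M, hM⟩ := hF.exists_bound
  set x : C → ℝ := fun c ↦ w c * ‖modeCoeff μ E F c‖ ^ 2 with hx
  have x_nonneg (c : C) : 0 ≤ x c := mul_nonneg (hw₀ c) (by positivity)
  have summable_x : Summable x :=
    .of_nonneg_of_le x_nonneg (fun c ↦ mul_le_mul_of_nonneg_left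
      (pow_le_pow_left₀ (norm_nonneg _) (hE.norm_modeCoeff_le hM c) 2) (hw₀ c)) (hw.mul_right _)
  have form_eq : kernelForm μ (modeKernel E fun c ↦ (w c : ℂ)) F F = (∑' c, x c : ℝ) := by
    rw [hE.kernelForm_modeKernel (by simpa [abs_of_nonneg, hw₀] using hw) hF hF, ofReal_tsum]
    refine tsum_congr fun c ↦ ?_
    rw [mul_conj, normSq_eq_norm_sq, ← ofReal_mul]
  rw [form_eq, ← ofReal_norm, Complex.norm_of_nonneg (tsum_nonneg x_nonneg),
    ENNReal.ofReal_tsum_of_nonneg x_nonneg summable_x]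
  simp only [hx, ENNReal.ofReal_mul (hw₀ _), ENNReal.ofReal_pow (norm_nonneg _), ofReal_norm]

lemma unimodularFamily_spacetimeMode (hE : UnimodularFamily E) :
    UnimodularFamily (spacetimeMode E L) where
  measurable c := (by fun_prop : Measurable fun ω : ℝ × Z ↦ cexp (2 * π * I * L c * ω.1)).mul
    ((hE.measurable c).comp measurable_snd)
  norm_eq_one c ω := by
    rw [spacetimeMode, norm_mul, hE.norm_eq_one, mul_one,
      show 2 * π * I * L c * ω.1 = (2 * π * L c * ω.1 : ℝ) * I by push_cast; ring,
      norm_exp_ofReal_mul_I]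

/-- The energy of the space-time coefficients of `F` at frequencies `L ≲ 4 ^ n`, with a Gaussian
cutoff. -/
def lowEnergy (κ : Measure ℝ) (μ : Measure Z) (E : C → Z → ℂ) (L : C → ℝ) (n : ℕ)
    (F : ℝ × Z → ℂ) : ℝ≥0∞ :=
  ∑' c, ENNReal.ofReal (Real.exp (-π * L c / 4 ^ n)) *
    ‖modeCoeff (κ.prod μ) (spacetimeMode E L) F c‖ₑ ^ 2

lemma UnimodularFamily.lowEnergy_le [Countable C] (hE : UnimodularFamily E) {κ : Measure ℝ}
    {μ : Measure Z} [IsFiniteMeasure κ] [IsFiniteMeasure μ] {n : ℕ}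
    (hL : Summable fun c ↦ Real.exp (-π * L c / 4 ^ n)) {F : ℝ × Z → ℂ}
    (hF : BoundedMeasurable F) :
    lowEnergy κ μ E L n F ≤ ∫⁻ ω, ‖kernelForm μ
      (modeKernel E fun c ↦ gaussianPhase n (ω.1 - ω.2) (L c))
        (fun z ↦ F (ω.2, z)) (fun z ↦ F (ω.1, z))‖ₑ ∂κ.prod κ := by
  have hE' := unimodularFamily_spacetimeMode (L := L) hE
  have hK := hE'.boundedMeasurable_modeKernel (w := fun c ↦
    (Real.exp (-π * L c / 4 ^ n) : ℂ)) (by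
      simpa only [norm_real, Real.norm_of_nonneg (Real.exp_pos _).le] using hL)
  rw [lowEnergy, hE'.tsum_mul_enorm_modeCoeff_sq (fun _ ↦ (Real.exp_pos _).le) hL hF,
    kernelForm_prod hK hF hF]
  simp only [modeKernel_spacetimeMode]
  exact enorm_integral_le_lintegral_enorm _

end SpacetimeModes

section ShortTime

variable {X Y C : Type*} [MeasurableSpace X] [MeasurableSpace Y] {μ : Measure X} {ν : Measure Y}
  {E : C → X × Y → ℂ} {L : C → ℝ} {σ s p : ℝ}

lemma eLpNorm'_indicator {J : Set X} (hJ : MeasurableSet J) (f : X → ℝ≥0∞) {P : ℝ} (hP : 0 < P) :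
    eLpNorm' (J.indicator f) P μ = eLpNorm' f P (μ.restrict J) := by
  rw [eLpNorm', eLpNorm', ← lintegral_indicator hJ]
  congr! 3 with x
  by_cases hx : x ∈ J <;> simp [hx, hP]

lemma ae_prod_restrict_ne (J : Set ℝ) (hJ : MeasurableSet J) :
    ∀ᵐ ω ∂(volume.restrict J).prod (volume.restrict J), ω.1 ∈ J ∧ ω.2 ∈ J ∧ ω.1 ≠ ω.2 := by
  have ne_ae : ∀ᵐ ω : ℝ × ℝ ∂(volume.restrict J).prod (volume.restrict J), ω.1 ≠ ω.2 :=
    (Measure.ae_prod_iff_ae_ae (measurableSet_eq_fun measurable_fst measurable_snd).compl).mpr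
      (.of_forall fun t ↦ (Measure.ae_ne _ t).mono fun _ h ↦ h.symm)
  have mem_ae : ∀ᵐ ω : ℝ × ℝ ∂(volume.restrict J).prod (volume.restrict J), ω ∈ J ×ˢ J := by
    rw [Measure.prod_restrict]
    exact ae_restrict_mem (hJ.prod hJ)
  filter_upwards [ne_ae, mem_ae] with ω hne hmem
  exact ⟨hmem.1, hmem.2, hne⟩

lemma UnimodularFamily.exists_lowEnergy_le_of_dist_le [Countable C] [IsProbabilityMeasure μ]
    [IsProbabilityMeasure ν] (hE : UnimodularFamily E)
    (hL : ∀ n : ℕ, Summable fun c ↦ Real.exp (-π * L c / 4 ^ n)) (h₀ : 0 < σ) (h₁ : σ < 1)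
    {A : ℝ≥0∞} (hA : A ≠ ∞)
    (hform : ∀ (n : ℕ) (τ : ℝ), 0 < |τ| → |τ| ≤ (2 ^ n)⁻¹ →
      MixedFormBound μ ν (modeKernel E fun c ↦ gaussianPhase n τ (L c)) s p
        (A * ENNReal.ofReal |τ| ^ (-σ))) :
    ∃ C : ℝ≥0∞, C ≠ ∞ ∧ ∀ (n : ℕ) (J : Set ℝ), MeasurableSet J → volume J ≠ ∞ →
      (∀ t ∈ J, ∀ t' ∈ J, |t - t'| ≤ (2 ^ n)⁻¹) → ∀ F, BoundedMeasurable F →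
      lowEnergy (volume.restrict J) (μ.prod ν) E L n F ≤
        C * mixedLp₃ (2 / (2 - σ)) s p (volume.restrict J) μ ν F ^ (2 : ℝ) := by
  obtain ⟨B, hB, hls⟩ := exists_hardyLittlewoodSobolev h₀ h₁
  refine ⟨A * B, by finiteness, fun n J hJ hJt hdist F hF ↦ ?_⟩
  have : IsFiniteMeasure (volume.restrict J) := ⟨by simpa using hJt.lt_top⟩
  have hP : 0 < 2 / (2 - σ) := by
    have : 0 < 2 - σ := by linarith
    positivity
  set φ : ℝ → ℝ≥0∞ := fun t ↦ mixedLp s p μ ν fun z ↦ F (t, z)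
  have hφ : Measurable φ := measurable_mixedLp_slice hF.measurable.enorm
  set ψ := J.indicator φ
  have hψ : Measurable ψ := hφ.indicator hJ
  calc lowEnergy (volume.restrict J) (μ.prod ν) E L n F
      ≤ ∫⁻ ω, A * (ENNReal.ofReal |ω.1 - ω.2| ^ (-σ) * (ψ ω.2 * ψ ω.1))
          ∂(volume.restrict J).prod (volume.restrict J) := by
        refine (hE.lowEnergy_le (hL n) hF).trans (lintegral_mono_ae ?_)
        filter_upwards [ae_prod_restrict_ne J hJ] with ω ⟨h₁, h₂, hne⟩
        rw [show ψ ω.1 = φ ω.1 from Set.indicator_of_mem h₁ φ,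
          show ψ ω.2 = φ ω.2 from Set.indicator_of_mem h₂ φ, ← mul_assoc]
        exact hform n _ (abs_pos.mpr (sub_ne_zero.mpr hne)) (hdist _ h₁ _ h₂) _ _
          (hF.comp measurable_prodMk_left) (hF.comp measurable_prodMk_left)
    _ ≤ A * ∫⁻ ω, ENNReal.ofReal |ω.1 - ω.2| ^ (-σ) * (ψ ω.2 * ψ ω.1) ∂volume.prod volume := by
        rw [lintegral_const_mul _ (by fun_prop), Measure.prod_restrict]
        gcongr
        exact Measure.restrict_le_self
    _ ≤ A * B * mixedLp₃ (2 / (2 - σ)) s p (volume.restrict J) μ ν F ^ (2 : ℝ) := by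
        rw [mul_assoc, mixedLp₃, ← eLpNorm'_indicator hJ φ hP]
        gcongr
        exact hls ψ hψ

end ShortTime

section Subdivision

variable {T X Y Z C ι : Type*} [MeasurableSpace T] [MeasurableSpace X] [MeasurableSpace Y]
  [MeasurableSpace Z] [Fintype ι]

lemma sqrt_tsum_mul_enorm_sum_sq_le (w : C → ℝ≥0∞) (a : ι → C → ℂ) :
    (∑' c, w c * ‖∑ i, a i c‖ₑ ^ 2) ^ (1 / 2 : ℝ) ≤
      ∑ i, (∑' c, w c * ‖a i c‖ₑ ^ 2) ^ (1 / 2 : ℝ) := by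
  let _ : MeasurableSpace C := ⊤
  have norm_eq (f : C → ℂ) : eLpNorm' f 2 (Measure.sum fun c ↦ w c • Measure.dirac c) =
      (∑' c, w c * ‖f c‖ₑ ^ 2) ^ (1 / 2 : ℝ) := by
    simp [eLpNorm', lintegral_sum_measure, lintegral_smul_measure, lintegral_dirac]
  have triangle := eLpNorm'_sum_le (s := univ) (f := a)
    (μ := Measure.sum fun c ↦ w c • Measure.dirac c)
    (fun _ _ ↦ measurable_from_top.aestronglyMeasurable) one_le_two
  simpa only [norm_eq, Finset.sum_apply] using triangle

lemma UnimodularFamily.modeCoeff_sum_measure {e : C → Z → ℂ} (he : UnimodularFamily e)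
    {μ : ι → Measure Z} [IsFiniteMeasure (Measure.sum μ)] {F : Z → ℂ} (hF : BoundedMeasurable F)
    (c : C) : modeCoeff (Measure.sum μ) e F c = ∑ i, modeCoeff (μ i) e F c := by
  simp only [modeCoeff]
  rw [integral_sum_measure ((hF.mul (he.boundedMeasurable c).conjugate).integrable _),
    tsum_fintype]

lemma UnimodularFamily.sqrt_lowEnergy_sum_le {E : C → Z → ℂ} {L : C → ℝ}
    (hE : UnimodularFamily E) {κ : ι → Measure ℝ} [IsFiniteMeasure (Measure.sum κ)]
    {μ : Measure Z} [IsFiniteMeasure μ] (n : ℕ) {F : ℝ × Z → ℂ} (hF : BoundedMeasurable F) :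
    lowEnergy (Measure.sum κ) μ E L n F ^ (1 / 2 : ℝ) ≤
      ∑ i, lowEnergy (κ i) μ E L n F ^ (1 / 2 : ℝ) := by
  have hprod : (Measure.sum κ).prod μ = Measure.sum fun i ↦ (κ i).prod μ :=
    Measure.prod_sum_left κ μ
  have : IsFiniteMeasure (Measure.sum fun i ↦ (κ i).prod μ) := hprod ▸ inferInstance
  simp only [lowEnergy, hprod, (unimodularFamily_spacetimeMode hE).modeCoeff_sum_measure hF]
  exact sqrt_tsum_mul_enorm_sum_sq_le _ _

lemma sum_eLpNorm'_le (κ : ι → Measure T) (φ : T → ℝ≥0∞) {P : ℝ} (hP : 1 ≤ P) :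
    ∑ i, eLpNorm' φ P (κ i) ≤
      (Fintype.card ι : ℝ≥0∞) ^ (1 - P⁻¹) * eLpNorm' φ P (Measure.sum κ) := by
  have hP₀ : 0 < P := by positivity
  rw [← ENNReal.rpow_le_rpow_iff hP₀, ENNReal.mul_rpow_of_nonneg _ _ hP₀.le, ← ENNReal.rpow_mul,
    sub_mul, one_mul, inv_mul_cancel₀ hP₀.ne', ← lintegral_rpow_enorm_eq_rpow_eLpNorm' hP₀,
    lintegral_sum_measure, tsum_fintype]
  refine (ENNReal.rpow_sum_le_const_mul_sum_rpow univ _ hP).trans_eq ?_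
  simp only [lintegral_rpow_enorm_eq_rpow_eLpNorm' hP₀, card_univ]

/-- Lebesgue measure on the period `(0, 1]` of the time variable. -/
abbrev unitTime : Measure ℝ := volume.restrict (Set.Ioc 0 1)

instance : IsProbabilityMeasure unitTime := ⟨by simp⟩

lemma unitTime_eq_sum {N : ℕ} (hN : N ≠ 0) :
    unitTime = Measure.sum fun i : Set.Ico 0 N ↦
      volume.restrict (Set.Ioc ((i : ℕ) / N : ℝ) (((i : ℕ) + 1 : ℕ) / N)) := by
  have monotone : Monotone fun i : ℕ ↦ (i / N : ℝ) := fun i j hij ↦ by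
    have : (i : ℝ) ≤ j := mod_cast hij
    dsimp only
    gcongr
  have union := monotone.biUnion_Ico_Ioc_map_succ 0 N
  have hN' : (N : ℝ) ≠ 0 := mod_cast hN
  have disjoint : Pairwise (Function.onFun Disjoint fun i : Set.Ico 0 N ↦
      Set.Ioc ((i : ℕ) / N : ℝ) (((i : ℕ) + 1 : ℕ) / N)) := fun i j hij ↦
    monotone.pairwise_disjoint_on_Ioc_succ (Subtype.coe_injective.ne hij)
  rw [← Measure.restrict_iUnion disjoint fun _ ↦ measurableSet_Ioc]
  simp only [Nat.cast_zero, zero_div, div_self hN', Set.biUnion_eq_iUnion, Order.succ_eq_add_one]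
    at union
  rw [union]

variable {μ : Measure X} {ν : Measure Y} {E : C → X × Y → ℂ} {L : C → ℝ} {σ s p : ℝ}

lemma UnimodularFamily.lowEnergy_sum_le [IsFiniteMeasure μ] [IsFiniteMeasure ν]
    (hE : UnimodularFamily E) {κ : ι → Measure ℝ} [IsFiniteMeasure (Measure.sum κ)] {n : ℕ}
    {F : ℝ × X × Y → ℂ} (hF : BoundedMeasurable F) {P : ℝ} (hP : 1 ≤ P) {B : ℝ≥0∞}
    (h : ∀ i, lowEnergy (κ i) (μ.prod ν) E L n F ≤ B * mixedLp₃ P s p (κ i) μ ν F ^ (2 : ℝ)) :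
    lowEnergy (Measure.sum κ) (μ.prod ν) E L n F ≤
      B * (Fintype.card ι : ℝ≥0∞) ^ (2 * (1 - P⁻¹)) *
        mixedLp₃ P s p (Measure.sum κ) μ ν F ^ (2 : ℝ) := by
  have sqrt_le (i : ι) : lowEnergy (κ i) (μ.prod ν) E L n F ^ (1 / 2 : ℝ) ≤
      B ^ (1 / 2 : ℝ) * mixedLp₃ P s p (κ i) μ ν F := by
    refine (ENNReal.rpow_le_rpow (h i) one_half_pos.le).trans_eq ?_
    rw [ENNReal.mul_rpow_of_nonneg _ _ one_half_pos.le, ← ENNReal.rpow_mul]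
    norm_num
  calc lowEnergy (Measure.sum κ) (μ.prod ν) E L n F
      = (lowEnergy (Measure.sum κ) (μ.prod ν) E L n F ^ (1 / 2 : ℝ)) ^ (2 : ℝ) := by
        rw [← ENNReal.rpow_mul]
        norm_num
    _ ≤ (∑ i, B ^ (1 / 2 : ℝ) * mixedLp₃ P s p (κ i) μ ν F) ^ (2 : ℝ) := by
        gcongr
        exact (hE.sqrt_lowEnergy_sum_le n hF).trans (sum_le_sum fun i _ ↦ sqrt_le i)
    _ ≤ (B ^ (1 / 2 : ℝ) * ((Fintype.card ι : ℝ≥0∞) ^ (1 - P⁻¹) *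
          mixedLp₃ P s p (Measure.sum κ) μ ν F)) ^ (2 : ℝ) := by
        rw [← mul_sum]
        gcongr
        exact sum_eLpNorm'_le _ _ hP
    _ = _ := by
        rw [ENNReal.mul_rpow_of_nonneg _ _ zero_le_two, ENNReal.mul_rpow_of_nonneg _ _ zero_le_two,
          ← ENNReal.rpow_mul, ← ENNReal.rpow_mul, mul_assoc, mul_comm 2]
        norm_num

theorem UnimodularFamily.exists_lowEnergy_le [Countable C] [IsProbabilityMeasure μ]
    [IsProbabilityMeasure ν] (hE : UnimodularFamily E)
    (hL : ∀ n : ℕ, Summable fun c ↦ Real.exp (-π * L c / 4 ^ n)) (h₀ : 0 < σ) (h₁ : σ < 1)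
    {A : ℝ≥0∞} (hA : A ≠ ∞)
    (hform : ∀ (n : ℕ) (τ : ℝ), 0 < |τ| → |τ| ≤ (2 ^ n)⁻¹ →
      MixedFormBound μ ν (modeKernel E fun c ↦ gaussianPhase n τ (L c)) s p
        (A * ENNReal.ofReal |τ| ^ (-σ))) :
    ∃ C : ℝ≥0∞, C ≠ ∞ ∧ ∀ (n : ℕ) (F : ℝ × X × Y → ℂ), BoundedMeasurable F →
      lowEnergy unitTime (μ.prod ν) E L n F ≤
        C * (2 : ℝ≥0∞) ^ (n * σ) * mixedLp₃ (2 / (2 - σ)) s p unitTime μ ν F ^ (2 : ℝ) := by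
  obtain ⟨B, hB, short⟩ := hE.exists_lowEnergy_le_of_dist_le hL h₀ h₁ hA hform
  refine ⟨B, hB, fun n F hF ↦ ?_⟩
  have hP : 1 ≤ 2 / (2 - σ) := by rw [le_div_iff₀] <;> linarith
  set J : Set.Ico 0 (2 ^ n) → Set ℝ := fun i ↦
    Set.Ioc ((i : ℕ) / (2 ^ n : ℕ) : ℝ) (((i : ℕ) + 1 : ℕ) / (2 ^ n : ℕ))
  have hJ : unitTime = Measure.sum fun i ↦ volume.restrict (J i) := unitTime_eq_sum (by simp)
  have : IsFiniteMeasure (Measure.sum fun i ↦ volume.restrict (J i)) := hJ ▸ inferInstance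
  have dist_le (i) : ∀ t ∈ J i, ∀ t' ∈ J i, |t - t'| ≤ (2 ^ n)⁻¹ := fun t ht t' ht' ↦ by
    have := Real.dist_le_of_mem_Icc (Set.Ioc_subset_Icc_self ht) (Set.Ioc_subset_Icc_self ht')
    rwa [Real.dist_eq, ← sub_div, Nat.cast_add, Nat.cast_one, add_sub_cancel_left, one_div,
      Nat.cast_pow, Nat.cast_ofNat] at this
  have card_rpow : (Fintype.card (Set.Ico 0 (2 ^ n)) : ℝ≥0∞) ^ (2 * (1 - (2 / (2 - σ))⁻¹)) =
      2 ^ (n * σ) := by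
    rw [inv_div, show 2 * (1 - (2 - σ) / 2) = σ by ring, ENNReal.rpow_mul]
    simp
  rw [← card_rpow, hJ]
  exact hE.lowEnergy_sum_le hF hP fun i ↦
    short n (J i) measurableSet_Ioc measure_Ioc_lt_top.ne (dist_le i) F hF

end Subdivision

section SquareFunction

variable {ι T X Y : Type*} [Countable ι] [MeasurableSpace T] [MeasurableSpace X]
  [MeasurableSpace Y] {κ : Measure T} {μ : Measure X} {ν : Measure Y} {q s p : ℝ} {w : ι → ℝ≥0∞}
  {K : ℝ≥0∞}

lemma eLpNorm'_sq_le {f W : X → ℝ≥0∞} (hf : Measurable f) (hW : BoundedPos W) (hs₀ : 0 < s)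
    (hs₂ : s ≤ 2) : eLpNorm' f s μ ^ (2 : ℝ) ≤
      eLpNorm' W s μ ^ (2 - s) * ∫⁻ x, f x ^ (2 : ℝ) * W x ^ (s - 2) ∂μ := by
  have measurable_weighted : Measurable fun x ↦ f x ^ (2 : ℝ) * W x ^ (s - 2) :=
    (hf.pow_const _).mul (hW.measurable.pow_const _)
  have holder : ∫⁻ x, f x ^ s ∂μ ≤ (∫⁻ x, f x ^ (2 : ℝ) * W x ^ (s - 2) ∂μ) ^ (s / 2) *
      (∫⁻ x, W x ^ s ∂μ) ^ ((2 - s) / 2) := by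
    refine le_trans (lintegral_mono fun x ↦ ?_) (ENNReal.lintegral_mul_norm_pow_le
      measurable_weighted.aemeasurable
      (hW.measurable.pow_const s).aemeasurable (by positivity) (by linarith) (by ring))
    rw [ENNReal.mul_rpow_of_nonneg _ _ (by positivity), ← ENNReal.rpow_mul, ← ENNReal.rpow_mul,
      ← ENNReal.rpow_mul, mul_assoc, ← ENNReal.rpow_add _ _ (hW.ne_zero x) (hW.ne_top x),
      mul_div_cancel₀ s two_ne_zero, show (s - 2) * (s / 2) + s * ((2 - s) / 2) = 0 by ring,
      ENNReal.rpow_zero, mul_one]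
  calc eLpNorm' f s μ ^ (2 : ℝ) = (∫⁻ x, f x ^ s ∂μ) ^ (2 / s) := by
        rw [eLpNorm', ← ENNReal.rpow_mul, one_div_mul_eq_div]
        rfl
    _ ≤ ((∫⁻ x, f x ^ (2 : ℝ) * W x ^ (s - 2) ∂μ) ^ (s / 2) *
          (∫⁻ x, W x ^ s ∂μ) ^ ((2 - s) / 2)) ^ (2 / s) := by gcongr
    _ = _ := by
        rw [ENNReal.mul_rpow_of_nonneg _ _ (by positivity), ← ENNReal.rpow_mul,
          ← ENNReal.rpow_mul, div_mul_div_cancel₀ two_ne_zero, div_self hs₀.ne', ENNReal.rpow_one,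
          mul_comm, eLpNorm', ← ENNReal.rpow_mul]
        simp only [enorm_eq_self]
        congr 2
        ring

lemma tsum_mul_eLpNorm'_sq_le {f : ι → X → ℝ≥0∞} {W : X → ℝ≥0∞} (hf : ∀ i, Measurable (f i))
    (hW : BoundedPos W) (hs₀ : 0 < s) (hs₂ : s ≤ 2)
    (h : ∀ x, ∑' i, w i * f i x ^ (2 : ℝ) ≤ K * W x ^ (2 : ℝ)) :
    ∑' i, w i * eLpNorm' (f i) s μ ^ (2 : ℝ) ≤ K * eLpNorm' W s μ ^ (2 : ℝ) := by
  set N := eLpNorm' W s μ with hN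
  have measurable_weighted (i : ι) : Measurable fun x ↦ f i x ^ (2 : ℝ) * W x ^ (s - 2) :=
    ((hf i).pow_const _).mul (hW.measurable.pow_const _)
  calc ∑' i, w i * eLpNorm' (f i) s μ ^ (2 : ℝ)
      ≤ ∑' i, w i * (N ^ (2 - s) * ∫⁻ x, f i x ^ (2 : ℝ) * W x ^ (s - 2) ∂μ) := by
        gcongr with i
        exact eLpNorm'_sq_le (hf i) hW hs₀ hs₂
    _ = N ^ (2 - s) * ∫⁻ x, (∑' i, w i * f i x ^ (2 : ℝ)) * W x ^ (s - 2) ∂μ := by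
        simp only [mul_left_comm (w _) (N ^ (2 - s)), ← ENNReal.tsum_mul_right, mul_assoc]
        rw [ENNReal.tsum_mul_left,
          lintegral_tsum fun i ↦ ((measurable_weighted i).const_mul (w i)).aemeasurable]
        simp only [lintegral_const_mul _ (measurable_weighted _)]
    _ ≤ N ^ (2 - s) * ∫⁻ x, K * W x ^ s ∂μ := by
        refine mul_le_mul_right (lintegral_mono fun x ↦ ?_) _
        calc _ ≤ K * W x ^ (2 : ℝ) * W x ^ (s - 2) := by gcongr; exact h x
          _ = K * W x ^ s := by
            rw [mul_assoc, ← ENNReal.rpow_add _ _ (hW.ne_zero x) (hW.ne_top x), add_sub_cancel]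
    _ = K * N ^ (2 : ℝ) := by
        have integral_W : ∫⁻ x, W x ^ s ∂μ = N ^ s := by
          rw [hN, ← lintegral_rpow_enorm_eq_rpow_eLpNorm' hs₀]
          rfl
        rw [lintegral_const_mul _ (hW.measurable.pow_const s), integral_W, mul_left_comm,
          ← ENNReal.rpow_add_of_nonneg _ _ (by linarith) hs₀.le, sub_add_cancel]

lemma tsum_mul_mixedLp_sq_le [IsProbabilityMeasure ν] {f : ι → X × Y → ℝ≥0∞} {W : X × Y → ℝ≥0∞}
    (hf : ∀ i, Measurable (f i)) (hW : BoundedPos W) (hs₀ : 0 < s) (hs₂ : s ≤ 2) (hp₀ : 0 < p)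
    (hp₂ : p ≤ 2) (h : ∀ z, ∑' i, w i * f i z ^ (2 : ℝ) ≤ K * W z ^ (2 : ℝ)) :
    ∑' i, w i * mixedLp s p μ ν (f i) ^ (2 : ℝ) ≤ K * mixedLp s p μ ν W ^ (2 : ℝ) :=
  tsum_mul_eLpNorm'_sq_le (fun i ↦ measurable_eLpNorm'_slice (hf i)) (hW.eLpNorm'_slice hp₀) hs₀
    hs₂ fun x ↦ tsum_mul_eLpNorm'_sq_le (fun i ↦ (hf i).comp measurable_prodMk_left)
      (hW.comp measurable_prodMk_left) hp₀ hp₂ fun y ↦ h (x, y)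

lemma tsum_mul_mixedLp₃_sq_le [IsProbabilityMeasure μ] [IsProbabilityMeasure ν]
    {f : ι → T × X × Y → ℝ≥0∞} {W : T × X × Y → ℝ≥0∞} (hf : ∀ i, Measurable (f i))
    (hW : BoundedPos W) (hq₀ : 0 < q) (hq₂ : q ≤ 2) (hs₀ : 0 < s) (hs₂ : s ≤ 2) (hp₀ : 0 < p)
    (hp₂ : p ≤ 2) (h : ∀ z, ∑' i, w i * f i z ^ (2 : ℝ) ≤ K * W z ^ (2 : ℝ)) :
    ∑' i, w i * mixedLp₃ q s p κ μ ν (f i) ^ (2 : ℝ) ≤ K * mixedLp₃ q s p κ μ ν W ^ (2 : ℝ) :=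
  tsum_mul_eLpNorm'_sq_le (fun i ↦ measurable_mixedLp_slice (hf i)) (hW.mixedLp_slice hs₀ hp₀) hq₀
    hq₂ fun t ↦ tsum_mul_mixedLp_sq_le (fun i ↦ (hf i).comp measurable_prodMk_left)
      (hW.comp measurable_prodMk_left) hs₀ hs₂ hp₀ hp₂ fun z ↦ h (t, z)

end SquareFunction

section DyadicSum

lemma tsum_min_pow_div_le {b x : ℝ≥0∞} (hb : 1 < b) (hb' : b ≠ ∞) (hx₀ : x ≠ 0) (hx : x ≠ ∞) :
    ∑' n : ℕ, min (b ^ n / x) (x / b ^ n) ≤ 2 * (1 - b⁻¹)⁻¹ := by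
  have b_ne_zero : b ≠ 0 := (one_pos.trans hb).ne'
  have pow_ne_zero (n : ℕ) : b ^ n ≠ 0 := pow_ne_zero n b_ne_zero
  have pow_ne_top (n : ℕ) : b ^ n ≠ ∞ := ENNReal.pow_ne_top hb'
  have exists_le : ∃ n : ℕ, x ≤ b ^ n :=
    ((tendsto_order.1 (ENNReal.tendsto_pow_atTop_nhds_top_iff.mpr hb)).1 x hx.lt_top).exists.imp
      fun _ ↦ le_of_lt
  classical
  set N := Nat.find exists_le
  have head : ∑ n ∈ range N, min (b ^ n / x) (x / b ^ n) ≤ ∑' j : ℕ, b⁻¹ ^ j := by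
    rw [← sum_range_reflect]
    refine (sum_le_sum fun j hj ↦ (min_le_left _ _).trans ?_).trans (ENNReal.sum_le_tsum _)
    have hj' : j + 1 ≤ N := mem_range.mp hj
    have lt_x : b ^ (N - 1) ≤ x := (not_le.mp (Nat.find_min exists_le (by omega))).le
    rw [ENNReal.div_le_iff hx₀ hx, ← ENNReal.inv_pow, ← ENNReal.div_eq_inv_mul,
      ENNReal.le_div_iff_mul_le (.inl (pow_ne_zero j)) (.inl (pow_ne_top j)), ← pow_add,
      show N - 1 - j + j = N - 1 by omega]
    exact lt_x
  have tail : ∑' j : ℕ, min (b ^ (j + N) / x) (x / b ^ (j + N)) ≤ ∑' j : ℕ, b⁻¹ ^ j := by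
    gcongr with j
    refine (min_le_right _ _).trans ?_
    rw [ENNReal.div_le_iff (pow_ne_zero _) (pow_ne_top _), pow_add, ← mul_assoc, ← mul_pow,
      ENNReal.inv_mul_cancel b_ne_zero hb', one_pow, one_mul]
    exact Nat.find_spec exists_le
  calc _ = ∑ n ∈ range N, min (b ^ n / x) (x / b ^ n) +
        ∑' j : ℕ, min (b ^ (j + N) / x) (x / b ^ (j + N)) :=
      (ENNReal.summable.sum_add_tsum_nat_add' (f := fun n ↦ min (b ^ n / x) (x / b ^ n))).symm
    _ ≤ (1 - b⁻¹)⁻¹ + (1 - b⁻¹)⁻¹ := by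
      rw [← ENNReal.tsum_geometric]
      exact add_le_add head tail
    _ = 2 * (1 - b⁻¹)⁻¹ := (two_mul _).symm

lemma mul_rpow_two_le_min_mul {t u v x : ℝ≥0∞} (ht : t ≠ 0) (ht' : t ≠ ∞) (hu : u ≠ 0)
    (hu' : u ≠ ∞) (hv : v ≠ 0) (hv' : v ≠ ∞) (hx : x ^ (2 : ℝ) ≤ u * v) (h : t * v ≤ u) :
    t * x ^ (2 : ℝ) ≤ min (t / (u / v)) (u / v / t) * u ^ (2 : ℝ) := by
  have le_ratio : t ≤ u / v := (ENNReal.le_div_iff_mul_le (.inl hv) (.inl hv')).mpr h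
  rw [min_eq_left ((ENNReal.div_le_of_le_mul (by rwa [one_mul])).trans
    ((ENNReal.le_div_iff_mul_le (.inl ht) (.inl ht')).mpr (by rwa [one_mul])))]
  calc t * x ^ (2 : ℝ) ≤ t * (u * v) := by gcongr
    _ = t / (u / v) * u ^ (2 : ℝ) := by
      rw [div_eq_mul_inv t, ENNReal.inv_div (.inl hv') (.inl hv), ENNReal.rpow_two, sq,
        mul_assoc, ← mul_assoc (v / u), ENNReal.div_mul_cancel hu hu', mul_comm u]

end DyadicSum

section RealInterpolation

variable {T X Y : Type*} [MeasurableSpace T] [MeasurableSpace X] [MeasurableSpace Y]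
  {κ : Measure T} {μ : Measure X} {ν : Measure Y} [IsProbabilityMeasure μ]
  [IsProbabilityMeasure ν] {q s p α β γ : ℝ}

lemma BoundedMeasurable.indicator {Z : Type*} [MeasurableSpace Z] {F : Z → ℂ}
    (hF : BoundedMeasurable F) {S : Set Z} (hS : MeasurableSet S) :
    BoundedMeasurable (S.indicator F) := by
  obtain ⟨M, hM⟩ := hF.exists_bound
  exact ⟨hF.measurable.indicator hS, M, fun z ↦ (norm_indicator_le_norm_self F z).trans (hM z)⟩

lemma tsum_mul_mixedLp₃_indicator_sq_le {t : ℕ → ℝ≥0∞} (ht : ∀ n, t n ≠ 0) (ht' : ∀ n, t n ≠ ∞)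
    {K : ℝ≥0∞} (hK : ∀ x, x ≠ 0 → x ≠ ∞ → ∑' n, min (t n / x) (x / t n) ≤ K)
    (hq₀ : 0 < q) (hq₂ : q ≤ 2) (hs₀ : 0 < s) (hs₂ : s ≤ 2) (hp₀ : 0 < p) (hp₂ : p ≤ 2)
    {F : T × X × Y → ℂ} (hF : Measurable F) {W₁ W₂ : T × X × Y → ℝ≥0∞} (hW₁ : BoundedPos W₁)
    (hW₂ : BoundedPos W₂) (hFW : ∀ z, ‖F z‖ₑ ^ (2 : ℝ) ≤ W₁ z * W₂ z)
    {S : ℕ → Set (T × X × Y)} (hS : ∀ n, MeasurableSet (S n))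
    (hSW : ∀ n, ∀ z ∈ S n, t n * W₂ z ≤ W₁ z) :
    ∑' n, t n * mixedLp₃ q s p κ μ ν ((S n).indicator F) ^ (2 : ℝ) ≤
      K * mixedLp₃ q s p κ μ ν W₁ ^ (2 : ℝ) := by
  refine tsum_mul_mixedLp₃_sq_le (f := fun n z ↦ ‖(S n).indicator F z‖ₑ)
    (fun n ↦ (hF.indicator (hS n)).enorm) hW₁ hq₀ hq₂ hs₀ hs₂ hp₀ hp₂ fun z ↦ ?_
  have hW := hW₁.div hW₂
  refine le_trans ?_ (mul_le_mul_left (hK (W₁ z / W₂ z) (hW.ne_zero z) (hW.ne_top z)) _)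
  rw [← ENNReal.tsum_mul_right]
  refine ENNReal.tsum_le_tsum fun n ↦ ?_
  by_cases hz : z ∈ S n
  · rw [Set.indicator_of_mem hz]
    exact mul_rpow_two_le_min_mul (ht n) (ht' n) (hW₁.ne_zero z) (hW₁.ne_top z) (hW₂.ne_zero z)
      (hW₂.ne_top z) (hFW z) (hSW n z hz)
  · simp [hz]

variable [IsProbabilityMeasure κ]

/-- Exponents `e / δ` and `e / (2 - δ)`, both in `(0, 2]`, whose reciprocals are symmetric about
that of `e`. -/
structure SymmetricExponents (e δ : ℝ) : Prop where
  pos : 0 < e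
  left_pos : 0 < δ
  right_pos : 0 < 2 - δ
  left_le : e / δ ≤ 2
  right_le : e / (2 - δ) ≤ 2

lemma BoundedPos.exists_mul_eq_sq {f : T × X × Y → ℝ≥0∞} (hf : BoundedPos f)
    (hα : SymmetricExponents q α) (hβ : SymmetricExponents s β) (hγ : SymmetricExponents p γ) :
    ∃ W₁ W₂ : T × X × Y → ℝ≥0∞, BoundedPos W₁ ∧ BoundedPos W₂ ∧
      (∀ z, W₁ z * W₂ z = f z ^ (2 : ℝ)) ∧
      mixedLp₃ (q / α) (s / β) (p / γ) κ μ ν W₁ = mixedLp₃ q s p κ μ ν f ∧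
      mixedLp₃ (q / (2 - α)) (s / (2 - β)) (p / (2 - γ)) κ μ ν W₂ = mixedLp₃ q s p κ μ ν f := by
  have h₀ : mixedLp₃ q s p κ μ ν f ≠ 0 := (hf.mixedLp_slice hβ.pos hγ.pos).eLpNorm'_ne_zero hα.pos
  have h' : mixedLp₃ q s p κ μ ν f ≠ ∞ := (hf.mixedLp_slice hβ.pos hγ.pos).eLpNorm'_ne_top hα.pos
  refine ⟨_, _, hf.mixedRescale₃ hα.pos hβ.pos hγ.pos h₀ h' hα.left_pos.le hβ.left_pos.le
    hγ.left_pos.le, hf.mixedRescale₃ hα.pos hβ.pos hγ.pos h₀ h' hα.right_pos.le hβ.right_pos.le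
    hγ.right_pos.le, fun z ↦ ?_, mixedLp₃_mixedRescale₃ hf hα.pos hβ.pos hγ.pos hα.left_pos
    hβ.left_pos hγ.left_pos, mixedLp₃_mixedRescale₃ hf hα.pos hβ.pos hγ.pos hα.right_pos
    hβ.right_pos hγ.right_pos⟩
  conv_rhs => rw [← mixedRescale₃_eq_self (κ := κ) (μ := μ) (ν := ν) hf hα.pos hβ.pos hγ.pos,
    mixedRescale₃_rpow zero_le_two]
  rw [mixedRescale₃_mul hα.left_pos.le hα.right_pos.le hβ.left_pos.le hβ.right_pos.le
    hγ.left_pos.le hγ.right_pos.le, ENNReal.rpow_two, sq]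
  simp

lemma BoundedPos.exists_sum_indicator_le {f : T × X × Y → ℝ≥0∞} (hf : BoundedPos f)
    (hα : SymmetricExponents q α) (hβ : SymmetricExponents s β) (hγ : SymmetricExponents p γ)
    {b : ℝ≥0∞} (hb : 1 < b) (hb' : b ≠ ∞) {F : T × X × Y → ℂ} (hF : Measurable F)
    (hFf : ∀ z, ‖F z‖ₑ ≤ f z) : ∃ S : ℕ → Set (T × X × Y), (∀ n, MeasurableSet (S n)) ∧
      ∑' n, b ^ n * mixedLp₃ (q / α) (s / β) (p / γ) κ μ ν ((S n).indicator F) ^ (2 : ℝ) ≤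
        2 * (1 - b⁻¹)⁻¹ * mixedLp₃ q s p κ μ ν f ^ (2 : ℝ) ∧
      ∑' n, (b ^ n)⁻¹ * mixedLp₃ (q / (2 - α)) (s / (2 - β)) (p / (2 - γ)) κ μ ν
        ((S n)ᶜ.indicator F) ^ (2 : ℝ) ≤
          2 * (1 - b⁻¹)⁻¹ * mixedLp₃ q s p κ μ ν f ^ (2 : ℝ) := by
  obtain ⟨W₁, W₂, hW₁, hW₂, W_mul, norm_W₁, norm_W₂⟩ :=
    hf.exists_mul_eq_sq (κ := κ) (μ := μ) (ν := ν) hα hβ hγ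
  have hFW (z) : ‖F z‖ₑ ^ (2 : ℝ) ≤ W₁ z * W₂ z :=
    (ENNReal.rpow_le_rpow (hFf z) zero_le_two).trans_eq (W_mul z).symm
  have pow_ne_zero (n : ℕ) : b ^ n ≠ 0 := pow_ne_zero n (one_pos.trans hb).ne'
  have pow_ne_top (n : ℕ) : b ^ n ≠ ∞ := ENNReal.pow_ne_top hb'
  have sum_inv_le (x : ℝ≥0∞) (hx : x ≠ 0) (hx' : x ≠ ∞) :
      ∑' n, min ((b ^ n)⁻¹ / x) (x / (b ^ n)⁻¹) ≤ 2 * (1 - b⁻¹)⁻¹ := by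
    refine le_trans (ENNReal.tsum_le_tsum fun n ↦ ?_) (tsum_min_pow_div_le hb hb'
      (ENNReal.inv_ne_zero.mpr hx') (ENNReal.inv_ne_top.mpr hx))
    rw [min_comm]
    simp only [div_eq_mul_inv, inv_inv, mul_comm, le_rfl]
  have hS (n : ℕ) : MeasurableSet {z | b ^ n * W₂ z ≤ W₁ z} :=
    measurableSet_le (hW₂.measurable.const_mul _) hW₁.measurable
  refine ⟨_, hS, ?_, ?_⟩
  · rw [← norm_W₁]
    exact tsum_mul_mixedLp₃_indicator_sq_le pow_ne_zero pow_ne_top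
      (fun x ↦ tsum_min_pow_div_le hb hb') (div_pos hα.pos hα.left_pos) hα.left_le
      (div_pos hβ.pos hβ.left_pos) hβ.left_le (div_pos hγ.pos hγ.left_pos) hγ.left_le hF hW₁ hW₂
      hFW hS fun n z hz ↦ hz
  · rw [← norm_W₂]
    refine tsum_mul_mixedLp₃_indicator_sq_le (fun n ↦ ENNReal.inv_ne_zero.mpr (pow_ne_top n))
      (fun n ↦ ENNReal.inv_ne_top.mpr (pow_ne_zero n)) sum_inv_le (div_pos hα.pos hα.right_pos)
      hα.right_le (div_pos hβ.pos hβ.right_pos) hβ.right_le (div_pos hγ.pos hγ.right_pos)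
      hγ.right_le hF hW₂ hW₁ (fun z ↦ (hFW z).trans_eq (mul_comm _ _)) (fun n ↦ (hS n).compl)
      fun n z hz ↦ ?_
    rw [← ENNReal.div_eq_inv_mul]
    exact ENNReal.div_le_of_le_mul' (le_of_not_ge fun h ↦ hz h)

lemma tsum_le_mul_mixedLp₃_sq {Q : ℕ → (T × X × Y → ℂ) → ℝ≥0∞}
    (hQ : ∀ n F G, BoundedMeasurable F → BoundedMeasurable G →
      Q n (F + G) ≤ 2 * (Q n F + Q n G))
    (hα : SymmetricExponents q α) (hβ : SymmetricExponents s β) (hγ : SymmetricExponents p γ)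
    (hq₁ : 1 ≤ q) (hs₁ : 1 ≤ s) (hp₁ : 1 ≤ p)
    {b C₁ C₂ : ℝ≥0∞} (hb : 1 < b) (hb' : b ≠ ∞) (hC₁ : C₁ ≠ ∞) (hC₂ : C₂ ≠ ∞)
    (h₁ : ∀ n F, BoundedMeasurable F →
      Q n F ≤ C₁ * (b ^ n * mixedLp₃ (q / α) (s / β) (p / γ) κ μ ν F ^ (2 : ℝ)))
    (h₂ : ∀ n F, BoundedMeasurable F → Q n F ≤
      C₂ * ((b ^ n)⁻¹ * mixedLp₃ (q / (2 - α)) (s / (2 - β)) (p / (2 - γ)) κ μ ν F ^ (2 : ℝ)))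
    {F : T × X × Y → ℂ} (hF : BoundedMeasurable F) :
    ∑' n, Q n F ≤ 4 * (1 - b⁻¹)⁻¹ * (C₁ + C₂) * mixedLp₃ q s p κ μ ν F ^ (2 : ℝ) := by
  have of_majorant {f : T × X × Y → ℝ≥0∞} (hf : BoundedPos f) (hFf : ∀ z, ‖F z‖ₑ ≤ f z) :
      ∑' n, Q n F ≤ 4 * (1 - b⁻¹)⁻¹ * (C₁ + C₂) * mixedLp₃ q s p κ μ ν f ^ (2 : ℝ) := by
    obtain ⟨S, hS, sum₁, sum₂⟩ := hf.exists_sum_indicator_le (κ := κ) (μ := μ) (ν := ν) hα hβ hγ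
      hb hb' hF.measurable hFf
    have hF₁ (n) := hF.indicator (hS n)
    have hF₂ (n) := hF.indicator (hS n).compl
    calc ∑' n, Q n F
        ≤ ∑' n, 2 * (C₁ * (b ^ n * _ ^ (2 : ℝ)) + C₂ * ((b ^ n)⁻¹ * _ ^ (2 : ℝ))) := by
          refine ENNReal.tsum_le_tsum fun n ↦ ?_
          rw [← Set.indicator_self_add_compl (S n) F]
          exact (hQ n _ _ (hF₁ n) (hF₂ n)).trans
            (mul_le_mul_right (add_le_add (h₁ n _ (hF₁ n)) (h₂ n _ (hF₂ n))) _)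
      _ ≤ 2 * (C₁ * (2 * (1 - b⁻¹)⁻¹ * mixedLp₃ q s p κ μ ν f ^ (2 : ℝ)) +
            C₂ * (2 * (1 - b⁻¹)⁻¹ * mixedLp₃ q s p κ μ ν f ^ (2 : ℝ))) := by
          rw [ENNReal.tsum_mul_left, ENNReal.tsum_add, ENNReal.tsum_mul_left,
            ENNReal.tsum_mul_left]
          gcongr
      _ = _ := by ring
  have const_ne_top : 4 * (1 - b⁻¹)⁻¹ * (C₁ + C₂) ≠ ∞ := by
    have : (1 - b⁻¹)⁻¹ ≠ ∞ :=
      ENNReal.inv_ne_top.mpr (tsub_pos_of_lt (ENNReal.inv_lt_one.mpr hb)).ne'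
    finiteness
  have tendsto : Filter.Tendsto (fun η : ℝ≥0∞ ↦ 4 * (1 - b⁻¹)⁻¹ * (C₁ + C₂) *
      (mixedLp₃ q s p κ μ ν F + η) ^ (2 : ℝ)) (nhdsWithin 0 (Set.Ioi 0))
      (nhds (4 * (1 - b⁻¹)⁻¹ * (C₁ + C₂) * mixedLp₃ q s p κ μ ν F ^ (2 : ℝ))) := by
    refine (Continuous.tendsto' ?_ 0 _ (by rw [add_zero])).mono_left nhdsWithin_le_nhds
    exact (ENNReal.continuous_const_mul const_ne_top).comp
      ((ENNReal.continuous_rpow_const).comp (continuous_const_add _))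
  refine ge_of_tendsto tendsto <| Filter.mem_of_superset (Ioo_mem_nhdsGT ENNReal.zero_lt_top)
    fun η hη ↦ ?_
  refine (of_majorant (hF.boundedPos_enorm_add hη.1.ne' hη.2.ne) fun z ↦ le_self_add).trans ?_
  gcongr
  exact mixedLp₃_add_const_le hF.measurable.enorm hq₁ hs₁ hp₁ η

end RealInterpolation

section DyadicEnergies

variable {X Y A B : Type*} [MeasurableSpace X] [MeasurableSpace Y] {μ : Measure X}
  {ν : Measure Y} {e : A → X → ℂ} {l : A → ℝ} {m : ℕ} {e' : B → Y → ℂ} {l' : B → ℝ}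
  {k : ℕ} {s p σ θ η : ℝ}

lemma DispersiveSystem.summable_exp_add (h : DispersiveSystem μ e l m)
    (h' : DispersiveSystem ν e' l' k) (n : ℕ) :
    Summable fun a : A × B ↦ Real.exp (-π * (l a.1 + l' a.2) / 4 ^ n) := by
  refine ((h.summable n 0).mul_of_nonneg (h'.summable n 0) (fun _ ↦ norm_nonneg _)
    fun _ ↦ norm_nonneg _).congr fun a ↦ ?_
  rw [norm_gaussianPhase, norm_gaussianPhase, ← Real.exp_add]
  ring_nf

variable [Countable A] [Countable B] [IsProbabilityMeasure μ] [IsProbabilityMeasure ν]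

lemma DispersiveSystem.exists_lowEnergy_le (h : DispersiveSystem μ e l m)
    (h' : DispersiveSystem ν e' l' k) (hs : 1 ≤ s) (hsp : s ≤ p) (hp : p ≤ 2)
    (hσ : σ = m * (s⁻¹ - 1 / 2) + k * (p⁻¹ - 1 / 2)) (h₀ : 0 < σ) (h₁ : σ < 1) :
    ∃ C : ℝ≥0∞, C ≠ ∞ ∧ ∀ (n : ℕ) (F : ℝ × X × Y → ℂ), BoundedMeasurable F →
      lowEnergy unitTime (μ.prod ν) (prodModes e e') (fun a ↦ l a.1 + l' a.2) n F ≤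
        C * (2 : ℝ≥0∞) ^ (n * σ) * mixedLp₃ (2 / (2 - σ)) s p unitTime μ ν F ^ (2 : ℝ) := by
  obtain ⟨A₀, hA₀, hform⟩ := h.exists_mixedFormBound h' hs hsp hp
  exact (h.prod h'.toUnimodularFamily).exists_lowEnergy_le (h.summable_exp_add h') h₀ h₁ hA₀
    (hσ ▸ hform)

lemma inv_dilate_sub_half (hs : s ≠ 0) (η : ℝ) :
    (s / (1 + η * (1 - s / 2)))⁻¹ - 1 / 2 = (1 + η) * (s⁻¹ - 1 / 2) := by
  rw [inv_div]
  field_simp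
  ring

lemma half_le_inv (hs : 0 < s) (hs₂ : s ≤ 2) : 0 ≤ s⁻¹ - 1 / 2 := by
  linarith [inv_anti₀ hs hs₂]

/- Dilating `(1 / s - 1 / 2, 1 / p - 1 / 2)` by the factor `1 + η` multiplies the decay rate by the
same factor. -/
lemma DispersiveSystem.exists_lowEnergy_le_dilate (h : DispersiveSystem μ e l m)
    (h' : DispersiveSystem ν e' l' k) (hs : 0 < s) (hsp : s ≤ p) (hp : p ≤ 2)
    (hσ : σ = m * (s⁻¹ - 1 / 2) + k * (p⁻¹ - 1 / 2)) (h₀ : 0 < σ) (hη : 0 < 1 + η)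
    (hησ : (1 + η) * σ < 1) (hηs : (1 + η) * (s⁻¹ - 1 / 2) ≤ 1 / 2) :
    ∃ C : ℝ≥0∞, C ≠ ∞ ∧ ∀ (n : ℕ) (F : ℝ × X × Y → ℂ), BoundedMeasurable F →
      (2 : ℝ≥0∞) ^ (-(n * σ)) *
          lowEnergy unitTime (μ.prod ν) (prodModes e e') (fun a ↦ l a.1 + l' a.2) n F ≤
        C * ((2 : ℝ≥0∞) ^ (n * (η * σ)) * mixedLp₃ (2 / (2 - (1 + η) * σ))
          (s / (1 + η * (1 - s / 2))) (p / (1 + η * (1 - p / 2))) unitTime μ ν F ^ (2 : ℝ)) := by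
  have hp₀ := hs.trans_le hsp
  have hs' := inv_dilate_sub_half hs.ne' η
  have hp' := inv_dilate_sub_half hp₀.ne' η
  have order : (1 + η) * (p⁻¹ - 1 / 2) ≤ (1 + η) * (s⁻¹ - 1 / 2) := by gcongr
  have p_nonneg := mul_nonneg hη.le (half_le_inv hp₀ hp)
  set s₁ := s / (1 + η * (1 - s / 2))
  set p₁ := p / (1 + η * (1 - p / 2))
  have hp₁ : 0 < p₁ := inv_pos.mp (by linarith)
  have hs₁ : 0 < s₁ := inv_pos.mp (by linarith)
  obtain ⟨C, hC, hbound⟩ := h.exists_lowEnergy_le h' (s := s₁) (p := p₁) (σ := (1 + η) * σ)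
    ((inv_le_one₀ hs₁).mp (by linarith)) ((inv_le_inv₀ hp₁ hs₁).mp (by linarith))
    ((inv_le_inv₀ two_pos hp₁).mp (by linarith)) (by rw [hs', hp', hσ]; ring) (by positivity) hησ
  refine ⟨C, hC, fun n F hF ↦ (mul_le_mul_right (hbound n F hF) _).trans_eq ?_⟩
  rw [← mul_assoc, mul_left_comm, ← ENNReal.rpow_add _ _ two_ne_zero ENNReal.ofNat_ne_top,
    mul_assoc]
  congr 3
  ring

lemma symmetricExponents_dilate (hs : 0 < s) (hs₂ : s ≤ 2) (hθ₀ : 0 ≤ θ) (hθ₁ : θ ≤ 1) :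
    SymmetricExponents s (1 + θ * (1 - s / 2)) where
  pos := hs
  left_pos := by nlinarith
  right_pos := by nlinarith
  left_le := (div_le_iff₀ (by nlinarith)).mpr (by nlinarith)
  right_le := (div_le_iff₀ (by nlinarith)).mpr (by nlinarith)

lemma symmetricExponents_time (hθ₀ : 0 ≤ θ) (h₀ : 0 < σ) (hθσ : (1 + θ) * σ ≤ 1) :
    SymmetricExponents (2 / (2 - σ)) (1 - θ * σ / (2 - σ)) := by
  have hσ : 0 < 2 - σ := by nlinarith
  have ratio_nonneg : 0 ≤ θ * σ / (2 - σ) := by positivity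
  have ratio_le : θ * σ / (2 - σ) ≤ 1 - 1 / (2 - σ) := by
    rw [one_sub_div hσ.ne']
    gcongr
    linarith
  have inv_pos := one_div_pos.mpr hσ
  have two_div : 2 / (2 - σ) = 2 * (1 / (2 - σ)) := div_eq_mul_one_div _ _
  exact ⟨by positivity, by linarith, by linarith, (div_le_iff₀ (by linarith)).mpr (by linarith),
    (div_le_iff₀ (by linarith)).mpr (by linarith)⟩

lemma exists_mem_Ioo_one_add_mul_lt {a : ℝ} (h₀ : 0 < σ) (h₁ : σ < 1) (ha : a < 1) :
    ∃ θ ∈ Set.Ioo (0 : ℝ) 1, (1 + θ) * σ < 1 ∧ (1 + θ) * a < 1 := by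
  have hc : max σ a < 1 := max_lt h₁ ha
  have hσc := le_max_left σ a
  have hac := le_max_right σ a
  refine ⟨1 - max σ a, ⟨by linarith, by linarith⟩, ?_, ?_⟩ <;> nlinarith

lemma UnimodularFamily.lowEnergy_add_le {Z C : Type*} [MeasurableSpace Z] {E : C → Z → ℂ}
    {L : C → ℝ} {κ : Measure ℝ} {ρ : Measure Z} [IsFiniteMeasure κ] [IsFiniteMeasure ρ]
    (hE : UnimodularFamily E) (n : ℕ) {F G : ℝ × Z → ℂ} (hF : BoundedMeasurable F)
    (hG : BoundedMeasurable G) :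
    lowEnergy κ ρ E L n (F + G) ≤ 2 * (lowEnergy κ ρ E L n F + lowEnergy κ ρ E L n G) := by
  simp only [lowEnergy]
  rw [← ENNReal.tsum_add, ← ENNReal.tsum_mul_left]
  refine ENNReal.tsum_le_tsum fun c ↦ ?_
  rw [← mul_add, mul_left_comm]
  refine mul_le_mul_right ?_ _
  rw [Pi.add_def, modeCoeff_add (unimodularFamily_spacetimeMode hE) hF hG]
  refine (pow_le_pow_left' (enorm_add_le _ _) 2).trans ?_
  have two_sub_one : (2 : ℝ) - 1 = 1 := by norm_num
  simpa [two_sub_one] using ENNReal.rpow_add_le_mul_rpow_add_rpow ‖_‖ₑ ‖_‖ₑ one_le_two (p := 2)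

lemma UnimodularFamily.tsum_lowEnergy_le {C : Type*} {E : C → X × Y → ℂ} {L : C → ℝ}
    (hE : UnimodularFamily E) (hs : 1 < s) (hsp : s ≤ p) (hp : p ≤ 2) (h₀ : 0 < σ) (hθ₀ : 0 < θ)
    (hθ₁ : θ ≤ 1) (hθσ : (1 + θ) * σ ≤ 1) {C₁ C₂ : ℝ≥0∞} (hC₁ : C₁ ≠ ∞) (hC₂ : C₂ ≠ ∞)
    (h₁ : ∀ (n : ℕ) (F : ℝ × X × Y → ℂ), BoundedMeasurable F →
      (2 : ℝ≥0∞) ^ (-(n * σ)) * lowEnergy unitTime (μ.prod ν) E L n F ≤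
        C₁ * ((2 : ℝ≥0∞) ^ (n * (θ * σ)) * mixedLp₃ (2 / (2 - (1 + θ) * σ))
          (s / (1 + θ * (1 - s / 2))) (p / (1 + θ * (1 - p / 2))) unitTime μ ν F ^ (2 : ℝ)))
    (h₂ : ∀ (n : ℕ) (F : ℝ × X × Y → ℂ), BoundedMeasurable F →
      (2 : ℝ≥0∞) ^ (-(n * σ)) * lowEnergy unitTime (μ.prod ν) E L n F ≤
        C₂ * ((2 : ℝ≥0∞) ^ (n * (-θ * σ)) * mixedLp₃ (2 / (2 - (1 + -θ) * σ))
          (s / (1 + -θ * (1 - s / 2))) (p / (1 + -θ * (1 - p / 2))) unitTime μ ν F ^ (2 : ℝ)))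
    {F : ℝ × X × Y → ℂ} (hF : BoundedMeasurable F) :
    ∑' n : ℕ, (2 : ℝ≥0∞) ^ (-(n * σ)) * lowEnergy unitTime (μ.prod ν) E L n F ≤
      4 * (1 - (2 ^ (θ * σ))⁻¹)⁻¹ * (C₁ + C₂) *
        mixedLp₃ (2 / (2 - σ)) s p unitTime μ ν F ^ (2 : ℝ) := by
  have hs₀ : 0 < s := one_pos.trans hs
  have two_sub_pos : 0 < 2 - σ := by nlinarith
  have hb : (1 : ℝ≥0∞) < 2 ^ (θ * σ) := ENNReal.one_lt_rpow ENNReal.one_lt_two (by positivity)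
  have b_pow (n : ℕ) : (2 : ℝ≥0∞) ^ (n * (θ * σ)) = (2 ^ (θ * σ)) ^ n := by
    rw [mul_comm, ENNReal.rpow_mul, ENNReal.rpow_natCast]
  have b_pow_inv (n : ℕ) : (2 : ℝ≥0∞) ^ (n * (-θ * σ)) = ((2 ^ (θ * σ)) ^ n)⁻¹ := by
    rw [← b_pow, ← ENNReal.rpow_neg, neg_mul, mul_neg]
  have time_left : 2 / (2 - (1 + θ) * σ) = 2 / (2 - σ) / (1 - θ * σ / (2 - σ)) := by
    rw [div_div, mul_one_sub, mul_div_cancel₀ _ two_sub_pos.ne']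
    ring_nf
  have time_right : 2 / (2 - (1 + -θ) * σ) = 2 / (2 - σ) / (2 - (1 - θ * σ / (2 - σ))) := by
    rw [div_div, show 2 - (1 - θ * σ / (2 - σ)) = 1 + θ * σ / (2 - σ) by ring, mul_one_add,
      mul_div_cancel₀ _ two_sub_pos.ne']
    ring_nf
  have two_sub (x : ℝ) : 1 + -θ * x = 2 - (1 + θ * x) := by ring
  refine tsum_le_mul_mixedLp₃_sq (T := ℝ)
    (Q := fun n F ↦ 2 ^ (-(n * σ)) * lowEnergy unitTime (μ.prod ν) E L n F)
    (fun n F G hF hG ↦ ?_) (symmetricExponents_time hθ₀.le h₀ hθσ)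
    (symmetricExponents_dilate hs₀ (hsp.trans hp) hθ₀.le hθ₁)
    (symmetricExponents_dilate (hs₀.trans_le hsp) hp hθ₀.le hθ₁)
    ((one_le_div two_sub_pos).mpr (by linarith)) hs.le (hs.le.trans hsp) hb (by finiteness) hC₁ hC₂
    (fun n F hF ↦ ?_) (fun n F hF ↦ ?_) hF
  · rw [← mul_add, mul_left_comm]
    exact mul_le_mul_right (hE.lowEnergy_add_le n hF hG) _
  · rw [← b_pow, ← time_left]
    exact h₁ n F hF
  · rw [← b_pow_inv, ← time_right, ← two_sub, ← two_sub]
    exact h₂ n F hF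

theorem DispersiveSystem.exists_tsum_lowEnergy_le (h : DispersiveSystem μ e l m)
    (h' : DispersiveSystem ν e' l' k) (hs : 1 < s) (hsp : s ≤ p) (hp : p ≤ 2)
    (hσ : σ = m * (s⁻¹ - 1 / 2) + k * (p⁻¹ - 1 / 2)) (h₀ : 0 < σ) (h₁ : σ < 1) :
    ∃ C : ℝ≥0∞, C ≠ ∞ ∧ ∀ F : ℝ × X × Y → ℂ, BoundedMeasurable F →
      ∑' n : ℕ, (2 : ℝ≥0∞) ^ (-(n * σ)) *
          lowEnergy unitTime (μ.prod ν) (prodModes e e') (fun a ↦ l a.1 + l' a.2) n F ≤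
        C * mixedLp₃ (2 / (2 - σ)) s p unitTime μ ν F ^ (2 : ℝ) := by
  have hs₀ : 0 < s := one_pos.trans hs
  have s_nonneg := half_le_inv hs₀ (hsp.trans hp)
  obtain ⟨θ, ⟨hθ₀, hθ₁⟩, hθσ, hθs⟩ := exists_mem_Ioo_one_add_mul_lt h₀ h₁
    (a := 2 * (s⁻¹ - 1 / 2)) (by linarith [inv_lt_one_of_one_lt₀ hs])
  obtain ⟨C₁, hC₁, bound₁⟩ := h.exists_lowEnergy_le_dilate h' hs₀ hsp hp hσ h₀ (η := θ)
    (by linarith) hθσ (by linarith)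
  obtain ⟨C₂, hC₂, bound₂⟩ := h.exists_lowEnergy_le_dilate h' hs₀ hsp hp hσ h₀ (η := -θ)
    (by linarith) (by nlinarith) (by nlinarith)
  have inv_ne_top : (1 - ((2 : ℝ≥0∞) ^ (θ * σ))⁻¹)⁻¹ ≠ ∞ :=
    ENNReal.inv_ne_top.mpr (tsub_pos_of_lt (ENNReal.inv_lt_one.mpr
      (ENNReal.one_lt_rpow ENNReal.one_lt_two (by positivity)))).ne'
  exact ⟨4 * (1 - (2 ^ (θ * σ))⁻¹)⁻¹ * (C₁ + C₂), by finiteness, fun F hF ↦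
    (h.prod h'.toUnimodularFamily).tsum_lowEnergy_le hs hsp hp h₀ hθ₀ hθ₁.le hθσ.le hC₁ hC₂
      bound₁ bound₂ hF⟩

/- The term of the scale `4 ^ n ≤ 1 + x < 4 ^ (n + 1)` alone is comparable to the left side. -/
lemma ofReal_one_add_rpow_le_tsum (h₀ : 0 ≤ σ) {x : ℝ} (hx : 0 ≤ x) :
    ENNReal.ofReal ((1 + x) ^ (-(σ / 2))) ≤ ENNReal.ofReal (Real.exp (4 * π)) *
      ∑' n : ℕ, (2 : ℝ≥0∞) ^ (-(n * σ)) * ENNReal.ofReal (Real.exp (-π * x / 4 ^ n)) := by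
  obtain ⟨n, hn, hn'⟩ := exists_nat_pow_near (by linarith : 1 ≤ 1 + x)
    (by norm_num : (1 : ℝ) < 4)
  refine le_trans ?_ (mul_le_mul_right (ENNReal.le_tsum n) _)
  have scale : (4 ^ n : ℝ) ^ (-(σ / 2)) = 2 ^ (-(n * σ)) := by
    rw [show (4 : ℝ) = 2 ^ (2 : ℝ) by norm_num, ← Real.rpow_natCast, ← Real.rpow_mul two_pos.le,
      ← Real.rpow_mul two_pos.le]
    ring_nf
  have x_div_le : x / 4 ^ n ≤ 4 := by
    rw [div_le_iff₀ (by positivity), ← pow_succ']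
    linarith
  have one_le_exp : 1 ≤ Real.exp (4 * π) * Real.exp (-π * x / 4 ^ n) := by
    rw [← Real.exp_add, Real.one_le_exp_iff, mul_div_assoc]
    nlinarith [Real.pi_pos]
  rw [show (2 : ℝ≥0∞) = ENNReal.ofReal 2 by simp, ENNReal.ofReal_rpow_of_pos two_pos,
    mul_left_comm, ← ENNReal.ofReal_mul (by positivity), ← ENNReal.ofReal_mul (by positivity),
    ← scale]
  refine ENNReal.ofReal_le_ofReal ?_
  refine (Real.rpow_le_rpow_of_nonpos (by positivity) hn (by linarith)).trans ?_
  exact le_mul_of_one_le_right (by positivity) one_le_exp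

theorem DispersiveSystem.exists_tsum_modeCoeff_le (h : DispersiveSystem μ e l m)
    (h' : DispersiveSystem ν e' l' k) (hs : 1 < s) (hsp : s ≤ p) (hp : p ≤ 2)
    (hσ : σ = m * (s⁻¹ - 1 / 2) + k * (p⁻¹ - 1 / 2)) (h₀ : 0 < σ) (h₁ : σ < 1) :
    ∃ C : ℝ≥0∞, C ≠ ∞ ∧ ∀ F : ℝ × X × Y → ℂ, BoundedMeasurable F →
      ∑' a : A × B, ENNReal.ofReal ((1 + (l a.1 + l' a.2)) ^ (-(σ / 2))) *
        ‖modeCoeff (unitTime.prod (μ.prod ν))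
          (spacetimeMode (prodModes e e') fun a ↦ l a.1 + l' a.2) F a‖ₑ ^ 2
        ≤ C * mixedLp₃ (2 / (2 - σ)) s p unitTime μ ν F ^ (2 : ℝ) := by
  obtain ⟨C, hC, hbound⟩ := h.exists_tsum_lowEnergy_le h' hs hsp hp hσ h₀ h₁
  refine ⟨ENNReal.ofReal (Real.exp (4 * π)) * C, by finiteness, fun F hF ↦ ?_⟩
  rw [mul_assoc]
  refine le_trans ?_ (mul_le_mul_right (hbound F hF) _)
  simp only [lowEnergy, ← ENNReal.tsum_mul_left]
  rw [ENNReal.tsum_comm]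
  refine ENNReal.tsum_le_tsum fun a ↦ ?_
  simp only [← mul_assoc, ENNReal.tsum_mul_right]
  refine mul_le_mul_left ?_ _
  simp only [mul_assoc, ENNReal.tsum_mul_left]
  exact ofReal_one_add_rpow_le_tsum h₀.le (add_nonneg (h.nonneg _) (h'.nonneg _))

end DyadicEnergies

section Duality

variable {T X Y Z : Type*} [MeasurableSpace T] [MeasurableSpace X] [MeasurableSpace Y]
  [MeasurableSpace Z] {κ : Measure T} {μ : Measure X} {ν : Measure Y} {q s p : ℝ}

lemma mixedLp₃_one_eq_lintegral [SFinite μ] [SFinite ν] {f : T × X × Y → ℝ≥0∞}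
    (hf : Measurable f) : mixedLp₃ 1 1 1 κ μ ν f = ∫⁻ ω, f ω ∂κ.prod (μ.prod ν) := by
  simp only [mixedLp₃, mixedLp, eLpNorm', enorm_eq_self, ENNReal.rpow_one, div_one]
  rw [lintegral_prod _ hf.aemeasurable]
  exact lintegral_congr fun t ↦
    (lintegral_prod _ (hf.comp measurable_prodMk_left).aemeasurable).symm

variable [IsProbabilityMeasure κ] [IsProbabilityMeasure μ] [IsProbabilityMeasure ν]

lemma lintegral_le_mixedLp₃ {f : T × X × Y → ℝ≥0∞} (hf : Measurable f) (hq : 1 ≤ q) (hs : 1 ≤ s)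
    (hp : 1 ≤ p) : ∫⁻ ω, f ω ∂κ.prod (μ.prod ν) ≤ mixedLp₃ q s p κ μ ν f := by
  rw [← mixedLp₃_one_eq_lintegral hf]
  calc mixedLp₃ 1 1 1 κ μ ν f
      ≤ mixedLp₃ 1 1 p κ μ ν f :=
        eLpNorm'_mono_enorm zero_le_one fun t ↦ eLpNorm'_mono_enorm zero_le_one fun x ↦
          eLpNorm'_le_eLpNorm'_of_exponent_le one_pos hp ν
            (hf.comp (measurable_prodMk_left.comp measurable_prodMk_left)).aestronglyMeasurable
    _ ≤ mixedLp₃ 1 s p κ μ ν f :=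
        eLpNorm'_mono_enorm zero_le_one fun t ↦ eLpNorm'_le_eLpNorm'_of_exponent_le one_pos hs μ
          (measurable_eLpNorm'_slice (hf.comp measurable_prodMk_left)).aestronglyMeasurable
    _ ≤ mixedLp₃ q s p κ μ ν f :=
        eLpNorm'_le_eLpNorm'_of_exponent_le one_pos hq κ
          (measurable_mixedLp_slice hf).aestronglyMeasurable

lemma BoundedMeasurable.exists_enorm_integral_eq {ρ : Measure Z} [IsFiniteMeasure ρ] {u : Z → ℂ}
    (hu : BoundedMeasurable u) {g : Z → ℝ≥0∞} (hg : BoundedPos g) :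
    ∃ F, BoundedMeasurable F ∧ (∀ z, ‖F z‖ₑ ≤ g z) ∧
      ∫⁻ z, ‖u z‖ₑ * g z ∂ρ = ‖∫ z, u z * conj (F z) ∂ρ‖ₑ := by
  set F : Z → ℂ := fun z ↦ u z / ‖u z‖ * (g z).toReal
  have hF (z : Z) : ‖F z‖ₑ ≤ g z := by
    rw [enorm_mul, ← ofReal_norm (((g z).toReal : ℝ) : ℂ), norm_real,
      Real.norm_of_nonneg ENNReal.toReal_nonneg, ENNReal.ofReal_toReal (hg.ne_top z)]
    refine mul_le_of_le_one_left' ?_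
    rw [← ofReal_norm, ENNReal.ofReal_le_one, norm_div, norm_real, norm_norm]
    exact div_self_le_one _
  have u_mul (z : Z) : u z * conj (F z) = (‖u z‖ * (g z).toReal : ℝ) := by
    simp only [F, map_mul, map_div₀, conj_ofReal]
    rw [← mul_assoc, mul_div_assoc', mul_conj, normSq_eq_norm_sq, ← ofReal_div, sq,
      mul_self_div_self, ← ofReal_mul]
  have measurable_u := hu.measurable
  have measurable_g := hg.measurable
  have hF_bdd : BoundedMeasurable F := .of_enorm_le (by fun_prop) hg hF
  have norm_u_mul (z : Z) : ‖u z * conj (F z)‖ = ‖u z‖ * (g z).toReal := by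
    rw [u_mul, Complex.norm_of_nonneg (by positivity)]
  refine ⟨F, hF_bdd, hF, ?_⟩
  calc ∫⁻ z, ‖u z‖ₑ * g z ∂ρ
      = ∫⁻ z, ‖u z * conj (F z)‖ₑ ∂ρ := by
        refine lintegral_congr fun z ↦ ?_
        rw [← ofReal_norm (u z * _), norm_u_mul, ENNReal.ofReal_mul (norm_nonneg _), ofReal_norm,
          ENNReal.ofReal_toReal (hg.ne_top z)]
    _ = ENNReal.ofReal (∫ z, ‖u z * conj (F z)‖ ∂ρ) :=
        (ofReal_integral_norm_eq_lintegral_enorm ((hu.mul hF_bdd.conjugate).integrable ρ)).symm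
    _ = ‖∫ z, u z * conj (F z) ∂ρ‖ₑ := by
        simp_rw [norm_u_mul, u_mul]
        rw [integral_complex_ofReal, ← ofReal_norm, Complex.norm_of_nonneg]
        exact integral_nonneg fun z ↦ by positivity

theorem mixedLp₃_le_of_forall_enorm_integral_le {u : T × X × Y → ℂ} (hu : BoundedMeasurable u)
    (hq : 1 < q) (hs : 1 < s) (hp : 1 < p) {B : ℝ≥0∞}
    (h : ∀ F, BoundedMeasurable F → ‖∫ ω, u ω * conj (F ω) ∂κ.prod (μ.prod ν)‖ₑ ≤
      B * mixedLp₃ (q / (q - 1)) (s / (s - 1)) (p / (p - 1)) κ μ ν F) :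
    mixedLp₃ q s p κ μ ν u ≤ B := by
  refine ENNReal.le_of_forall_pos_le_add fun η hη _ ↦ ?_
  have hq₀ : 0 < q := by linarith
  have hs₀ : 0 < s := by linarith
  have hp₀ : 0 < p := by linarith
  have hq' : 0 < q - 1 := by linarith
  have hs' : 0 < s - 1 := by linarith
  have hp' : 0 < p - 1 := by linarith
  have one_le_div_sub_one {x : ℝ} (hx : 0 < x - 1) : 1 ≤ x / (x - 1) :=
    (one_le_div hx).mpr (by linarith)
  set f : T × X × Y → ℝ≥0∞ := fun ω ↦ ‖u ω‖ₑ + η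
  have hf : BoundedPos f := hu.boundedPos_enorm_add (by simpa using hη.ne') ENNReal.coe_ne_top
  set g := mixedRescale₃ q s p κ μ ν 1 (q - 1) (s - 1) (p - 1) f
  have hg : BoundedPos g := hf.mixedRescale₃ hq₀ hs₀ hp₀ one_ne_zero ENNReal.one_ne_top hq'.le
    hs'.le hp'.le
  have norm_g : mixedLp₃ (q / (q - 1)) (s / (s - 1)) (p / (p - 1)) κ μ ν g = 1 :=
    mixedLp₃_mixedRescale₃ hf hq₀ hs₀ hp₀ hq' hs' hp'
  have norm_f : ∫⁻ ω, f ω * g ω ∂κ.prod (μ.prod ν) = mixedLp₃ q s p κ μ ν f := by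
    have fg_eq (ω) : f ω * g ω = mixedRescale₃ q s p κ μ ν (mixedLp₃ q s p κ μ ν f) q s p f ω := by
      conv_lhs => rw [← mixedRescale₃_eq_self (κ := κ) (μ := μ) (ν := ν) hf hq₀ hs₀ hp₀]
      rw [mixedRescale₃_mul zero_le_one hq'.le zero_le_one hs'.le zero_le_one hp'.le]
      simp only [mul_one, add_sub_cancel]
    have h := mixedLp₃_mixedRescale₃ (κ := κ) (μ := μ) (ν := ν) (a := mixedLp₃ q s p κ μ ν f)
      hf hq₀ hs₀ hp₀ hq₀ hs₀ hp₀
    rwa [div_self hq₀.ne', div_self hs₀.ne', div_self hp₀.ne', ← funext fg_eq,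
      mixedLp₃_one_eq_lintegral (hf.mul hg).measurable] at h
  obtain ⟨F, hF, hFg, integral_eq⟩ := hu.exists_enorm_integral_eq hg (ρ := κ.prod (μ.prod ν))
  calc mixedLp₃ q s p κ μ ν u
      ≤ ∫⁻ ω, f ω * g ω ∂κ.prod (μ.prod ν) := by
        rw [norm_f]
        exact mixedLp₃_mono hq₀.le hs₀.le hp₀.le fun ω ↦ le_self_add
    _ = ‖∫ ω, u ω * conj (F ω) ∂κ.prod (μ.prod ν)‖ₑ + η * ∫⁻ ω, g ω ∂κ.prod (μ.prod ν) := by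
        simp only [f, add_mul]
        rw [lintegral_add_right _ (hg.measurable.const_mul _),
          lintegral_const_mul _ hg.measurable, integral_eq]
    _ ≤ B * mixedLp₃ (q / (q - 1)) (s / (s - 1)) (p / (p - 1)) κ μ ν g +
          η * mixedLp₃ (q / (q - 1)) (s / (s - 1)) (p / (p - 1)) κ μ ν g := by
        gcongr
        · refine (h F hF).trans (mul_le_mul_right (mixedLp₃_mono ?_ ?_ ?_ hFg) _) <;> positivity
        · exact lintegral_le_mixedLp₃ hg.measurable (one_le_div_sub_one hq')
            (one_le_div_sub_one hs') (one_le_div_sub_one hp')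
    _ = B + η := by rw [norm_g, mul_one, mul_one]

end Duality

lemma tsum_mul_le_sqrt_mul_sqrt_weight {A : Type*} {w : A → ℝ} (hw : ∀ a, 0 < w a) (s : ℝ)
    (f g : A → ℝ≥0∞) :
    ∑' a, f a * g a ≤ (∑' a, ENNReal.ofReal (w a ^ s) * f a ^ 2) ^ (1 / 2 : ℝ) *
      (∑' a, ENNReal.ofReal (w a ^ (-s)) * g a ^ 2) ^ (1 / 2 : ℝ) := by
  have sqrt_sq (a : A) (s : ℝ) :
      ENNReal.ofReal (w a ^ (s / 2)) ^ 2 = ENNReal.ofReal (w a ^ s) := by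
    rw [← ENNReal.ofReal_pow (Real.rpow_nonneg (hw a).le _), ← Real.rpow_mul_natCast (hw a).le,
      Nat.cast_two, div_mul_cancel₀ _ two_ne_zero]
  calc ∑' a, f a * g a
      = ∑' a, ENNReal.ofReal (w a ^ (s / 2)) * f a *
          (ENNReal.ofReal (w a ^ (-s / 2)) * g a) := by
        refine tsum_congr fun a ↦ ?_
        rw [mul_mul_mul_comm, ← ENNReal.ofReal_mul (Real.rpow_nonneg (hw a).le _),
          ← Real.rpow_add (hw a), neg_div, add_neg_cancel, Real.rpow_zero, ENNReal.ofReal_one,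
          one_mul]
    _ ≤ _ := tsum_mul_le_sqrt_mul_sqrt _ _
    _ = _ := by simp only [mul_pow, sqrt_sq]

section ModeSum

variable {X A : Type*} [MeasurableSpace X] [Countable A] {μ : Measure X} [IsFiniteMeasure μ]
  {e : A → X → ℂ} {c : A → ℂ}

/-- The superposition `∑ c a • e a` of the modes `e a`. -/
def modeSum (e : A → X → ℂ) (c : A → ℂ) (x : X) : ℂ := ∑' a, c a * e a x

lemma UnimodularFamily.boundedMeasurable_modeSum (he : UnimodularFamily e)
    (hc : Summable fun a ↦ ‖c a‖) : BoundedMeasurable (modeSum e c) := by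
  refine ⟨Measurable.tsum fun a ↦ (he.measurable a).const_mul (c a), ∑' a, ‖c a‖, fun x ↦ ?_⟩
  have norm_term (a : A) : ‖c a * e a x‖ = ‖c a‖ := by rw [norm_mul, he.norm_eq_one, mul_one]
  exact (norm_tsum_le_tsum_norm (by simpa only [norm_term] using hc)).trans_eq
    (tsum_congr norm_term)

lemma UnimodularFamily.integral_modeSum_mul_conj (he : UnimodularFamily e)
    (hc : Summable fun a ↦ ‖c a‖) {F : X → ℂ} (hF : BoundedMeasurable F) :
    ∫ x, modeSum e c x * conj (F x) ∂μ = ∑' a, c a * conj (modeCoeff μ e F a) := by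
  have integrable_term (a : A) : Integrable (fun x ↦ c a * (e a x * conj (F x))) μ :=
    (((he.boundedMeasurable a).mul hF.conjugate).integrable μ).const_mul (c a)
  have integral_norm_term (a : A) :
      ∫ x, ‖c a * (e a x * conj (F x))‖ ∂μ = ‖c a‖ * ∫ x, ‖F x‖ ∂μ := by
    simp only [norm_mul, he.norm_eq_one, RCLike.norm_conj, one_mul, integral_const_mul]
  have integral_term (a : A) :
      ∫ x, c a * (e a x * conj (F x)) ∂μ = c a * conj (modeCoeff μ e F a) := by
    rw [integral_const_mul, modeCoeff, ← integral_conj]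
    simp only [map_mul, conj_conj, mul_comm]
  rw [← tsum_congr integral_term, integral_tsum_of_summable_integral_norm integrable_term
    (by simpa only [integral_norm_term] using hc.mul_right _)]
  simp only [modeSum, ← tsum_mul_right, mul_assoc]

lemma UnimodularFamily.eLpNorm'_modeSum_le {μ : Measure X} [IsProbabilityMeasure μ]
    (he : UnimodularFamily e) (ho : ModeOrthogonal μ e) (hc : Summable fun a ↦ ‖c a‖) :
    eLpNorm' (modeSum e c) 2 μ ≤ (∑' a, ‖c a‖ₑ ^ 2) ^ (1 / 2 : ℝ) := by
  have hu : BoundedMeasurable (modeSum e c) := he.boundedMeasurable_modeSum hc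
  set N := eLpNorm' (modeSum e c) 2 μ
  have sqrt_sq (a : ℝ≥0∞) : (a ^ 2) ^ (1 / 2 : ℝ) = a := by
    rw [← ENNReal.rpow_two, ← ENNReal.rpow_mul]
    norm_num
  have N_ne_top : N ≠ ∞ := by
    simpa [eLpNorm_eq_eLpNorm' two_ne_zero ENNReal.ofNat_ne_top] using (hu.memLp (μ := μ) 2).2.ne
  have sq_le : N * N ≤ (∑' a, ‖c a‖ₑ ^ 2) ^ (1 / 2 : ℝ) * N :=
    calc N * N = ‖∫ x, modeSum e c x * conj (modeSum e c x) ∂μ‖ₑ := by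
          rw [hu.enorm_integral_mul_conj_self, ← sq]
      _ = ‖∑' a, c a * conj (modeCoeff μ e (modeSum e c) a)‖ₑ := by
          rw [he.integral_modeSum_mul_conj hc hu]
      _ ≤ ∑' a, ‖c a‖ₑ * ‖modeCoeff μ e (modeSum e c) a‖ₑ := by
          refine enorm_tsum_le_tsum_enorm.trans_eq (tsum_congr fun a ↦ ?_)
          rw [enorm_mul, RCLike.enorm_conj]
      _ ≤ (∑' a, ‖c a‖ₑ ^ 2) ^ (1 / 2 : ℝ) * (N ^ 2) ^ (1 / 2 : ℝ) := by
          refine (tsum_mul_le_sqrt_mul_sqrt _ _).trans ?_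
          gcongr
          exact he.tsum_enorm_modeCoeff_sq_le ho hu
      _ = _ := by rw [sqrt_sq]
  rcases eq_or_ne N 0 with h0 | h0
  · exact h0 ▸ zero_le
  · exact (ENNReal.mul_le_mul_iff_left h0 N_ne_top).mp sq_le

end ModeSum

section Strichartz

variable {X Y A B : Type*} [MeasurableSpace X] [MeasurableSpace Y] [Countable A] [Countable B]
  {μ : Measure X} {ν : Measure Y} [IsProbabilityMeasure μ] [IsProbabilityMeasure ν]
  {e : A → X → ℂ} {l : A → ℝ} {e' : B → Y → ℂ} {l' : B → ℝ} {m k : ℕ} {r p σ : ℝ}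

/- The `TT*` argument: by duality the estimate is equivalent to the one for the space-time
coefficients of a test function. -/
theorem DispersiveSystem.exists_mixedLp₃_modeSum_le (h : DispersiveSystem μ e l m)
    (h' : DispersiveSystem ν e' l' k) (hp : 2 ≤ p) (hpr : p ≤ r)
    (hσ : σ = m * (1 / 2 - 1 / r) + k * (1 / 2 - 1 / p)) (h₀ : 0 < σ) (h₁ : σ < 1) :
    ∃ C : ℝ≥0∞, C ≠ ∞ ∧ ∀ c : A × B → ℂ, Summable (fun a ↦ ‖c a‖) →
      mixedLp₃ (2 / σ) r p unitTime μ ν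
        (modeSum (spacetimeMode (prodModes e e') fun a ↦ l a.1 + l' a.2) c) ≤
      C * (∑' a, ENNReal.ofReal ((1 + (l a.1 + l' a.2)) ^ (σ / 2)) * ‖c a‖ₑ ^ 2) ^
        (1 / 2 : ℝ) := by
  have hp₁ : 0 < p - 1 := by linarith
  have hr₁ : 0 < r - 1 := by linarith
  obtain ⟨C, hC, hcoeff⟩ := h.exists_tsum_modeCoeff_le h' (s := r / (r - 1)) (p := p / (p - 1))
    ((one_lt_div hr₁).mpr (by linarith))
    ((div_le_div_iff₀ hr₁ hp₁).mpr (by linarith))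
    ((div_le_iff₀ hp₁).mpr (by linarith))
    (by
      have : r ≠ 0 := by linarith
      have : p ≠ 0 := by linarith
      rw [hσ, inv_div, inv_div]
      field_simp
      ring) h₀ h₁
  refine ⟨C ^ (1 / 2 : ℝ), by finiteness, fun c hc ↦ ?_⟩
  set E := spacetimeMode (prodModes e e') fun a ↦ l a.1 + l' a.2
  have hE : UnimodularFamily E :=
    unimodularFamily_spacetimeMode (h.toUnimodularFamily.prod h'.toUnimodularFamily)
  have dual_exponent : 2 / σ / (2 / σ - 1) = 2 / (2 - σ) := by
    have : 2 - σ ≠ 0 := by linarith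
    field_simp
  refine mixedLp₃_le_of_forall_enorm_integral_le (hE.boundedMeasurable_modeSum hc)
    ((one_lt_div h₀).mpr (by linarith)) (by linarith) (by linarith) fun F hF ↦ ?_
  have weight_pos (a : A × B) : 0 < 1 + (l a.1 + l' a.2) := by
    linarith [h.nonneg a.1, h'.nonneg a.2]
  rw [dual_exponent, hE.integral_modeSum_mul_conj hc hF]
  calc ‖∑' a, c a * conj (modeCoeff (unitTime.prod (μ.prod ν)) E F a)‖ₑ
      ≤ ∑' a, ‖c a‖ₑ * ‖modeCoeff (unitTime.prod (μ.prod ν)) E F a‖ₑ := by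
        refine enorm_tsum_le_tsum_enorm.trans_eq (tsum_congr fun a ↦ ?_)
        rw [enorm_mul, RCLike.enorm_conj]
    _ ≤ (∑' a, ENNReal.ofReal ((1 + (l a.1 + l' a.2)) ^ (σ / 2)) * ‖c a‖ₑ ^ 2) ^ (1 / 2 : ℝ) *
          (C * mixedLp₃ (2 / (2 - σ)) (r / (r - 1)) (p / (p - 1)) unitTime μ ν F ^ (2 : ℝ)) ^
            (1 / 2 : ℝ) := by
        refine (tsum_mul_le_sqrt_mul_sqrt_weight weight_pos (σ / 2) _ _).trans ?_
        gcongr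
        exact hcoeff F hF
    _ = _ := by
        rw [ENNReal.mul_rpow_of_nonneg _ _ (by norm_num), ← ENNReal.rpow_mul]
        norm_num
        ring

end Strichartz

section Torus

variable {X X' Y A A' B : Type*} [MeasurableSpace X] [MeasurableSpace X'] [MeasurableSpace Y]
  {μ : Measure X} {μ' : Measure X'} {ν : Measure Y} {e : A → X → ℂ} {l : A → ℝ} {e' : B → Y → ℂ}
  {l' : B → ℝ} {m k : ℕ}

lemma DispersiveSystem.prod [SFinite μ] [SFinite ν] (h : DispersiveSystem μ e l m)
    (h' : DispersiveSystem ν e' l' k) :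
    DispersiveSystem (μ.prod ν) (prodModes e e') (fun a ↦ l a.1 + l' a.2) (m + k) where
  toUnimodularFamily := h.toUnimodularFamily.prod h'.toUnimodularFamily
  orthogonal := h.orthogonal.prod h'.orthogonal
  nonneg a := add_nonneg (h.nonneg _) (h'.nonneg _)
  summable n τ := by
    simpa only [gaussianPhase_add, norm_mul] using (h.summable n τ).mul_of_nonneg
      (h'.summable n τ) (fun _ ↦ norm_nonneg _) fun _ ↦ norm_nonneg _
  exists_dispersive_bound := by
    obtain ⟨C, hC, hbound⟩ := h.exists_dispersive_bound
    obtain ⟨C', hC', hbound'⟩ := h'.exists_dispersive_bound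
    refine ⟨C * C', by positivity, fun n τ hτ hτn z z' ↦ ?_⟩
    simp only [gaussianPhase_add]
    rw [h.toUnimodularFamily.modeKernel_prod h'.toUnimodularFamily (h.summable n τ)
      (h'.summable n τ), norm_mul]
    calc _ ≤ C * |τ| ^ (-(m / 2) : ℝ) * (C' * |τ| ^ (-(k / 2) : ℝ)) :=
          mul_le_mul (hbound n τ hτ hτn _ _) (hbound' n τ hτ hτn _ _) (norm_nonneg _)
            (by positivity)
      _ = C * C' * |τ| ^ (-((m + k : ℕ) / 2) : ℝ) := by
          rw [mul_mul_mul_comm, ← Real.rpow_add hτ]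
          push_cast
          ring_nf

lemma DispersiveSystem.comp_measurePreserving (h : DispersiveSystem μ e l m) (φ : A' ≃ A)
    {ψ : X' ≃ᵐ X} (hψ : MeasurePreserving ψ μ' μ) :
    DispersiveSystem μ' (fun a x ↦ e (φ a) (ψ x)) (fun a ↦ l (φ a)) m where
  measurable a := (h.measurable _).comp ψ.measurable
  norm_eq_one a x := h.norm_eq_one _ _
  orthogonal a b hab :=
    (hψ.integral_comp' fun x ↦ e (φ a) x * conj (e (φ b) x)).trans
      (h.orthogonal (φ.injective.ne hab))
  nonneg a := h.nonneg _
  summable n τ := φ.summable_iff.mpr (h.summable n τ)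
  exists_dispersive_bound := by
    obtain ⟨C, hC, hbound⟩ := h.exists_dispersive_bound
    refine ⟨C, hC, fun n τ hτ hτn x x' ↦ ?_⟩
    rw [modeKernel, φ.tsum_eq fun a ↦ gaussianPhase n τ (l a) * (e a (ψ x) * conj (e a (ψ x')))]
    exact hbound n τ hτ hτn _ _

lemma dispersiveSystem_of_unique [Unique A] (μ : Measure X) :
    DispersiveSystem μ (fun (_ : A) _ ↦ 1) (fun _ ↦ 0) 0 where
  measurable _ := measurable_const
  norm_eq_one _ _ := norm_one
  orthogonal a b hab := absurd (Subsingleton.elim a b) hab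
  nonneg _ := le_rfl
  summable _ _ := (hasSum_fintype _).summable
  exists_dispersive_bound := ⟨1, one_pos, fun n τ _ _ x x' ↦ by
    simp [modeKernel, gaussianPhase, tsum_fintype]⟩

lemma fourier_sub {k : ℤ} {x x' : AddCircle (1 : ℝ)} :
    fourier k (x - x') = fourier k x * conj (fourier k x') := by
  rw [← fourier_neg]
  simp only [fourier_apply, sub_eq_add_neg, zsmul_add, AddCircle.toCircle_add, Circle.coe_mul,
    zsmul_neg, neg_zsmul]

lemma dispersiveSystem_fourier :
    DispersiveSystem (volume : Measure (AddCircle (1 : ℝ))) (fun (k : ℤ) x ↦ fourier k x)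
      (fun k ↦ (k : ℝ) ^ 2) 1 where
  measurable k := (map_continuous (fourier k)).measurable
  norm_eq_one k x := by rw [fourier_apply, Circle.norm_coe]
  orthogonal a b hab := by
    simp only [← fourier_neg, ← fourier_add]
    exact integral_eq_zero_of_add_right_eq_neg
      (fourier_add_half_inv_index (by rwa [← sub_eq_add_neg, sub_ne_zero]) one_pos)
  nonneg k := sq_nonneg _
  summable n τ := summable_gaussianPhase_sq n τ
  exists_dispersive_bound := by
    obtain ⟨C, hC, hbound⟩ := exists_norm_tsum_gaussianPhase_mul_fourier_le
    refine ⟨C, hC, fun n τ hτ hτn x x' ↦ ?_⟩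
    simpa only [modeKernel, fourier_sub, Nat.cast_one] using hbound n τ hτ hτn (x - x')

instance : IsProbabilityMeasure (volume : Measure (AddCircle (1 : ℝ))) :=
  ⟨by simp [AddCircle.measure_univ]⟩

theorem dispersiveSystem_eChar (m : ℕ) :
    DispersiveSystem (volume : Measure (Torus m)) eChar (fun ξ ↦ ∑ i, (ξ i : ℝ) ^ 2) m := by
  induction m with
  | zero =>
    convert dispersiveSystem_of_unique (A := Fin 0 → ℤ) (volume : Measure (Torus 0)) using 1
    · ext ξ z
      simp [eChar]
    · simp
  | succ m ih =>
    have eChar_eq : eChar = fun (ξ : Fin (m + 1) → ℤ) (z : Torus (m + 1)) ↦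
        fourier (ξ 0) (z 0) * eChar (Fin.tail ξ) (Fin.tail z) :=
      funext₂ fun ξ z ↦ Fin.prod_univ_succ fun i ↦ fourier (ξ i) (z i)
    have energy_eq : (fun ξ : Fin (m + 1) → ℤ ↦ ∑ i, (ξ i : ℝ) ^ 2) =
        fun ξ ↦ (ξ 0 : ℝ) ^ 2 + ∑ i, (Fin.tail ξ i : ℝ) ^ 2 :=
      funext fun ξ ↦ Fin.sum_univ_succ fun i ↦ (ξ i : ℝ) ^ 2
    have h := dispersiveSystem_fourier.prod ih
    rw [Nat.add_comm] at h
    rw [eChar_eq, energy_eq]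
    exact h.comp_measurePreserving (Fin.insertNthEquiv (fun _ ↦ ℤ) 0).symm
      (volume_preserving_piFinSuccAbove (fun _ : Fin (m + 1) ↦ AddCircle (1 : ℝ)) 0)

end Torus

section TorusEvolution

variable {m k : ℕ} {q r p : ℝ≥0∞}

lemma eNorm_eq_eLpNorm {α : Type*} [MeasurableSpace α] (hp : p ≠ 0) (μ : Measure α)
    (g : α → ℝ≥0∞) : eNorm p μ g = eLpNorm g p μ := by
  rw [eNorm]
  split_ifs with h
  · simp [h, eLpNormEssSup]
  · simp [eLpNorm_eq_eLpNorm' hp h, eLpNorm']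

lemma eNorm_eq_eLpNorm' {α : Type*} [MeasurableSpace α] (hp : p ≠ ∞) (μ : Measure α)
    (g : α → ℝ≥0∞) : eNorm p μ g = eLpNorm' g p.toReal μ := by
  simp [eNorm, hp, eLpNorm']

lemma eNorm_le_of_forall_le {α : Type*} [MeasurableSpace α] {μ : Measure α}
    [IsProbabilityMeasure μ] (hq : q ≠ 0) {g : α → ℝ≥0∞} {a : ℝ≥0∞} (h : ∀ x, g x ≤ a) :
    eNorm q μ g ≤ a := by
  rw [eNorm_eq_eLpNorm hq]
  refine (eLpNorm_mono_enorm (g := fun _ ↦ a) h).trans_eq ?_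
  rw [eLpNorm_const a hq (IsProbabilityMeasure.ne_zero μ)]
  simp

lemma mixedNorm_zero (hr : r ≠ 0) (hp : p ≠ 0) :
    mixedNorm r p (0 : Torus m × Torus k → ℂ) = 0 :=
  nonpos_iff_eq_zero.mp <| eNorm_le_of_forall_le hr fun x ↦ eNorm_le_of_forall_le hp fun y ↦ by simp

lemma eLpNorm'_torus_eq {ε : Type*} [ENorm ε] {s : ℝ} (hs : 0 < s)
    (h : m * (1 / 2 - 1 / s) = 0) (g : Torus m → ε) :
    eLpNorm' g s volume = eLpNorm' g 2 volume := by
  rcases mul_eq_zero.mp h with hm | hs₂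
  · obtain rfl : m = 0 := by exact_mod_cast hm
    obtain ⟨a, rfl⟩ : ∃ a, g = fun _ ↦ a := ⟨g default, funext fun x ↦ by rw [Subsingleton.elim x]⟩
    rw [eLpNorm'_const_of_isProbabilityMeasure _ hs,
      eLpNorm'_const_of_isProbabilityMeasure _ two_pos]
  · rw [one_div, one_div, sub_eq_zero, inv_inj] at hs₂
    rw [hs₂]

lemma mixedNorm_eq_mixedLp (hr : r ≠ ∞) (hp : p ≠ ∞) (u : Torus m × Torus k → ℂ) :
    mixedNorm r p u = mixedLp r.toReal p.toReal volume volume u := by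
  simp only [mixedNorm, eNorm_eq_eLpNorm' hr, eNorm_eq_eLpNorm' hp]
  rfl

lemma eNorm_addCircle (hq : q ≠ ∞) (g : AddCircle (1 : ℝ) → ℝ≥0∞) :
    eNorm q volume g = eLpNorm' (fun t : ℝ ↦ g t) q.toReal unitTime := by
  rw [eNorm_eq_eLpNorm' hq, eLpNorm', eLpNorm',
    ← AddCircle.lintegral_preimage 1 0 fun t ↦ ‖g t‖ₑ ^ q.toReal, zero_add]

lemma evol_coe (t : ℝ) (f : Torus m × Torus k → ℂ) (z : Torus m × Torus k) :
    evol t f z = modeSum (spacetimeMode (prodModes eChar eChar) fun ξ ↦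
      ∑ i, (ξ.1 i : ℝ) ^ 2 + ∑ i, (ξ.2 i : ℝ) ^ 2) (fcoef f) (t, z) := by
  refine tsum_congr fun ξ ↦ ?_
  rw [spacetimeMode, fourier_coe_apply, mul_assoc]
  push_cast
  rw [div_one]

lemma unimodularFamily_prodModes_eChar :
    UnimodularFamily (prodModes (eChar (m := m)) (eChar (m := k))) :=
  (dispersiveSystem_eChar m).toUnimodularFamily.prod (dispersiveSystem_eChar k).toUnimodularFamily

/- The defining series of `evol` then diverges, and `tsum` takes the value `0`. -/
lemma evol_eq_zero {f : Torus m × Torus k → ℂ} (hf : ¬ Summable fun ξ ↦ ‖fcoef f ξ‖)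
    (t : AddCircle (1 : ℝ)) : evol t f = 0 := by
  refine funext fun z ↦ tsum_eq_zero_of_not_summable fun h ↦ hf ?_
  refine h.norm.congr fun ξ ↦ ?_
  have hchar := unimodularFamily_prodModes_eChar.norm_eq_one ξ z
  rw [prodModes] at hchar
  rw [norm_mul, norm_mul, hchar, fourier_apply, Circle.norm_coe, mul_one, mul_one]

lemma sobolevNorm_mono {s s' : ℝ} (h : s ≤ s') (f : Torus m × Torus k → ℂ) :
    sobolevNorm s f ≤ sobolevNorm s' f := by
  unfold sobolevNorm
  gcongr with ξ
  exact le_add_of_nonneg_right (by positivity)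

lemma sobolevNorm_eq (s : ℝ) (f : Torus m × Torus k → ℂ) :
    sobolevNorm s f = (∑' ξ, ENNReal.ofReal
      ((1 + ((∑ i, (ξ.1 i : ℝ) ^ 2) + ∑ i, (ξ.2 i : ℝ) ^ 2)) ^ s) * ‖fcoef f ξ‖ₑ ^ 2) ^
        (1 / 2 : ℝ) := by
  rw [sobolevNorm]
  congr! 3 with ξ
  rw [ENNReal.ofReal_mul (by positivity), ENNReal.ofReal_pow (norm_nonneg _), ofReal_norm]

theorem exists_eNorm_evol_le_of_pos (hp : 2 ≤ p) (hpr : p ≤ r) (hr : r ≠ ∞) {σ : ℝ}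
    (hσ : σ = m * (1 / 2 - 1 / r.toReal) + k * (1 / 2 - 1 / p.toReal)) (h₀ : 0 < σ) (h₁ : σ < 1)
    (hq : 0 < q.toReal) (hqσ : q.toReal ≤ 2 / σ) :
    ∃ C : ℝ≥0∞, C ≠ ∞ ∧ ∀ f : Torus m × Torus k → ℂ,
      eNorm q volume (fun t : AddCircle (1 : ℝ) ↦ mixedNorm r p (evol t f)) ≤
        C * sobolevNorm (σ / 2) f := by
  have hp_top : p ≠ ∞ := ne_top_of_le_ne_top hr hpr
  have hp₀ : p ≠ 0 := (two_pos.trans_le hp).ne'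
  have hr₀ : r ≠ 0 := (two_pos.trans_le (hp.trans hpr)).ne'
  obtain ⟨C, hC, hbound⟩ := (dispersiveSystem_eChar m).exists_mixedLp₃_modeSum_le
    (dispersiveSystem_eChar k) (p := p.toReal) (r := r.toReal)
    (by simpa using ENNReal.toReal_mono hp_top hp) (ENNReal.toReal_mono hr hpr) hσ h₀ h₁
  refine ⟨C, hC, fun f ↦ ?_⟩
  by_cases hf : Summable fun ξ ↦ ‖fcoef f ξ‖
  swap
  · refine (eNorm_le_of_forall_le (ENNReal.toReal_pos_iff.mp hq).1.ne' fun t ↦ ?_).trans zero_le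
    rw [evol_eq_zero hf, mixedNorm_zero hr₀ hp₀]
  rw [eNorm_addCircle (ENNReal.toReal_pos_iff.mp hq).2.ne]
  simp only [mixedNorm_eq_mixedLp hr hp_top, funext (evol_coe _ f)]
  refine (eLpNorm'_le_eLpNorm'_of_exponent_le hq hqσ _ ?_).trans ((hbound _ hf).trans_eq ?_)
  · exact (measurable_mixedLp_slice
      ((unimodularFamily_spacetimeMode unimodularFamily_prodModes_eChar).boundedMeasurable_modeSum
        hf).measurable.enorm).aestronglyMeasurable
  · rw [sobolevNorm_eq]

theorem mixedNorm_evol_le_of_eq_zero (hp : 2 ≤ p) (hpr : p ≤ r) (hr : r ≠ ∞)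
    (hr₂ : m * (1 / 2 - 1 / r.toReal) = 0) (hp₂ : k * (1 / 2 - 1 / p.toReal) = 0)
    (f : Torus m × Torus k → ℂ) (t : AddCircle (1 : ℝ)) :
    mixedNorm r p (evol t f) ≤ sobolevNorm 0 f := by
  have hp_top : p ≠ ∞ := ne_top_of_le_ne_top hr hpr
  have hp₀ : p ≠ 0 := (two_pos.trans_le hp).ne'
  have hr₀ : r ≠ 0 := (two_pos.trans_le (hp.trans hpr)).ne'
  by_cases hf : Summable fun ξ ↦ ‖fcoef f ξ‖
  swap
  · rw [evol_eq_zero hf, mixedNorm_zero hr₀ hp₀]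
    exact zero_le
  set c := fun ξ : (Fin m → ℤ) × (Fin k → ℤ) ↦
    fcoef f ξ * fourier ((∑ i, (ξ.1 i) ^ 2) + ∑ i, (ξ.2 i) ^ 2) t
  have norm_c (ξ) : ‖c ξ‖ = ‖fcoef f ξ‖ := by
    rw [norm_mul, fourier_apply, Circle.norm_coe, mul_one]
  have hc : Summable fun ξ ↦ ‖c ξ‖ := by simpa only [norm_c] using hf
  have sum_eq : evol t f = modeSum (prodModes eChar eChar) c := rfl
  calc mixedNorm r p (evol t f) = mixedLp 2 2 volume volume (evol t f) := by
        rw [mixedNorm_eq_mixedLp hr hp_top, mixedLp, mixedLp,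
          eLpNorm'_torus_eq (ENNReal.toReal_pos hr₀ hr) hr₂]
        simp only [eLpNorm'_torus_eq (ENNReal.toReal_pos hp₀ hp_top) hp₂]
    _ = eLpNorm' (modeSum (prodModes eChar eChar) c) 2 (volume.prod volume) := by
        rw [sum_eq, mixedLp_self
          (unimodularFamily_prodModes_eChar.boundedMeasurable_modeSum hc).measurable two_pos]
    _ ≤ (∑' ξ, ‖c ξ‖ₑ ^ 2) ^ (1 / 2 : ℝ) := unimodularFamily_prodModes_eChar.eLpNorm'_modeSum_le
        ((dispersiveSystem_eChar m).orthogonal.prod (dispersiveSystem_eChar k).orthogonal) hc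
    _ = sobolevNorm 0 f := by
        simp only [sobolevNorm_eq, Real.rpow_zero, ENNReal.ofReal_one, one_mul,
          ← ofReal_norm, norm_c]

end TorusEvolution

theorem refined_strichartz_single_general (m k : ℕ) (q r rt : ℝ≥0∞) (hrt2 : 2 ≤ rt) (hrtr : rt ≤ r)
    (hr : r < ∞) (hq : 2 < q)
    (hadm : (m : ℝ) * (1 / 2 - (1 / r).toReal) + (k : ℝ) * (1 / 2 - (1 / rt).toReal) ≤
      (2 / q).toReal) :
    ∃ C : ℝ, 0 < C ∧ ∀ f : Torus m × Torus k → ℂ,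
      eNorm q (volume : Measure (AddCircle (1 : ℝ))) (fun t ↦ mixedNorm r rt (evol t f)) ≤
        ENNReal.ofReal C * sobolevNorm (1 / q).toReal f := by
  have half_sub_nonneg {s : ℝ≥0∞} (hs : 2 ≤ s) : 0 ≤ 1 / 2 - (1 / s).toReal := by
    rw [sub_nonneg]
    simpa using ENNReal.toReal_mono (by simp) (ENNReal.inv_le_inv.mpr hs)
  have hx : 0 ≤ (m : ℝ) * (1 / 2 - (1 / r).toReal) :=
    mul_nonneg m.cast_nonneg (half_sub_nonneg (hrt2.trans hrtr))
  have hy : 0 ≤ (k : ℝ) * (1 / 2 - (1 / rt).toReal) :=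
    mul_nonneg k.cast_nonneg (half_sub_nonneg hrt2)
  simp only [ENNReal.toReal_div, ENNReal.toReal_one, ENNReal.toReal_ofNat] at hx hy hadm ⊢
  rcases (add_nonneg hx hy).eq_or_lt' with h₀ | h₀
  · refine ⟨1, one_pos, fun f ↦ ?_⟩
    rw [ENNReal.ofReal_one, one_mul]
    exact eNorm_le_of_forall_le (two_pos.trans hq).ne' fun t ↦
      (mixedNorm_evol_le_of_eq_zero hrt2 hrtr hr.ne (by linarith) (by linarith) f t).trans
        (sobolevNorm_mono (by positivity) f)
  · have hq_pos : 0 < q.toReal := by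
      by_contra! h
      linarith [div_nonpos_of_nonneg_of_nonpos zero_le_two h]
    have hq₂ : 2 < q.toReal := by
      simpa using ENNReal.toReal_strict_mono (ENNReal.toReal_pos_iff.mp hq_pos).2.ne hq
    obtain ⟨C, hC, hbound⟩ := exists_eNorm_evol_le_of_pos hrt2 hrtr hr.ne rfl h₀
      (hadm.trans_lt ((div_lt_one hq_pos).mpr hq₂)) hq_pos
      ((le_div_comm₀ h₀ hq_pos).mp hadm)
    refine ⟨C.toReal + 1, by positivity, fun f ↦ (hbound f).trans ?_⟩
    gcongr
    · exact ENNReal.le_ofReal_iff_toReal_le hC (by positivity) |>.mpr (by linarith)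
    · refine sobolevNorm_mono ?_ f
      calc _ ≤ 2 / q.toReal / 2 := by gcongr
        _ = 1 / q.toReal := by ring

/-- Refined Strichartz estimate with partial regularity on the torus:
for `d ≥ 2`, `1 ≤ k ≤ d`, `2 ≤ r̃ ≤ r < ∞`, `2 < q ≤ ∞` with
`2/q ≥ (d-k)(1/2 - 1/r) + k(1/2 - 1/r̃)`, one has
`‖e^{-itΔ} f‖_{L^q_t(𝕋; L^r_x L^r̃_y)} ≤ C ‖f‖_{H^{1/q}(𝕋^d)}`. -/
theorem refined_strichartz_single (d k : ℕ) (hd : 2 ≤ d) (hk1 : 1 ≤ k) (hkd : k ≤ d)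
    (q r rt : ℝ≥0∞) (hrt2 : 2 ≤ rt) (hrtr : rt ≤ r) (hr : r < ∞) (hq : 2 < q)
    (hadm : ((d : ℝ) - k) * (1 / 2 - (1 / r).toReal) +
        (k : ℝ) * (1 / 2 - (1 / rt).toReal) ≤ (2 / q).toReal) :
    ∃ C : ℝ, 0 < C ∧ ∀ f : Torus (d - k) × Torus k → ℂ,
      eNorm q (volume : Measure (AddCircle (1 : ℝ)))
          (fun t => mixedNorm r rt (evol t f)) ≤
        ENNReal.ofReal C * sobolevNorm (1 / q).toReal f := by
  refine refined_strichartz_single_general (d - k) k q r rt hrt2 hrtr hr hq ?_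
  rwa [Nat.cast_sub hkd]

end
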